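/- Let Δ be a normal 3-pseudomanifold and let t be a vertex of Δ with g₂(lk(t,Δ)) ≥ g₂(lk(v,Δ)) for every other vertex v. Suppose g₂(Δ) ≤ g₂(lk(t,Δ)) + 9. Let σ be a missing tetrahedron of Δ such that for every vertex x of σ the missing triangle formed by the other three vertices of σ separates lk(x,Δ). Then Δ was formed using a connected sum (and not a handle addition). -/

import Mathlib

/-- An abstract simplicial complex on vertex set `ℕ`: a finite, downward closed
collection of nonempty finite sets of vertices. -/
structure SComplex where
  faces : Finset (Finset ℕ)
  not_empty_mem : ∅ ∉ faces
  down_closed : ∀ s ∈ faces, ∀ t ⊆ s, t ≠ ∅ → t ∈ faces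

namespace SComplex

/-- The set of vertices of the complex. -/
def vertexSet (K : SComplex) : Finset ℕ := K.faces.sup id

/-- `fnum K i` is the number of `i`-dimensional faces of `K`. -/
def fnum (K : SComplex) (i : ℕ) : ℕ := (K.faces.filter fun s => s.card = i + 1).card

/-- `g₂` for a 3-dimensional complex: `f₁ - 4 f₀ + 10`. -/
def g2 (K : SComplex) : ℤ := (K.fnum 1 : ℤ) - 4 * (K.fnum 0 : ℤ) + 10

/-- `g₂` for a 2-dimensional complex: `f₁ - 3 f₀ + 6`. -/
def g2surf (K : SComplex) : ℤ := (K.fnum 1 : ℤ) - 3 * (K.fnum 0 : ℤ) + 6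

/-- Euler characteristic of a (2-dimensional) complex. -/
def euler (K : SComplex) : ℤ := (K.fnum 0 : ℤ) - (K.fnum 1 : ℤ) + (K.fnum 2 : ℤ)

/-- The link of a face `σ`. -/
def lk (K : SComplex) (σ : Finset ℕ) : SComplex where
  faces := K.faces.filter fun γ => γ ∩ σ = ∅ ∧ γ ∪ σ ∈ K.faces
  not_empty_mem := fun h => K.not_empty_mem (Finset.mem_filter.mp h).1
  down_closed := by
    intro s hs t hts ht
    rw [Finset.mem_filter] at hs ⊢
    refine ⟨K.down_closed s hs.1 t hts ht, ?_, ?_⟩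
    · have h1 : t ∩ σ ⊆ s ∩ σ := Finset.inter_subset_inter hts (Finset.Subset.refl σ)
      rw [hs.2.1] at h1
      exact Finset.subset_empty.mp h1
    · refine K.down_closed (s ∪ σ) hs.2.2 (t ∪ σ)
        (Finset.union_subset_union hts (Finset.Subset.refl σ)) ?_
      intro hc
      exact ht (Finset.union_eq_empty.mp hc).1

/-- The (closed) star of a face `σ`. -/
def st (K : SComplex) (σ : Finset ℕ) : SComplex where
  faces := K.faces.filter fun α => α ∪ σ ∈ K.faces
  not_empty_mem := fun h => K.not_empty_mem (Finset.mem_filter.mp h).1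
  down_closed := by
    intro s hs t hts ht
    rw [Finset.mem_filter] at hs ⊢
    refine ⟨K.down_closed s hs.1 t hts ht, ?_⟩
    refine K.down_closed (s ∪ σ) hs.2 (t ∪ σ)
      (Finset.union_subset_union hts (Finset.Subset.refl σ)) ?_
    intro hc
    exact ht (Finset.union_eq_empty.mp hc).1

/-- A facet is a maximal face. -/
def IsFacet (K : SComplex) (s : Finset ℕ) : Prop :=
  s ∈ K.faces ∧ ∀ t ∈ K.faces, s ⊆ t → s = t

/-- A pure `d`-dimensional complex: all facets have `d+1` vertices. -/
def IsPure (K : SComplex) (d : ℕ) : Prop :=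
  K.faces.Nonempty ∧ ∀ s, K.IsFacet s → s.card = d + 1

/-- Two facets are adjacent if they share a codimension-one face. -/
def FacetAdj (K : SComplex) (s t : Finset ℕ) : Prop :=
  K.IsFacet s ∧ K.IsFacet t ∧ (s ∩ t).card + 1 = s.card

/-- Strong connectedness: any two facets are joined by a chain of facets, consecutive
ones sharing a codimension-one face. -/
def StronglyConnected (K : SComplex) : Prop :=
  ∀ s t, K.IsFacet s → K.IsFacet t → Relation.ReflTransGen K.FacetAdj s t

/-- Two vertices are adjacent if they span an edge. -/
def VertAdj (K : SComplex) (u v : ℕ) : Prop := ({u, v} : Finset ℕ) ∈ K.faces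

/-- Connectedness of a complex (via its 1-skeleton). -/
def Conn (K : SComplex) : Prop :=
  K.faces.Nonempty ∧
    ∀ u v, {u} ∈ K.faces → {v} ∈ K.faces → Relation.ReflTransGen K.VertAdj u v

/-- A normal `d`-pseudomanifold: pure, strongly connected, every `(d-1)`-face is in
exactly two facets, and links of faces of dimension at most `d-2` are connected. -/
def IsNormalPseudomanifold (K : SComplex) (d : ℕ) : Prop :=
  K.IsPure d ∧ K.StronglyConnected ∧
    (∀ s ∈ K.faces, s.card = d →
      (K.faces.filter fun F => F.card = d + 1 ∧ s ⊆ F).card = 2) ∧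
    (∀ s ∈ K.faces, s.card ≤ d - 1 → (K.lk s).Conn)

/-- The geometric realization `|K|`, as a subspace of `ℕ → ℝ`. -/
def realSpace (K : SComplex) : Set (ℕ → ℝ) :=
  {w | (∀ v, 0 ≤ w v) ∧ ∃ s ∈ K.faces, (∀ v, w v ≠ 0 → v ∈ s) ∧ ∑ v ∈ s, w v = 1}

/-- The link of the vertex `v` triangulates the `(d-1)`-sphere. -/
def HasSphereLink (K : SComplex) (d : ℕ) (v : ℕ) : Prop :=
  Nonempty (↥((K.lk {v}).realSpace) ≃ₜ
    ↥(Metric.sphere (0 : EuclideanSpace ℝ (Fin d)) 1))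

/-- A singular vertex of a normal 3-pseudomanifold: its link is not a 2-sphere. -/
def IsSingular (K : SComplex) (v : ℕ) : Prop :=
  {v} ∈ K.faces ∧ ¬ K.HasSphereLink 3 v

/-- `d(σ)`: the number of vertices of the link of `σ`. -/
def deg (K : SComplex) (σ : Finset ℕ) : ℕ := (K.lk σ).fnum 0

/-- The boundary complex of the simplex on vertex set `s`: all nonempty proper subsets. -/
def properFaces (s : Finset ℕ) : Finset (Finset ℕ) :=
  s.powerset.filter fun t => t ≠ ∅ ∧ t ≠ s

/-- All nonempty faces of the simplex on vertex set `s`. -/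
def simplexFaces (s : Finset ℕ) : Finset (Finset ℕ) :=
  s.powerset.filter fun t => t ≠ ∅

/-- Operation (A): a bistellar 2-move on an edge `uv` with `lk(uv) = ∂(abc)`, `abc ∉ K`. -/
def BistellarTwoMove (K K' : SComplex) : Prop :=
  ∃ u v a b c : ℕ,
    ({u, v} : Finset ℕ) ∈ K.faces ∧ u ≠ v ∧
    ({a, b, c} : Finset ℕ).card = 3 ∧
    u ∉ ({a, b, c} : Finset ℕ) ∧ v ∉ ({a, b, c} : Finset ℕ) ∧
    (K.lk {u, v}).faces = properFaces {a, b, c} ∧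
    ({a, b, c} : Finset ℕ) ∉ K.faces ∧
    K'.faces = ((K.faces.filter fun α => ¬ ({u, v} : Finset ℕ) ⊆ α) ∪
      simplexFaces (insert u {a, b, c})) ∪ simplexFaces (insert v {a, b, c})

/-- The faces of the boundary complex of a pure `d`-dimensional complex with face set `F`:
faces contained in some `(d-1)`-face lying in exactly one facet. -/
def bdryFaces (F : Finset (Finset ℕ)) (d : ℕ) : Finset (Finset ℕ) :=
  F.filter fun s => ∃ r ∈ F, s ⊆ r ∧ r.card = d ∧
    (F.filter fun t => t.card = d + 1 ∧ r ⊆ t).card = 1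

/-- The faces of the cone with apex `w` over the complex with face set `F`. -/
def coneFaces (w : ℕ) (F : Finset (Finset ℕ)) : Finset (Finset ℕ) :=
  (F ∪ F.image (insert w)) ∪ {{w}}

/-- `K₁` is obtained from the normal `d`-pseudomanifold `K` by contracting the
edge `uv` (satisfying the link condition): delete all faces containing `u` or `v`
and cone off the boundary of the result with a new vertex `w`. -/
def EdgeContractionAt (d : ℕ) (K : SComplex) (u v : ℕ) (K₁ : SComplex) : Prop :=
  ({u, v} : Finset ℕ) ∈ K.faces ∧ u ≠ v ∧
  (K.lk {u}).faces ∩ (K.lk {v}).faces = (K.lk {u, v}).faces ∧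
  ∃ w, w ∉ K.vertexSet ∧
    K₁.faces = (K.faces.filter fun α => u ∉ α ∧ v ∉ α) ∪
      coneFaces w (bdryFaces (K.faces.filter fun α => u ∉ α ∧ v ∉ α) d)

/-- Operation (B): an edge contraction in a 3-dimensional complex. -/
def EdgeContraction (K K₁ : SComplex) : Prop := ∃ u v, EdgeContractionAt 3 K u v K₁

/-- The class `R`: normal 3-pseudomanifolds with one or two singular vertices such that
(i) if `K` contains the boundary of a 3-simplex then it contains the 3-simplex and
(ii) no normal 3-pseudomanifold with smaller `g₂` is obtained from `K` by a
bistellar 2-move, an edge contraction, an edge expansion followed by a bistellar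
2-move, or an edge expansion followed by an edge contraction. -/
def InClassR (K : SComplex) : Prop :=
  K.IsNormalPseudomanifold 3 ∧
  1 ≤ {v | K.IsSingular v}.ncard ∧ {v | K.IsSingular v}.ncard ≤ 2 ∧
  (∀ s : Finset ℕ, s.card = 4 → (∀ t ∈ properFaces s, t ∈ K.faces) → s ∈ K.faces) ∧
  (∀ K' : SComplex, K'.IsNormalPseudomanifold 3 →
    (BistellarTwoMove K K' ∨ EdgeContraction K K' ∨
      (∃ M, EdgeContraction M K ∧ BistellarTwoMove M K') ∨
      (∃ M, EdgeContraction M K ∧ EdgeContraction M K')) →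
    K.g2 ≤ K'.g2)



/-- The missing triangle `τ` (whose boundary lies in the surface complex `L`)
separates `L`: some two triangles of `L` cannot be joined by a chain of triangles
in which consecutive triangles share an edge not lying in `∂τ`. -/
def SeparatesLink (L : SComplex) (τ : Finset ℕ) : Prop :=
  ∃ p q, p ∈ L.faces ∧ q ∈ L.faces ∧ p.card = 3 ∧ q.card = 3 ∧
    ¬ Relation.ReflTransGen
      (fun p' q' => p' ∈ L.faces ∧ q' ∈ L.faces ∧ p'.card = 3 ∧ q'.card = 3 ∧
        (p' ∩ q').card = 2 ∧ ¬ (p' ∩ q' ⊆ τ)) p q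

/-- `K` is the connected sum of `K₁` and `K₂`: a facet `τ₂` of `K₂` is identified with
a facet `τ₁` of `K₁` via a bijection (realized by the relabelling map `h`, injective on
the vertices of `K₂` and avoiding the vertices of `K₁` away from `τ₂`), and the
identified facet is removed. (A bijection between facets of distinct components is
automatically admissible.) -/
def IsConnSumPair (K₁ K₂ K : SComplex) : Prop :=
  ∃ (τ₁ τ₂ : Finset ℕ) (h : ℕ → ℕ),
    K₁.IsFacet τ₁ ∧ τ₁.card = 4 ∧ K₂.IsFacet τ₂ ∧ τ₂.card = 4 ∧
    Set.InjOn h ↑K₂.vertexSet ∧ τ₂.image h = τ₁ ∧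
    (∀ v ∈ K₂.vertexSet, v ∉ τ₂ → h v ∉ K₁.vertexSet) ∧
    K.faces = (K₁.faces ∪ K₂.faces.image (Finset.image h)) \ {τ₁}

/-- `K` was formed using a connected sum of two normal 3-pseudomanifolds. -/
def FormedByConnSum (K : SComplex) : Prop :=
  ∃ K₁ K₂ : SComplex, K₁.IsNormalPseudomanifold 3 ∧ K₂.IsNormalPseudomanifold 3 ∧
    IsConnSumPair K₁ K₂ K

/-- `K` was formed using a handle addition: two disjoint facets of a (connected) normal
3-pseudomanifold `K'` are identified via an admissible bijection `ψ` (every path from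
`x` to `ψ x` has length at least 3), and the identified facet is removed. -/
def FormedByHandleAddition (K : SComplex) : Prop :=
  ∃ (K' : SComplex) (τ₁ τ₂ : Finset ℕ) (ψ h : ℕ → ℕ),
    K'.IsNormalPseudomanifold 3 ∧
    K'.IsFacet τ₁ ∧ τ₁.card = 4 ∧ K'.IsFacet τ₂ ∧ τ₂.card = 4 ∧
    Set.InjOn ψ ↑τ₁ ∧ τ₁.image ψ = τ₂ ∧
    (∀ x ∈ τ₁, x ≠ ψ x ∧ ({x, ψ x} : Finset ℕ) ∉ K'.faces ∧
      ∀ z, ({x, z} : Finset ℕ) ∈ K'.faces → ({z, ψ x} : Finset ℕ) ∈ K'.faces → False) ∧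
    (∀ y, y ∉ τ₂ → h y = y) ∧ (∀ x ∈ τ₁, h (ψ x) = x) ∧
    K.faces = (K'.faces.image (Finset.image h)) \ {τ₁}

end SComplex

/-!
For each vertex `x` of `σ`, the two parts into which the missing triangle `σ \ {x}` separates the
link of `x` give a two-valued function on the facets around `x` that changes exactly across the
triangles of `∂σ`. Such functions are unique up to a constant, so after adding constants those at
the four vertices agree and form a single function on the facets that meet `σ`. If some function on
all facets changes exactly across `∂σ`, then the facets of each of its two values, closed up by `σ`,
form a normal pseudomanifold, and `Δ` is the connected sum of the two. If there is none, cutting `Δ`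
open along `∂σ` and filling in both copies of `σ` gives a strongly connected pseudomanifold from
which `Δ` arises by a handle addition.

No handle addition can occur. If `Δ` arises from `K` by one, then `g₂(Δ) = g₂(K) + 10`, and `t`
comes from one or two vertices of `K`, which have disjoint closed stars and whose links have total
`g₂` equal to `g₂(lk(t, Δ))`. A cone has the same `g₂` as its base, and by Fogelsanger's argument
the graph of a pseudomanifold is generically rigid, so that vertex stars which are disjoint in `K`
have total `g₂` at most `g₂(K)`. Hence `g₂(lk(t, Δ)) + 10 ≤ g₂(Δ)`, against the hypothesis.
-/

/-! ### Generic rigidity -/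

/-- A placement of the vertices `α` in `ℝᵈ`. The velocities of the vertices are recorded by a
function of the same type. -/
abbrev Placement (α : Type*) (d : ℕ) : Type _ := α → Fin d → ℝ

/-- The space of symmetric real `d × d` matrices. -/
def symmetricMatrices (d : ℕ) : Submodule ℝ (Matrix (Fin d) (Fin d) ℝ) where
  carrier := {A | A.IsSymm}
  add_mem' hA hB := hA.add hB
  zero_mem' := Matrix.isSymm_zero
  smul_mem' c _ hA := hA.smul c

/-- A symmetric matrix is a function of its unordered pairs of indices. -/
def symmetricMatricesEquiv (d : ℕ) : symmetricMatrices d ≃ₗ[ℝ] (Sym2 (Fin d) → ℝ) where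
  toFun A := Sym2.lift ⟨fun i j => A.1 i j, fun i j => A.2.apply j i⟩
  map_add' _ _ := funext fun e => e.ind fun _ _ => rfl
  map_smul' _ _ := funext fun e => e.ind fun _ _ => rfl
  invFun a := ⟨Matrix.of fun i j => a s(i, j), Matrix.ext fun _ _ => congrArg a Sym2.eq_swap⟩
  left_inv _ := rfl
  right_inv _ := funext fun e => e.ind fun _ _ => rfl

theorem finrank_symmetricMatrices (d : ℕ) :
    Module.finrank ℝ (symmetricMatrices d) = (d + 1).choose 2 := by
  rw [(symmetricMatricesEquiv d).finrank_eq, Module.finrank_fintype_fun_eq_card, Sym2.card,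
    Fintype.card_fin]

theorem mulVec_dotProduct_comm_of_isSymm {d : ℕ} {A : Matrix (Fin d) (Fin d) ℝ} (hA : A.IsSymm)
    (x y : Fin d → ℝ) : (A.mulVec x) ⬝ᵥ y = (A.mulVec y) ⬝ᵥ x := by
  rw [dotProduct_comm, Matrix.dotProduct_mulVec, ← Matrix.mulVec_transpose, hA.eq]

theorem rank_map_aeval_le_of_algebraicIndependent {R τ ι κ : Type*} [CommRing R] [Algebra R ℝ]
    [Finite ι] [Fintype κ] {p : τ → ℝ} (hp : AlgebraicIndependent R p) (q : τ → ℝ)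
    (M : Matrix ι κ (MvPolynomial τ R)) :
    (M.map (MvPolynomial.aeval q)).rank ≤ (M.map (MvPolynomial.aeval p)).rank := by
  have := Fintype.ofFinite ι
  obtain ⟨f, hf, -, hli⟩ := Submodule.exists_fun_fin_finrank_span_eq ℝ
    (Set.range (M.map (MvPolynomial.aeval q)).row)
  rw [(M.map (MvPolynomial.aeval q)).rank_eq_finrank_span_row]
  choose rows hrows using hf
  let N (s : τ → ℝ) := (M.map (MvPolynomial.aeval s)).submatrix rows id
  let gram : MvPolynomial τ R := (M.submatrix rows id * (M.submatrix rows id).transpose).det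
  have aeval_gram (s : τ → ℝ) :
      MvPolynomial.aeval s gram = (N s * (N s).transpose).det := by
    rw [AlgHom.map_det, AlgHom.mapMatrix_apply, Matrix.map_mul]
    rfl
  have gram_ne_zero : gram ≠ 0 := by
    intro h
    have hinj : Function.Injective fun v => Matrix.vecMul v (N q) := by
      rw [Matrix.vecMul_injective_iff]
      exact (funext hrows : (N q).row = f) ▸ hli
    have hpos := (Matrix.PosDef.mul_conjTranspose_self (N q) hinj).det_pos
    rw [Matrix.conjTranspose_eq_transpose_of_trivial, ← aeval_gram, h, map_zero] at hpos
    exact hpos.false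
  have det_ne_zero : (N p * (N p).transpose).det ≠ 0 := by
    rw [← aeval_gram]
    exact fun h => gram_ne_zero (hp (h.trans (map_zero _).symm))
  calc _ = (N p * (N p).transpose).rank := by
          rw [Matrix.rank_of_det_ne_zero det_ne_zero, Fintype.card_fin]
    _ ≤ (N p).rank := Matrix.rank_mul_le_left _ _
    _ ≤ _ := Matrix.rank_submatrix_le _ _ _

open Classical in
/-- Extension by zero of a velocity field from `W` to all vertices. -/
noncomputable def extendZero {α : Type*} (d : ℕ) (W : Finset α) :
    (W → Fin d → ℝ) →ₗ[ℝ] (α → Fin d → ℝ) :=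
  LinearMap.pi fun w => if h : w ∈ W then LinearMap.proj ⟨w, h⟩ else 0

theorem extendZero_of_mem {α : Type*} {d : ℕ} {W : Finset α} {w : α} (hw : w ∈ W)
    (m : W → Fin d → ℝ) : extendZero d W m w = m ⟨w, hw⟩ := by
  simp [extendZero, hw]

theorem extendZero_coe {α : Type*} {d : ℕ} {W : Finset α} (w : W)
    (m : W → Fin d → ℝ) : extendZero d W m w = m w :=
  extendZero_of_mem w.2 m

namespace Placement

section Rigidity

variable {α : Type*} {d : ℕ} {p : Placement α d} {G H : SimpleGraph α} {W : Set α}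
  {m : α → Fin d → ℝ}

/-- The infinitesimal motions of a framework in the sense of Kalai's hyperconnectivity: it replaces
the Euclidean condition `(m u - m v) ⬝ᵥ (p u - p v) = 0` by one bilinear in the two end points, and
the infinitesimal isometries by the symmetric matrices, a space of the same dimension. -/
def IsMotion (p : Placement α d) (G : SimpleGraph α) (m : α → Fin d → ℝ) : Prop :=
  ∀ ⦃u v⦄, G.Adj u v → m u ⬝ᵥ p v = m v ⬝ᵥ p u

/-- Trivial infinitesimal motions on a set `W` of vertices: those induced by a symmetric matrix. -/
def IsTrivialOn (p : Placement α d) (W : Set α) (m : α → Fin d → ℝ) : Prop :=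
  ∃ A : Matrix (Fin d) (Fin d) ℝ, A.IsSymm ∧ ∀ w ∈ W, m w = A.mulVec (p w)

/-- Infinitesimal rigidity on the set `W` of vertices: every motion is trivial on `W`. -/
def IsRigidOn (p : Placement α d) (G : SimpleGraph α) (W : Set α) : Prop :=
  ∀ ⦃m⦄, p.IsMotion G m → p.IsTrivialOn W m

/-- Genericity: all coordinates of all vertices are algebraically independent over `ℚ`. -/
def IsGeneric (p : Placement α d) : Prop :=
  AlgebraicIndependent ℚ fun i : α × Fin d => p i.1 i.2

theorem IsMotion.mono (hm : p.IsMotion H m) (hGH : G ≤ H) : p.IsMotion G m :=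
  fun _ _ huv => hm (hGH huv)

theorem IsRigidOn.mono (h : p.IsRigidOn G W) (hGH : G ≤ H) : p.IsRigidOn H W :=
  fun _ hm => h (hm.mono hGH)

end Rigidity

theorem exists_isGeneric (α : Type*) [Countable α] (d : ℕ) : ∃ p : Placement α d, p.IsGeneric := by
  obtain ⟨ι, x, hx⟩ := exists_isTranscendenceBasis' ℚ ℝ
  have infinite_basis : Infinite ι := by
    by_contra hfin
    rw [not_infinite_iff_finite] at hfin
    have countable_adjoin : Countable (Algebra.adjoin ℚ (Set.range x)) := by
      have : Countable (MvPolynomial ι ℚ) :=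
        Cardinal.mk_le_aleph0_iff.mp (MvPolynomial.cardinalMk_le_max.trans (by simp))
      exact hx.1.aevalEquiv.toEquiv.symm.injective.countable
    have := hx.isAlgebraic
    have countable_real : Countable ℝ := Cardinal.mk_le_aleph0_iff.mp <|
      (Algebra.IsAlgebraic.cardinalMk_le_max (Algebra.adjoin ℚ (Set.range x)) ℝ).trans (by simp)
    exact not_countable countable_real
  obtain ⟨f, hf⟩ := exists_injective_nat (α × Fin d)
  let g := Infinite.natEmbedding ι
  exact ⟨fun v k => x (g (f (v, k))), hx.1.comp _ (g.injective.comp hf)⟩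

namespace IsGeneric

variable {α : Type*} {d : ℕ} {p : Placement α d} {G : SimpleGraph α}

theorem det_ne_zero (hp : p.IsGeneric) {e : Fin d → α} (he : Function.Injective e) :
    (Matrix.of fun i => p (e i)).det ≠ 0 := by
  let X : Matrix (Fin d) (Fin d) (MvPolynomial (Fin d × Fin d) ℚ) :=
    Matrix.mvPolynomialX (Fin d) (Fin d) ℚ
  have hpe : AlgebraicIndependent ℚ fun i : Fin d × Fin d => p (e i.1) i.2 :=
    hp.comp (Prod.map e id) (he.prodMap Function.injective_id)
  have aeval_det : MvPolynomial.aeval (fun i : Fin d × Fin d => p (e i.1) i.2) X.det =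
      (Matrix.of fun i => p (e i)).det := by
    rw [AlgHom.map_det]
    congr 1
    ext i j
    simp [X]
  rw [← aeval_det]
  exact fun h => Matrix.det_mvPolynomialX_ne_zero (Fin d) ℚ (hpe (h.trans (map_zero _).symm))

theorem eq_zero_of_dotProduct_eq_zero (hp : p.IsGeneric) {F : Finset α} (hF : d ≤ F.card)
    {x : Fin d → ℝ} (h : ∀ w ∈ F, x ⬝ᵥ p w = 0) : x = 0 := by
  obtain ⟨e⟩ : Nonempty (Fin d ↪ F) := Function.Embedding.nonempty_of_card_le (by simpa using hF)
  have hdet := hp.det_ne_zero (Subtype.val_injective.comp e.injective)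
  by_contra hx
  refine hdet (Matrix.exists_mulVec_eq_zero_iff.mp ⟨x, hx, funext fun i => ?_⟩)
  exact (dotProduct_comm _ _).trans (h (e i) (e i).2)

theorem matrix_ext (hp : p.IsGeneric) {F : Finset α} (hF : d ≤ F.card)
    {A B : Matrix (Fin d) (Fin d) ℝ} (h : ∀ w ∈ F, A.mulVec (p w) = B.mulVec (p w)) : A = B := by
  refine funext fun i => sub_eq_zero.mp (hp.eq_zero_of_dotProduct_eq_zero hF fun w hw => ?_)
  rw [sub_dotProduct]
  exact sub_eq_zero.mpr (congrFun (h w hw) i)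

theorem exists_isSymm_of_motion (hp : p.IsGeneric) {e : Fin d → α} (he : Function.Injective e)
    {m : α → Fin d → ℝ} (hm : ∀ i j, m (e i) ⬝ᵥ p (e j) = m (e j) ⬝ᵥ p (e i)) :
    ∃ A : Matrix (Fin d) (Fin d) ℝ, A.IsSymm ∧ ∀ i, m (e i) = A.mulVec (p (e i)) := by
  let P : Matrix (Fin d) (Fin d) ℝ := Matrix.of fun i => p (e i)
  let N : Matrix (Fin d) (Fin d) ℝ := Matrix.of fun i => m (e i)
  have hP : IsUnit P.det := (hp.det_ne_zero he).isUnit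
  have hPt : IsUnit P.transpose.det := by rwa [Matrix.det_transpose]
  have hNP : N * P.transpose = P * N.transpose := by
    ext i j
    exact (hm i j).trans (dotProduct_comm _ _)
  have hA : (P⁻¹ * N).IsSymm := by
    calc (P⁻¹ * N).transpose = P⁻¹ * (P * N.transpose) * P.transpose⁻¹ := by
          rw [Matrix.nonsing_inv_mul_cancel_left _ _ hP, Matrix.transpose_mul,
            Matrix.transpose_nonsing_inv]
      _ = P⁻¹ * N := by
          rw [← hNP, ← Matrix.mul_assoc, Matrix.mul_nonsing_inv_cancel_right _ _ hPt]
  refine ⟨P⁻¹ * N, hA, fun i => ?_⟩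
  calc m (e i) = Matrix.vecMul (P i) (P⁻¹ * N) :=
        (congrFun (Matrix.mul_nonsing_inv_cancel_left P N hP) i).symm
    _ = (P⁻¹ * N).mulVec (p (e i)) := by rw [← Matrix.mulVec_transpose, hA.eq]; rfl

theorem isRigidOn_of_isClique (hp : p.IsGeneric) {F : Finset α} (hF : d ≤ F.card)
    (hG : G.IsClique F) : p.IsRigidOn G F := by
  intro m hm
  obtain ⟨e⟩ : Nonempty (Fin d ↪ F) := Function.Embedding.nonempty_of_card_le (by simpa using hF)
  have hmF : ∀ u ∈ F, ∀ v ∈ F, m u ⬝ᵥ p v = m v ⬝ᵥ p u := by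
    intro u hu v hv
    obtain rfl | huv := eq_or_ne u v
    · rfl
    · exact hm (hG hu hv huv)
  have he := Subtype.val_injective.comp e.injective
  obtain ⟨A, hA, hAm⟩ := hp.exists_isSymm_of_motion he
    fun i j => hmF (e i) (e i).2 (e j) (e j).2
  refine ⟨A, hA, fun w hw => sub_eq_zero.mp ?_⟩
  have hcard : d ≤ (Finset.univ.map (e.trans (Function.Embedding.subtype _))).card := by simp
  refine hp.eq_zero_of_dotProduct_eq_zero hcard fun x hx => ?_
  obtain ⟨i, -, rfl⟩ := Finset.mem_map.mp hx
  rw [sub_dotProduct, mulVec_dotProduct_comm_of_isSymm hA, sub_eq_zero]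
  exact (hmF w hw _ (e i).2).trans (congrArg (· ⬝ᵥ p w) (hAm i))

end IsGeneric

section Counting

variable {α : Type*} {d : ℕ} {p q : Placement α d} {G : SimpleGraph α} {W : Finset α}

/-- The linear constraint that an edge `uv` puts on the motions. -/
def edgeForm (p : Placement α d) (u v : α) : (α → Fin d → ℝ) →ₗ[ℝ] ℝ where
  toFun m := m u ⬝ᵥ p v - m v ⬝ᵥ p u
  map_add' _ _ := by simp only [Pi.add_apply, add_dotProduct]; ring
  map_smul' _ _ := by simp only [Pi.smul_apply, smul_dotProduct, smul_sub, RingHom.id_apply]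

theorem edgeForm_eq_zero {u v : α} {m : α → Fin d → ℝ} :
    p.edgeForm u v m = 0 ↔ m u ⬝ᵥ p v = m v ⬝ᵥ p u :=
  sub_eq_zero

/-- The trivial motions on `W`, parametrised by the symmetric matrices. -/
def trivialMotion (p : Placement α d) (W : Finset α) :
    symmetricMatrices d →ₗ[ℝ] (W → Fin d → ℝ) where
  toFun A := fun w => A.1.mulVec (p w)
  map_add' A B := funext fun w => Matrix.add_mulVec A.1 B.1 (p w)
  map_smul' c A := funext fun w => Matrix.smul_mulVec c A.1 (p w)

theorem IsGeneric.injective_trivialMotion (hp : p.IsGeneric) (hW : d ≤ W.card) :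
    Function.Injective (p.trivialMotion W) :=
  fun _ _ h => Subtype.ext (hp.matrix_ext hW fun w hw => congrFun h ⟨w, hw⟩)

/-- The system of edge constraints on the velocities of the vertices in `W`. -/
noncomputable def rigidityMap (p : Placement α d) (G : SimpleGraph α) (W : Finset α) :
    (W → Fin d → ℝ) →ₗ[ℝ] ({e : W × W // G.Adj e.1 e.2} → ℝ) :=
  LinearMap.pi fun e => p.edgeForm e.1.1 e.1.2 ∘ₗ extendZero d W

theorem mem_ker_rigidityMap (hG : G.support ⊆ W) {z : W → Fin d → ℝ} :
    z ∈ LinearMap.ker (p.rigidityMap G W) ↔ p.IsMotion G (extendZero d W z) := by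
  rw [LinearMap.mem_ker]
  constructor
  · intro hz u v huv
    exact edgeForm_eq_zero.mp
      (congrFun hz ⟨(⟨u, hG ⟨v, huv⟩⟩, ⟨v, hG ⟨u, huv.symm⟩⟩), huv⟩)
  · exact fun hz => funext fun e => edgeForm_eq_zero.mpr (hz e.2)

theorem range_trivialMotion_le_ker (p : Placement α d) (G : SimpleGraph α) (W : Finset α) :
    LinearMap.range (p.trivialMotion W) ≤ LinearMap.ker (p.rigidityMap G W) := by
  rintro _ ⟨A, rfl⟩
  refine LinearMap.mem_ker.mpr (funext fun e => edgeForm_eq_zero.mpr ?_)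
  rw [extendZero_coe, extendZero_coe]
  exact mulVec_dotProduct_comm_of_isSymm A.2 _ _

theorem isRigidOn_iff_ker_le_range (hG : G.support ⊆ W) :
    p.IsRigidOn G W ↔ LinearMap.ker (p.rigidityMap G W) ≤ LinearMap.range (p.trivialMotion W) := by
  constructor
  · intro h z hz
    obtain ⟨A, hA, hAz⟩ := h ((mem_ker_rigidityMap hG).mp hz)
    exact ⟨⟨A, hA⟩, funext fun w => (hAz w w.2).symm.trans (extendZero_coe w z)⟩
  · intro h m hm
    obtain ⟨A, hA⟩ := h <| (mem_ker_rigidityMap hG (z := fun w => m w)).mpr fun u v huv => by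
      rw [extendZero_of_mem (hG ⟨v, huv⟩), extendZero_of_mem (hG ⟨u, huv.symm⟩)]
      exact hm huv
    exact ⟨A.1, A.2, fun w hw => (congrFun hA ⟨w, hw⟩).symm⟩

open Classical in
/-- The matrix of `rigidityMap`, with the coordinates of the vertices as indeterminates. -/
noncomputable def rigidityMatrix (d : ℕ) (G : SimpleGraph α) (W : Finset α) :
    Matrix {e : W × W // G.Adj e.1 e.2} (W × Fin d) (MvPolynomial (α × Fin d) ℚ) :=
  Matrix.of fun e x =>
    (if e.1.1 = x.1 then MvPolynomial.X ((e.1.2 : α), x.2) else 0)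
      - (if e.1.2 = x.1 then MvPolynomial.X ((e.1.1 : α), x.2) else 0)

theorem rigidityMap_eq_mulVecLin (p : Placement α d) (G : SimpleGraph α) (W : Finset α) :
    p.rigidityMap G W =
      ((rigidityMatrix d G W).map
          (MvPolynomial.aeval fun i : α × Fin d => p i.1 i.2)).mulVecLin ∘ₗ
        (LinearEquiv.curry ℝ ℝ W (Fin d)).symm.toLinearMap := by
  classical
  refine LinearMap.ext fun z => funext fun e => ?_
  have aeval_ite (P : Prop) [Decidable P] (i : α × Fin d) :
      MvPolynomial.aeval (fun i : α × Fin d => p i.1 i.2)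
        (if P then MvPolynomial.X i else 0 : MvPolynomial (α × Fin d) ℚ) =
          if P then p i.1 i.2 else 0 := by
    split_ifs
    · exact MvPolynomial.aeval_X _ _
    · exact map_zero _
  calc p.rigidityMap G W z e = z e.1.1 ⬝ᵥ p e.1.2 - z e.1.2 ⬝ᵥ p e.1.1 := by
        rw [← extendZero_coe e.1.1 z, ← extendZero_coe e.1.2 z]; rfl
    _ = ∑ w : W, ∑ k, ((if e.1.1 = w then p e.1.2 k else 0)
          - (if e.1.2 = w then p e.1.1 k else 0)) * z w k := by
        simp only [sub_mul, ite_mul, zero_mul, Finset.sum_sub_distrib]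
        rw [Finset.sum_eq_single e.1.1, Finset.sum_eq_single e.1.2] <;>
          simp +contextual [dotProduct, mul_comm, eq_comm]
    _ = _ := by
        simp only [LinearMap.comp_apply, Matrix.mulVecLin_apply, Matrix.mulVec, dotProduct,
          Fintype.sum_prod_type, Matrix.map_apply, rigidityMatrix, Matrix.of_apply, map_sub,
          aeval_ite]
        rfl

theorem finrank_range_rigidityMap (p : Placement α d) (G : SimpleGraph α) (W : Finset α) :
    Module.finrank ℝ (LinearMap.range (p.rigidityMap G W)) =
      ((rigidityMatrix d G W).map (MvPolynomial.aeval fun i : α × Fin d => p i.1 i.2)).rank := by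
  rw [rigidityMap_eq_mulVecLin, LinearMap.range_comp_of_range_eq_top _
    (LinearEquiv.range (LinearEquiv.curry ℝ ℝ W (Fin d)).symm), Matrix.rank]

theorem IsGeneric.finrank_range_rigidityMap_le (hp : p.IsGeneric) (q : Placement α d)
    (G : SimpleGraph α) (W : Finset α) :
    Module.finrank ℝ (LinearMap.range (q.rigidityMap G W)) ≤
      Module.finrank ℝ (LinearMap.range (p.rigidityMap G W)) := by
  rw [finrank_range_rigidityMap, finrank_range_rigidityMap]
  exact rank_map_aeval_le_of_algebraicIndependent hp _ _

theorem IsGeneric.isRigidOn_of_isRigidOn (hp : p.IsGeneric) (hG : G.support ⊆ W)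
    (hW : d ≤ W.card) (hq : q.IsRigidOn G W) : p.IsRigidOn G W := by
  rw [isRigidOn_iff_ker_le_range hG] at hq ⊢
  refine (Submodule.eq_of_le_of_finrank_le (range_trivialMotion_le_ker p G W) ?_).ge
  rw [LinearMap.finrank_range_of_inj (hp.injective_trivialMotion hW)]
  have hker_q : Module.finrank ℝ (LinearMap.ker (q.rigidityMap G W)) ≤
      Module.finrank ℝ (symmetricMatrices d) :=
    (Submodule.finrank_mono hq).trans (LinearMap.finrank_range_le _)
  have hrank := hp.finrank_range_rigidityMap_le q G W
  have hnull_p := LinearMap.finrank_range_add_finrank_ker (p.rigidityMap G W)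
  have hnull_q := LinearMap.finrank_range_add_finrank_ker (q.rigidityMap G W)
  omega

/-- The edge constraints of a graph covered by the pairs in `X` and by cliques on the blocks `B i`,
in a relaxed form: each block moves by a symmetric matrix of its own. -/
noncomputable def blockMap (p : Placement α d) {ι : Type*} {B : ι → Finset α} (hBW : ∀ i, B i ⊆ W)
    (X : Finset (α × α)) :
    ((W → Fin d → ℝ) × (ι → symmetricMatrices d)) →ₗ[ℝ] (X → ℝ) × (∀ i, B i → Fin d → ℝ) :=
  LinearMap.prod
    (LinearMap.pi fun e => p.edgeForm e.1.1 e.1.2 ∘ₗ extendZero d W ∘ₗ LinearMap.fst ℝ _ _)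
    (LinearMap.pi fun i =>
      LinearMap.funLeft ℝ (Fin d → ℝ) (Set.inclusion (hBW i)) ∘ₗ LinearMap.fst ℝ _ _
        - p.trivialMotion (B i) ∘ₗ LinearMap.proj i ∘ₗ LinearMap.snd ℝ _ _)

theorem IsGeneric.ker_blockMap_le (hp : p.IsGeneric) (hG : p.IsRigidOn G W) {ι : Type*}
    {B : ι → Finset α} (hBW : ∀ i, B i ⊆ W) (hB : ∀ i, d ≤ (B i).card) {X : Finset (α × α)}
    (hX : ∀ u v, G.Adj u v → (u, v) ∈ X ∨ (v, u) ∈ X ∨ ∃ i, u ∈ B i ∧ v ∈ B i) :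
    LinearMap.ker (p.blockMap hBW X) ≤
      LinearMap.range ((p.trivialMotion W).prod (LinearMap.pi fun _ => LinearMap.id)) := by
  rintro ⟨m, A⟩ hmA
  rw [LinearMap.mem_ker, Prod.ext_iff] at hmA
  have edge : ∀ e ∈ X, extendZero d W m e.1 ⬝ᵥ p e.2 = extendZero d W m e.2 ⬝ᵥ p e.1 :=
    fun e he => edgeForm_eq_zero.mp (congrFun hmA.1 ⟨e, he⟩)
  have block : ∀ i, ∀ w ∈ B i, extendZero d W m w = (A i).1.mulVec (p w) := fun i w hw => by
    rw [extendZero_of_mem (hBW i hw)]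
    exact sub_eq_zero.mp (congrFun (congrFun hmA.2 i) ⟨w, hw⟩)
  obtain ⟨S, hS, hmS⟩ : p.IsTrivialOn W (extendZero d W m) := hG fun u v huv => by
    obtain h | h | ⟨i, hu, hv⟩ := hX u v huv
    · exact edge _ h
    · exact (edge _ h).symm
    · rw [block i u hu, block i v hv]
      exact mulVec_dotProduct_comm_of_isSymm (A i).2 _ _
  refine ⟨⟨S, hS⟩, Prod.ext ?_ ?_⟩
  · exact funext fun w => (hmS w w.2).symm.trans (extendZero_coe w m)
  · refine funext fun i => Subtype.ext (hp.matrix_ext (hB i) fun w hw => ?_)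
    exact (hmS w (hBW i hw)).symm.trans (block i w hw)

theorem IsGeneric.card_le_of_isRigidOn (hp : p.IsGeneric) (hG : p.IsRigidOn G W) {ι : Type*}
    [Fintype ι] {B : ι → Finset α} (hBW : ∀ i, B i ⊆ W) (hB : ∀ i, d ≤ (B i).card)
    {X : Finset (α × α)}
    (hX : ∀ u v, G.Adj u v → (u, v) ∈ X ∨ (v, u) ∈ X ∨ ∃ i, u ∈ B i ∧ v ∈ B i) :
    d * W.card + (d + 1).choose 2 * Fintype.card ι ≤
      (d + 1).choose 2 + (X.card + d * ∑ i, (B i).card) := by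
  have hker : Module.finrank ℝ (LinearMap.ker (p.blockMap hBW X)) ≤ (d + 1).choose 2 := by
    rw [← finrank_symmetricMatrices]
    exact (Submodule.finrank_mono (hp.ker_blockMap_le hG hBW hB hX)).trans
      (LinearMap.finrank_range_le _)
  have hrange := Submodule.finrank_le (LinearMap.range (p.blockMap hBW X))
  have hrank := LinearMap.finrank_range_add_finrank_ker (p.blockMap hBW X)
  have hdom : Module.finrank ℝ ((W → Fin d → ℝ) × (ι → symmetricMatrices d)) =
      d * W.card + (d + 1).choose 2 * Fintype.card ι := by
    simp [Module.finrank_prod, Module.finrank_pi_fintype, finrank_symmetricMatrices, mul_comm]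
  have hcod : Module.finrank ℝ ((X → ℝ) × (∀ i, B i → Fin d → ℝ)) =
      X.card + d * ∑ i, (B i).card := by
    simp [Module.finrank_prod, Module.finrank_pi_fintype, Finset.mul_sum, mul_comm]
  omega

end Counting

end Placement

/-! ### Chains modulo two -/

theorem exists_mem_ne_of_sum_eq_zero {ι M : Type*} [AddCommMonoid M] {s : Finset ι} {f : ι → M}
    (h : ∑ i ∈ s, f i = 0) {a : ι} (ha : a ∈ s) (hfa : f a ≠ 0) : ∃ b ∈ s, b ≠ a ∧ f b ≠ 0 := by
  by_contra! hcon
  exact hfa ((Finset.sum_eq_single_of_mem a ha hcon).symm.trans h)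

/-- Simplicial chains with coefficients in `ℤ/2`. The empty set is allowed as a simplex, so that the
boundary operator below is the augmented one. -/
abbrev SimplicialChain (α : Type*) : Type _ := Finset α →₀ ZMod 2

namespace SimplicialChain

section Support

variable {α : Type*} {b c : SimplicialChain α}

theorem apply_eq_one_of_mem {F : Finset α} (hF : F ∈ c.support) : c F = 1 := by
  have h := Finsupp.mem_support_iff.mp hF
  generalize c F = x at h ⊢
  revert x
  decide

theorem eq_filter_of_support_subset (h : b.support ⊆ c.support) [DecidablePred (· ∈ b.support)] :
    c.filter (· ∈ b.support) = b := by
  ext F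
  by_cases hF : F ∈ b.support
  · rw [Finsupp.filter_apply_pos _ _ hF, apply_eq_one_of_mem hF, apply_eq_one_of_mem (h hF)]
  · rw [Finsupp.filter_apply_neg _ _ hF, Finsupp.notMem_support_iff.mp hF]

theorem eq_of_support_subset (h : b.support ⊆ c.support) (h' : c.support ⊆ b.support) : b = c := by
  classical
  rw [← eq_filter_of_support_subset h, Finsupp.filter_eq_self_iff]
  exact fun F hF => h' (Finsupp.mem_support_iff.mpr hF)

theorem notMem_support_sub {F : Finset α} (hb : F ∈ b.support) (hc : F ∈ c.support) :
    F ∉ (c - b).support := by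
  rw [Finsupp.notMem_support_iff, Finsupp.sub_apply, apply_eq_one_of_mem hb, apply_eq_one_of_mem hc,
    sub_self]

theorem eq_sum_filter {β : Type*} [DecidableEq β] (c : SimplicialChain α) (f : Finset α → β) :
    c = ∑ s ∈ c.support.image f, c.filter (f · = s) := by
  ext F
  rw [Finsupp.finsetSum_apply]
  simp only [Finsupp.filter_apply, Finset.sum_ite_eq]
  split_ifs with h
  · rfl
  · exact Finsupp.notMem_support_iff.mp fun hF => h (Finset.mem_image_of_mem f hF)

end Support

section Boundary

variable {α : Type*} [DecidableEq α] {c : SimplicialChain α} {d : ℕ}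

/-- The mod 2 boundary operator. -/
noncomputable def boundary : SimplicialChain α →ₗ[ZMod 2] SimplicialChain α :=
  Finsupp.linearCombination (ZMod 2) fun F => ∑ x ∈ F, Finsupp.single (F.erase x) 1

theorem boundary_single (F : Finset α) :
    boundary (Finsupp.single F 1) = ∑ x ∈ F, Finsupp.single (F.erase x) (1 : ZMod 2) := by
  rw [boundary, Finsupp.linearCombination_single, one_smul]

theorem boundary_boundary (c : SimplicialChain α) : boundary (boundary c) = 0 := by
  suffices boundary ∘ₗ boundary = (0 : SimplicialChain α →ₗ[ZMod 2] SimplicialChain α) from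
    LinearMap.congr_fun this c
  ext1 F
  refine LinearMap.ext_ring ?_
  change boundary (boundary (Finsupp.single F 1)) = 0
  simp only [boundary_single, map_sum]
  rw [Finset.sum_sigma']
  refine Finset.sum_involution (fun x _ => ⟨x.2, x.1⟩) ?_ ?_ ?_ ?_
  · rintro ⟨x, y⟩ -
    rw [Finset.erase_right_comm, ← Finsupp.single_add]
    exact Finsupp.single_zero _
  · rintro ⟨x, y⟩ hxy - heq
    exact (Finset.mem_erase.mp (Finset.mem_sigma.mp hxy).2).1 (congrArg Sigma.fst heq)
  · rintro ⟨x, y⟩ hxy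
    simp only [Finset.mem_sigma, Finset.mem_erase] at hxy ⊢
    exact ⟨hxy.2.2, hxy.2.1.symm, hxy.1⟩
  · exact fun _ _ => rfl

theorem boundary_apply (c : SimplicialChain α) (R : Finset α) :
    boundary c R = ∑ F ∈ c.support with ∃ x ∈ F, F.erase x = R, c F := by
  rw [boundary, Finsupp.linearCombination_apply, Finsupp.sum_apply, Finsupp.sum,
    Finset.sum_filter]
  refine Finset.sum_congr rfl fun F _ => ?_
  rw [Finsupp.smul_apply, Finsupp.finsetSum_apply, smul_eq_mul]
  split_ifs with h
  · obtain ⟨x, hx, rfl⟩ := h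
    rw [Finset.sum_eq_single x, Finsupp.single_eq_same, mul_one]
    · exact fun y hy hyx => Finsupp.single_eq_of_ne' fun h => hyx (Finset.erase_injOn F hy hx h)
    · exact fun h => absurd hx h
  · rw [Finset.sum_eq_zero, mul_zero]
    exact fun x hx => Finsupp.single_eq_of_ne' fun hR => h ⟨x, hx, hR⟩

theorem exists_insert_mem_support_of_boundary {R : Finset α} (hR : R ∈ (boundary c).support) :
    ∃ x ∉ R, insert x R ∈ c.support := by
  rw [Finsupp.mem_support_iff, boundary_apply] at hR
  obtain ⟨F, hF, -⟩ := Finset.exists_ne_zero_of_sum_ne_zero hR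
  obtain ⟨hFc, x, hx, rfl⟩ := Finset.mem_filter.mp hF
  exact ⟨x, Finset.notMem_erase x F, by rwa [Finset.insert_erase hx]⟩

theorem boundary_apply_of_forall_mem {v : α} (h : ∀ F ∈ c.support, v ∈ F) {R : Finset α}
    (hR : v ∉ R) : boundary c R = c (insert v R) := by
  have cofaces : ∀ F ∈ c.support, (∃ x ∈ F, F.erase x = R) ↔ F = insert v R := by
    intro F hF
    have := h F hF
    constructor
    · rintro ⟨x, hx, rfl⟩
      obtain rfl : v = x := by grind
      rw [Finset.insert_erase hx]
    · rintro rfl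
      exact ⟨v, this, Finset.erase_insert hR⟩
  rw [boundary_apply, Finset.filter_congr cofaces, Finset.sum_filter]
  simp +contextual [eq_comm]

theorem exists_insert_erase_mem_support (hc : boundary c = 0) {F : Finset α} (hF : F ∈ c.support)
    {y : α} (hy : y ∈ F) : ∃ x ∉ F, insert x (F.erase y) ∈ c.support := by
  have hsum := (boundary_apply c (F.erase y)).symm.trans (DFunLike.congr_fun hc _)
  obtain ⟨G, hG, hGF, -⟩ := exists_mem_ne_of_sum_eq_zero hsum
    (Finset.mem_filter.mpr ⟨hF, y, hy, rfl⟩) (Finsupp.mem_support_iff.mp hF)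
  obtain ⟨hGc, x, hx, hxG⟩ := Finset.mem_filter.mp hG
  have insert_eq : insert x (F.erase y) = G := by rw [← hxG, Finset.insert_erase hx]
  refine ⟨x, fun hxF => hGF ?_, insert_eq ▸ hGc⟩
  have hxy : x = y := by
    by_contra hxy
    exact Finset.notMem_erase x G (hxG ▸ Finset.mem_erase.mpr ⟨hxy, hxF⟩)
  rw [← insert_eq, hxy, Finset.insert_erase hy]

/-- The mod 2 cycles all of whose simplices have `d` vertices. -/
noncomputable def cycles (α : Type*) [DecidableEq α] (d : ℕ) :
    Submodule (ZMod 2) (SimplicialChain α) :=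
  Finsupp.supported (ZMod 2) (ZMod 2) {F | F.card = d} ⊓ LinearMap.ker boundary

theorem mem_cycles : c ∈ cycles α d ↔ (∀ F ∈ c.support, F.card = d) ∧ boundary c = 0 :=
  Iff.rfl

/-- A minimal cycle: a nonzero cycle whose support properly contains that of no other nonzero
cycle. -/
structure IsMinimalCycle (d : ℕ) (c : SimplicialChain α) : Prop where
  mem_cycles : c ∈ cycles α d
  ne_zero : c ≠ 0
  eq_zero_or_eq : ∀ b ∈ cycles α d, b.support ⊆ c.support → b = 0 ∨ b = c

theorem mem_closure_isMinimalCycle (hc : c ∈ cycles α d) :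
    c ∈ AddSubmonoid.closure {b | IsMinimalCycle d b ∧ b.support ⊆ c.support} := by
  induction hn : c.support.card using Nat.strong_induction_on generalizing c with
  | _ n ih =>
  subst hn
  obtain rfl | hc0 := eq_or_ne c 0
  · exact zero_mem _
  by_cases hmin : IsMinimalCycle d c
  · exact AddSubmonoid.subset_closure ⟨hmin, subset_rfl⟩
  obtain ⟨b, hb, hbc, hb0, hbne⟩ : ∃ b ∈ cycles α d, b.support ⊆ c.support ∧ b ≠ 0 ∧ b ≠ c := by
    by_contra hcon
    refine hmin ⟨hc, hc0, fun b hb hbc => or_iff_not_imp_left.mpr fun hb0 => ?_⟩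
    by_contra hbne
    exact hcon ⟨b, hb, hbc, hb0, hbne⟩
  have of_ssubset : ∀ e ∈ cycles α d, e.support ⊂ c.support →
      e ∈ AddSubmonoid.closure {b | IsMinimalCycle d b ∧ b.support ⊆ c.support} := by
    intro e he hec
    refine AddSubmonoid.closure_mono ?_ (ih _ (Finset.card_lt_card hec) he rfl)
    exact fun b hb => ⟨hb.1, hb.2.trans hec.subset⟩
  obtain ⟨F, hF⟩ := Finsupp.support_nonempty_iff.mpr hb0
  have sub_ssubset : (c - b).support ⊂ c.support := by
    refine (Finset.ssubset_iff_of_subset ?_).mpr ⟨F, hbc hF, notMem_support_sub hF (hbc hF)⟩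
    exact Finsupp.support_sub.trans (Finset.union_subset subset_rfl hbc)
  have b_ssubset : b.support ⊂ c.support :=
    hbc.ssubset_of_not_subset fun hcb => hbne (eq_of_support_subset hbc hcb)
  have add_mem_closure := add_mem (of_ssubset b hb b_ssubset)
    (of_ssubset _ (sub_mem hc hb) sub_ssubset)
  rwa [add_sub_cancel] at add_mem_closure

theorem filter_mem_cycles (hc : c ∈ cycles α d) (Q : Finset α → Prop) [DecidablePred Q]
    (hQ : ∀ b, IsMinimalCycle d b → b.support ⊆ c.support →
      (∀ F ∈ b.support, Q F) ∨ ∀ F ∈ b.support, ¬ Q F) :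
    c.filter Q ∈ cycles α d := by
  suffices ∀ e ∈ AddSubmonoid.closure {b | IsMinimalCycle d b ∧ b.support ⊆ c.support},
      e.filter Q ∈ cycles α d from this c (mem_closure_isMinimalCycle hc)
  intro e he
  induction he using AddSubmonoid.closure_induction with
  | mem b hb =>
    obtain h | h := hQ b hb.1 hb.2
    · rw [(Finsupp.filter_eq_self_iff Q b).mpr fun F hF => h F (Finsupp.mem_support_iff.mpr hF)]
      exact hb.1.mem_cycles
    · rw [(Finsupp.filter_eq_zero_iff Q b).mpr fun F hQF =>
        Finsupp.notMem_support_iff.mp fun hF => h F hF hQF]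
      exact zero_mem _
  | zero => rw [Finsupp.filter_zero]; exact zero_mem _
  | add a b _ _ ha hb => rw [Finsupp.filter_add]; exact add_mem ha hb

end Boundary

section Map

variable {α β : Type*} [DecidableEq β] {c : SimplicialChain α} {f : α → β} {d : ℕ}

/-- The chain map induced by a map of vertices; simplices on which the map is not injective are
sent to `0`. -/
noncomputable def map (f : α → β) : SimplicialChain α →ₗ[ZMod 2] SimplicialChain β :=
  open Classical in
  Finsupp.linearCombination (ZMod 2) fun F =>
    if Set.InjOn f F then Finsupp.single (F.image f) 1 else 0

open Classical in
theorem map_single (f : α → β) (F : Finset α) : map f (Finsupp.single F 1) =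
    if Set.InjOn f F then Finsupp.single (F.image f) (1 : ZMod 2) else 0 := by
  rw [map, Finsupp.linearCombination_single, one_smul]

theorem map_apply (f : α → β) (c : SimplicialChain α) (G : Finset β)
    [DecidablePred fun F : Finset α => Set.InjOn f F ∧ F.image f = G] :
    map f c G = ∑ F ∈ c.support.filter fun F : Finset α => Set.InjOn f F ∧ F.image f = G, c F := by
  classical
  rw [map, Finsupp.linearCombination_apply, Finsupp.sum_apply, Finsupp.sum, Finset.sum_filter]
  refine Finset.sum_congr rfl fun F _ => ?_
  rw [Finsupp.smul_apply, smul_eq_mul]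
  by_cases hF : Set.InjOn f F <;> simp [hF, Finsupp.single_apply]

theorem exists_of_mem_support_map {G : Finset β} (hG : G ∈ (map f c).support) :
    ∃ F : Finset α, F ∈ c.support ∧ Set.InjOn f F ∧ F.image f = G := by
  classical
  rw [Finsupp.mem_support_iff, map_apply] at hG
  obtain ⟨F, hF, -⟩ := Finset.exists_ne_zero_of_sum_ne_zero hG
  exact ⟨F, Finset.mem_filter.mp hF⟩

theorem exists_ne_of_map_eq_zero (hc : map f c = 0) {F : Finset α} (hF : F ∈ c.support)
    (hf : Set.InjOn f F) :
    ∃ F' : Finset α, F' ∈ c.support ∧ F' ≠ F ∧ Set.InjOn f F' ∧ F'.image f = F.image f := by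
  classical
  have hsum := (map_apply f c (F.image f)).symm.trans (DFunLike.congr_fun hc _)
  obtain ⟨F', hF', hne, -⟩ := exists_mem_ne_of_sum_eq_zero hsum
    (Finset.mem_filter.mpr ⟨hF, hf, rfl⟩) (Finsupp.mem_support_iff.mp hF)
  exact ⟨F', (Finset.mem_filter.mp hF').1, hne, (Finset.mem_filter.mp hF').2⟩

theorem map_filter (f : α → β) (c : SimplicialChain α) {P : Finset α → Prop}
    [DecidablePred P] {Q : Finset β → Prop} [DecidablePred Q]
    (h : ∀ F : Finset α, F ∈ c.support → Set.InjOn f F → (P F ↔ Q (F.image f))) :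
    map f (c.filter P) = (map f c).filter Q := by
  classical
  ext G
  rw [map_apply, Finsupp.support_filter, Finset.filter_filter, Finsupp.filter_apply, map_apply]
  split_ifs with hG
  · refine Finset.sum_congr (Finset.filter_congr fun F hF => ?_) fun F hF => ?_
    · exact and_iff_right_of_imp fun hFG => (h F hF hFG.1).mpr (hFG.2 ▸ hG)
    · obtain ⟨hFc, hf, rfl⟩ := Finset.mem_filter.mp hF
      exact Finsupp.filter_apply_pos P c ((h F hFc hf).mpr hG)
  · refine Finset.sum_eq_zero fun F hF => ?_
    obtain ⟨hFc, hP, hf, rfl⟩ := Finset.mem_filter.mp hF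
    exact absurd ((h F hFc hf).mp hP) hG

variable [DecidableEq α]

theorem boundary_map (f : α → β) (c : SimplicialChain α) :
    boundary (map f c) = map f (boundary c) := by
  classical
  suffices boundary ∘ₗ map f = map f ∘ₗ boundary from LinearMap.congr_fun this c
  ext1 F
  refine LinearMap.ext_ring ?_
  change boundary (map f (Finsupp.single F 1)) = map f (boundary (Finsupp.single F 1))
  simp only [boundary_single, map_sum, map_single]
  split_ifs with hf
  · rw [boundary_single, Finset.sum_image hf]
    refine Finset.sum_congr rfl fun x hx => ?_
    rw [if_pos (hf.mono (Finset.coe_subset.mpr (Finset.erase_subset x F)))]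
    rw [Finset.erase_eq, Finset.erase_eq, ← Finset.image_singleton,
      Finset.image_sdiff_of_injOn hf (Finset.singleton_subset_iff.mpr hx)]
  · rw [map_zero]
    obtain ⟨a, ha, b, hb, hfab, hab⟩ : ∃ a ∈ F, ∃ b ∈ F, f a = f b ∧ a ≠ b := by
      simpa [Set.InjOn] using hf
    rw [← Finset.add_sum_erase _ _ ha,
      ← Finset.add_sum_erase _ _ (Finset.mem_erase.mpr ⟨hab.symm, hb⟩)]
    have others : ∀ x ∈ (F.erase a).erase b, ¬ Set.InjOn f (F.erase x : Set α) := by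
      intro x hx hinj
      simp only [Finset.mem_erase] at hx
      exact hab (hinj (by simp [ha, hx.2.1.symm]) (by simp [hb, hx.1.symm]) hfab)
    rw [Finset.sum_eq_zero fun x hx => if_neg (others x hx), add_zero]
    have image_erase : ∀ x ∈ F, ∀ y ∈ F, f x = f y → x ≠ y → (F.erase x).image f = F.image f := by
      intro x hx y hy hfxy hxy
      conv_rhs => rw [← Finset.insert_erase hx, Finset.image_insert, hfxy]
      exact (Finset.insert_eq_self.mpr
        (Finset.mem_image_of_mem f (Finset.mem_erase.mpr ⟨hxy.symm, hy⟩))).symm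
    have image_eq : (F.erase a).image f = (F.erase b).image f :=
      (image_erase a ha b hb hfab hab).trans (image_erase b hb a ha hfab.symm hab.symm).symm
    have injOn_iff : Set.InjOn f (F.erase a) ↔ Set.InjOn f (F.erase b) := by
      rw [← Finset.card_image_iff, ← Finset.card_image_iff, image_eq,
        Finset.card_erase_of_mem ha, Finset.card_erase_of_mem hb]
    simp only [injOn_iff, image_eq]
    split_ifs
    · rw [← Finsupp.single_add]
      exact (Finsupp.single_zero _).symm
    · exact (add_zero 0).symm

theorem map_mem_cycles (hc : c ∈ cycles α d) : map f c ∈ cycles β d := by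
  refine mem_cycles.mpr ⟨fun G hG => ?_, by rw [boundary_map, hc.2, map_zero]⟩
  obtain ⟨F, hF, hf, rfl⟩ := exists_of_mem_support_map hG
  rw [Finset.card_image_of_injOn hf]
  exact hc.1 hF

end Map

/-! ### Fogelsanger's theorem -/

section Graph

variable {α : Type*} {c : SimplicialChain α}

/-- The graph of a chain: two vertices are adjacent when they lie in a common simplex. -/
def graph (c : SimplicialChain α) : SimpleGraph α where
  Adj u v := u ≠ v ∧ ∃ F ∈ c.support, u ∈ F ∧ v ∈ F
  symm := ⟨fun _ _ ⟨huv, F, hF, hu, hv⟩ => ⟨huv.symm, F, hF, hv, hu⟩⟩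
  loopless := ⟨fun _ h => h.1 rfl⟩

/-- The vertices of the simplices of a chain. -/
def vertices [DecidableEq α] (c : SimplicialChain α) : Finset α :=
  c.support.sup id

variable [DecidableEq α]

theorem mem_vertices {w : α} : w ∈ c.vertices ↔ ∃ F ∈ c.support, w ∈ F := by
  simp only [vertices, Finset.mem_sup, id]

theorem subset_vertices {F : Finset α} (hF : F ∈ c.support) : F ⊆ c.vertices :=
  fun _ hw => mem_vertices.mpr ⟨F, hF, hw⟩

theorem support_graph_subset : c.graph.support ⊆ c.vertices := by
  rintro x ⟨y, -, F, hF, hx, -⟩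
  exact subset_vertices hF hx

end Graph

section Contraction

variable {α : Type*} [DecidableEq α] {c : SimplicialChain α} {u v : α} {F : Finset α}

/-- The vertex map contracting the edge `uv` to `v`. -/
def contract (u v : α) : α → α := Function.update id u v

theorem contract_self (u v : α) : contract u v u = v :=
  Function.update_self ..

theorem contract_of_ne {w : α} (hw : w ≠ u) : contract u v w = w :=
  Function.update_of_ne hw ..

theorem contract_right (u v : α) : contract u v v = v := by
  obtain rfl | h := eq_or_ne v u
  · exact contract_self v v
  · exact contract_of_ne h

theorem eq_or_of_contract_eq {x y : α} (h : contract u v x = contract u v y) :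
    x = y ∨ x = u ∧ y = v ∨ x = v ∧ y = u := by
  by_cases hx : x = u <;> by_cases hy : y = u <;> simp_all [contract]

theorem injOn_contract_iff (huv : u ≠ v) : Set.InjOn (contract u v) F ↔ ¬ (u ∈ F ∧ v ∈ F) := by
  constructor
  · rintro h ⟨hu, hv⟩
    exact huv (h hu hv ((contract_self u v).trans (contract_right u v).symm))
  · intro h x hx y hy hxy
    obtain rfl | ⟨rfl, rfl⟩ | ⟨rfl, rfl⟩ := eq_or_of_contract_eq hxy
    · rfl
    · exact absurd ⟨hx, hy⟩ h
    · exact absurd ⟨hy, hx⟩ h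

theorem image_contract_of_notMem (hu : u ∉ F) : F.image (contract u v) = F :=
  (Finset.image_congr fun x hx => contract_of_ne fun h : x = u => hu (h ▸ hx)).trans Finset.image_id

theorem notMem_image_contract (huv : u ≠ v) : u ∉ F.image (contract u v) := by
  rintro hu
  obtain ⟨x, -, hx⟩ := Finset.mem_image.mp hu
  obtain rfl | hxu := eq_or_ne x u
  · exact huv (hx.symm.trans (contract_self x v))
  · exact hxu ((contract_of_ne hxu).symm.trans hx)

/-! A boundary that dies in the contraction of `uv` consists of pairs `R`, `R'` which are exchanged
by swapping `u` for `v` and of simplices on `uv`; the latter cannot form a cycle by themselves. -/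

theorem boundary_eq_zero_of_map_contract (huv : u ≠ v) (h : map (contract u v) (boundary c) = 0)
    (hR : ∀ R, u ∈ R → v ∉ R → boundary c R = 0) : boundary c = 0 := by
  have mem_of_mem_support : ∀ R ∈ (boundary c).support, u ∈ R ∧ v ∈ R := by
    intro R hRc
    by_contra hcon
    have notMem_left : ∀ R' ∈ (boundary c).support, Set.InjOn (contract u v) R' → u ∉ R' :=
      fun R' hR' hinj hu => Finsupp.mem_support_iff.mp hR'
        (hR R' hu fun hv => (injOn_contract_iff huv).mp hinj ⟨hu, hv⟩)
    have hinj := (injOn_contract_iff huv).mpr hcon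
    obtain ⟨R', hR'c, hne, hinj', himage⟩ := exists_ne_of_map_eq_zero h hRc hinj
    rw [image_contract_of_notMem (notMem_left R' hR'c hinj'),
      image_contract_of_notMem (notMem_left R hRc hinj)] at himage
    exact hne himage
  ext R
  by_contra hne
  have hRc := Finsupp.mem_support_iff.mpr hne
  have happly := boundary_apply_of_forall_mem (fun R hR => (mem_of_mem_support R hR).2)
    (Finset.notMem_erase v R)
  rw [boundary_boundary, Finset.insert_erase (mem_of_mem_support R hRc).2] at happly
  exact hne happly.symm

end Contraction

section Lift

variable {α : Type*} [DecidableEq α] {c T : SimplicialChain α} {u v : α} {d : ℕ} {F : Finset α}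

open Classical in
/-- The simplices of `c` which the contraction of `uv` sends bijectively to simplices of `T`. -/
noncomputable def liftOff (u v : α) (c T : SimplicialChain α) : SimplicialChain α :=
  c.filter fun F => Set.InjOn (contract u v) F ∧ F.image (contract u v) ∈ T.support

open Classical in
/-- The cone with apex `v` over the part of the boundary of `liftOff u v c T` that contains `u` but
not `v`. Its simplices need not belong to `c`. -/
noncomputable def liftOn (u v : α) (c T : SimplicialChain α) : SimplicialChain α :=
  ((boundary (liftOff u v c T)).filter fun R => u ∈ R ∧ v ∉ R).mapDomain (insert v)

/-- The lift to `c` of a cycle `T` supported on the contraction of `uv` in `c`. -/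
noncomputable def lift (u v : α) (c T : SimplicialChain α) : SimplicialChain α :=
  liftOff u v c T + liftOn u v c T

theorem mem_support_liftOff : F ∈ (liftOff u v c T).support ↔
    F ∈ c.support ∧ Set.InjOn (contract u v) F ∧ F.image (contract u v) ∈ T.support := by
  rw [liftOff, Finsupp.support_filter, Finset.mem_filter]

theorem exists_of_mem_support_liftOn (hF : F ∈ (liftOn u v c T).support) :
    ∃ R ∈ (boundary (liftOff u v c T)).support, u ∈ R ∧ v ∉ R ∧ insert v R = F := by
  classical
  obtain ⟨R, hR, rfl⟩ := Finset.mem_image.mp (Finsupp.mapDomain_support hF)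
  rw [Finsupp.support_filter, Finset.mem_filter] at hR
  exact ⟨R, hR.1, hR.2.1, hR.2.2, rfl⟩

theorem mem_support_lift_iff (huv : u ≠ v) (hF : ¬ (u ∈ F ∧ v ∈ F)) :
    F ∈ (lift u v c T).support ↔ F ∈ c.support ∧ F.image (contract u v) ∈ T.support := by
  classical
  rw [Finsupp.mem_support_iff, lift, Finsupp.add_apply, add_eq_left.mpr, ← Finsupp.mem_support_iff,
    mem_support_liftOff, and_iff_right ((injOn_contract_iff huv).mpr hF)]
  by_contra hmem
  obtain ⟨R, -, hu, -, rfl⟩ := exists_of_mem_support_liftOn (Finsupp.mem_support_iff.mpr hmem)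
  exact hF ⟨Finset.mem_insert_of_mem hu, Finset.mem_insert_self v R⟩

theorem exists_insert_of_mem_support_lift (hF : F ∈ (lift u v c T).support) (hu : u ∈ F)
    (hv : v ∈ F) : ∃ x ∉ F.erase v, insert x (F.erase v) ∈ (liftOff u v c T).support := by
  classical
  obtain hF | hF := Finset.mem_union.mp (Finsupp.support_add hF)
  · exact ⟨v, Finset.notMem_erase v F, by rwa [Finset.insert_erase hv]⟩
  · obtain ⟨R, hR, -, hvR, rfl⟩ := exists_of_mem_support_liftOn hF
    rw [Finset.erase_insert hvR]
    exact exists_insert_mem_support_of_boundary hR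

theorem map_lift (huv : u ≠ v) (hT : T.support ⊆ (map (contract u v) c).support) :
    map (contract u v) (lift u v c T) = T := by
  classical
  rw [lift, map_add, liftOff, map_filter _ _ fun F _ hF => and_iff_right hF,
    eq_filter_of_support_subset hT, add_eq_left]
  ext G
  by_contra hG
  obtain ⟨F, hF, hinj, -⟩ := exists_of_mem_support_map (Finsupp.mem_support_iff.mpr hG)
  obtain ⟨R, -, hu, -, rfl⟩ := exists_of_mem_support_liftOn hF
  exact (injOn_contract_iff huv).mp hinj ⟨Finset.mem_insert_of_mem hu, Finset.mem_insert_self v R⟩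

theorem liftOn_apply_insert {R : Finset α} (hu : u ∈ R) (hv : v ∉ R) :
    liftOn u v c T (insert v R) = boundary (liftOff u v c T) R := by
  classical
  rw [liftOn, Finsupp.mapDomain_apply' {R | v ∉ R} _ ?_ ?_ hv,
    Finsupp.filter_apply_pos _ _ ⟨hu, hv⟩]
  · intro R hR
    rw [Finset.mem_coe, Finsupp.support_filter, Finset.mem_filter] at hR
    exact hR.2.2
  · intro R hR R' hR' h
    rw [← Finset.erase_insert hR, h, Finset.erase_insert hR']

theorem boundary_lift_apply {R : Finset α} (hu : u ∈ R) (hv : v ∉ R) :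
    boundary (lift u v c T) R = 0 := by
  have mem_of_mem_liftOn : ∀ F ∈ (liftOn u v c T).support, v ∈ F := by
    intro F hF
    obtain ⟨R, -, -, -, rfl⟩ := exists_of_mem_support_liftOn hF
    exact Finset.mem_insert_self v R
  rw [lift, map_add, Finsupp.add_apply, boundary_apply_of_forall_mem mem_of_mem_liftOn hv,
    liftOn_apply_insert hu hv, CharTwo.add_self_eq_zero]

theorem lift_mem_cycles (huv : u ≠ v) (hc : c ∈ cycles α d) (hT : boundary T = 0)
    (hTc : T.support ⊆ (map (contract u v) c).support) : lift u v c T ∈ cycles α d := by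
  refine mem_cycles.mpr ⟨fun F hF => ?_, boundary_eq_zero_of_map_contract huv ?_ fun R =>
    boundary_lift_apply⟩
  · by_cases huvF : u ∈ F ∧ v ∈ F
    · obtain ⟨x, hx, hxF⟩ := exists_insert_of_mem_support_lift hF huvF.1 huvF.2
      rw [← hc.1 (mem_support_liftOff.mp hxF).1, Finset.card_insert_of_notMem hx,
        Finset.card_erase_add_one huvF.2]
    · exact hc.1 ((mem_support_lift_iff huv huvF).mp hF).1
  · rw [← boundary_map, map_lift huv hTc, hT]

theorem graph_lift_le (h : c.graph.Adj u v) (hlift : boundary (lift u v c T) = 0) :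
    (lift u v c T).graph ≤ c.graph := by
  rintro x y ⟨hxy, F, hF, hx, hy⟩
  have mem_of_not : ∀ F ∈ (lift u v c T).support, ¬ (u ∈ F ∧ v ∈ F) → F ∈ c.support :=
    fun F hF huvF => ((mem_support_lift_iff h.1 huvF).mp hF).1
  by_cases huvF : u ∈ F ∧ v ∈ F
  · obtain hv | hu | h' : (x ≠ v ∧ y ≠ v) ∨ (x ≠ u ∧ y ≠ u) ∨ c.graph.Adj x y := by
      have := h.symm
      have := h.1
      grind
    · obtain ⟨z, -, hz⟩ := exists_insert_of_mem_support_lift hF huvF.1 huvF.2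
      exact ⟨hxy, _, (mem_support_liftOff.mp hz).1,
        Finset.mem_insert_of_mem (Finset.mem_erase.mpr ⟨hv.1, hx⟩),
        Finset.mem_insert_of_mem (Finset.mem_erase.mpr ⟨hv.2, hy⟩)⟩
    · obtain ⟨z, hzF, hz⟩ := exists_insert_erase_mem_support hlift hF huvF.1
      exact ⟨hxy, _, mem_of_not _ hz (by grind),
        Finset.mem_insert_of_mem (Finset.mem_erase.mpr ⟨hu.1, hx⟩),
        Finset.mem_insert_of_mem (Finset.mem_erase.mpr ⟨hu.2, hy⟩)⟩
    · exact h'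
  · exact ⟨hxy, F, mem_of_not F hF huvF, hx, hy⟩

theorem contract_mem_vertices (huv : u ≠ v) {w : α} (hw : w ∈ (lift u v c T).vertices) :
    contract u v w ∈ T.vertices := by
  obtain ⟨F, hF, hwF⟩ := mem_vertices.mp hw
  by_cases huvF : u ∈ F ∧ v ∈ F
  · obtain ⟨z, -, hz⟩ := exists_insert_of_mem_support_lift hF huvF.1 huvF.2
    refine subset_vertices (mem_support_liftOff.mp hz).2.2 ?_
    obtain rfl | hwv := eq_or_ne w v
    · refine Finset.mem_image.mpr ⟨u, ?_, (contract_self u w).trans (contract_right u w).symm⟩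
      exact Finset.mem_insert_of_mem (Finset.mem_erase.mpr ⟨huv, huvF.1⟩)
    · exact Finset.mem_image_of_mem _ (Finset.mem_insert_of_mem (Finset.mem_erase.mpr ⟨hwv, hwF⟩))
  · exact subset_vertices ((mem_support_lift_iff huv huvF).mp hF).2
      (Finset.mem_image_of_mem _ hwF)

theorem IsMinimalCycle.exists_mem_support_lift (hc : IsMinimalCycle d c) (h : c.graph.Adj u v)
    (hT : boundary T = 0) (hT0 : T ≠ 0) (hTc : T.support ⊆ (map (contract u v) c).support) :
    ∃ F ∈ (lift u v c T).support, u ∈ F ∧ v ∈ F := by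
  by_contra! hcon
  have lift_subset : (lift u v c T).support ⊆ c.support := fun F hF =>
    ((mem_support_lift_iff h.1 fun huvF => hcon F hF huvF.1 huvF.2).mp hF).1
  have lift_mem := lift_mem_cycles h.1 hc.mem_cycles hT hTc
  obtain lift_eq | lift_eq := hc.eq_zero_or_eq _ lift_mem lift_subset
  · exact hT0 (by rw [← map_lift h.1 hTc, lift_eq, map_zero])
  · obtain ⟨-, F, hF, hu, hv⟩ := h
    exact hcon F (lift_eq.symm ▸ hF) hu hv

end Lift

section Rigidity

open Placement

variable {α : Type*} [DecidableEq α] {b c T : SimplicialChain α} {u v : α} {d : ℕ}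
  {p : Placement α d} {m : α → Fin d → ℝ}

theorem eq_of_isMotion_comp_contract (hp : p.IsGeneric) (hd : 3 ≤ d) (hb : b ∈ cycles α d)
    (huv : u ≠ v) {F : Finset α} (hF : F ∈ b.support) (hu : u ∈ F) (hv : v ∈ F)
    (hm : IsMotion (p ∘ contract u v) b.graph m) : m u = m v := by
  have hcard : F.card = d := hb.1 hF
  have dotProduct_eq : ∀ w ≠ u, b.graph.Adj u w → v = w ∨ b.graph.Adj v w →
      (m u - m v) ⬝ᵥ p w = 0 := by
    intro w hwu huw hvw
    have huw := hm huw
    simp only [Function.comp_apply, contract_self, contract_of_ne hwu] at huw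
    rw [sub_dotProduct, huw, sub_eq_zero]
    obtain rfl | hvw := hvw
    · rfl
    · have hvw := hm hvw
      simp only [Function.comp_apply, contract_right, contract_of_ne hwu] at hvw
      exact hvw.symm
  obtain ⟨y, hy⟩ : ((F.erase u).erase v).Nonempty := by
    rw [← Finset.card_pos, Finset.card_erase_of_mem (Finset.mem_erase.mpr ⟨huv.symm, hv⟩),
      Finset.card_erase_of_mem hu]
    omega
  simp only [Finset.mem_erase] at hy
  obtain ⟨hyv, hyu, hyF⟩ := hy
  obtain ⟨x, hxF, hx⟩ := exists_insert_erase_mem_support hb.2 hF hyF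
  refine sub_eq_zero.mp (hp.eq_zero_of_dotProduct_eq_zero (F := insert x (F.erase u)) ?_ ?_)
  · rw [Finset.card_insert_of_notMem fun h => hxF (Finset.mem_of_mem_erase h),
      Finset.card_erase_add_one hu, hcard]
  · intro w hw
    obtain rfl | hw := Finset.mem_insert.mp hw
    · refine dotProduct_eq w (fun h => hxF (h ▸ hu)) ⟨fun h => hxF (h ▸ hu), _, hx, ?_⟩
        (Or.inr ⟨fun h => hxF (h ▸ hv), _, hx, ?_⟩) <;> grind
    · obtain ⟨hwu, hwF⟩ := Finset.mem_erase.mp hw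
      refine dotProduct_eq w hwu ⟨hwu.symm, F, hF, hu, hwF⟩ ?_
      exact or_iff_not_imp_left.mpr fun hvw => ⟨hvw, F, hF, hv, hwF⟩

theorem isRigidOn_lift_of_isRigidOn_map (hp : p.IsGeneric) (hd : 3 ≤ d) (hc : IsMinimalCycle d c)
    (h : c.graph.Adj u v) (hT : boundary T = 0) (hT0 : T ≠ 0)
    (hTc : T.support ⊆ (map (contract u v) c).support) (hrigid : p.IsRigidOn T.graph T.vertices) :
    p.IsRigidOn c.graph (lift u v c T).vertices := by
  have lift_mem := lift_mem_cycles h.1 hc.mem_cycles hT hTc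
  obtain ⟨F, hF, hu, hv⟩ := hc.exists_mem_support_lift h hT hT0 hTc
  have hcard : d ≤ (lift u v c T).vertices.card :=
    (lift_mem.1 hF).symm.trans_le (Finset.card_le_card (subset_vertices hF))
  refine (hp.isRigidOn_of_isRigidOn (q := p ∘ contract u v) support_graph_subset hcard ?_).mono
    (graph_lift_le h lift_mem.2)
  intro m hm
  have m_contract : ∀ w, m (contract u v w) = m w := by
    intro w
    obtain rfl | hw := eq_or_ne w u
    · rw [contract_self]
      exact (eq_of_isMotion_comp_contract hp hd lift_mem h.1 hF hu hv hm).symm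
    · rw [contract_of_ne hw]
  have motion_T : p.IsMotion T.graph m := by
    rintro x y ⟨hxy, G, hG, hx, hy⟩
    rw [← map_lift h.1 hTc] at hG
    obtain ⟨F', hF', -, rfl⟩ := exists_of_mem_support_map hG
    obtain ⟨x', hx', rfl⟩ := Finset.mem_image.mp hx
    obtain ⟨y', hy', rfl⟩ := Finset.mem_image.mp hy
    rw [m_contract, m_contract]
    exact hm ⟨fun hxy' => hxy (congrArg _ hxy'), F', hF', hx', hy'⟩
  obtain ⟨A, hA, hAm⟩ := hrigid motion_T
  exact ⟨A, hA, fun w hw => (m_contract w).symm.trans (hAm _ (contract_mem_vertices h.1 hw))⟩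

theorem mulVec_eq_of_image_contract_eq (hp : p.IsGeneric) (hm : p.IsMotion c.graph m)
    (h : c.graph.Adj u v) {F F' : Finset α} (hF : F ∈ c.support) (hF' : F' ∈ c.support)
    (hcard : d ≤ F.card) (himage : F.image (contract u v) = F'.image (contract u v))
    {A : Matrix (Fin d) (Fin d) ℝ} (hA : ∀ w ∈ F, m w = A.mulVec (p w)) :
    ∀ w ∈ F', m w = A.mulVec (p w) := by
  have mem_edge : ∀ G G' : Finset α, G.image (contract u v) = G'.image (contract u v) →
      ∀ x ∈ G, x ∉ G' → x = u ∨ x = v := by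
    intro G G' hGG' x hx hxG'
    obtain ⟨y, hy, hyx⟩ := Finset.mem_image.mp (hGG' ▸ Finset.mem_image_of_mem _ hx)
    have := eq_or_of_contract_eq hyx
    grind
  have clique : c.graph.IsClique (F ∪ F' : Finset α) := by
    intro x hx y hy hxy
    have := mem_edge F F' himage
    have := mem_edge F' F himage.symm
    have := h.symm
    have : (∃ G ∈ c.support, x ∈ G ∧ y ∈ G) → c.graph.Adj x y := fun hG => ⟨hxy, hG⟩
    simp only [Finset.coe_union, Set.mem_union, Finset.mem_coe] at hx hy
    grind
  obtain ⟨B, -, hB⟩ := hp.isRigidOn_of_isClique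
    (hcard.trans (Finset.card_le_card Finset.subset_union_left)) clique hm
  obtain rfl : A = B := hp.matrix_ext hcard fun w hw =>
    (hA w hw).symm.trans (hB w (Finset.mem_coe.mpr (Finset.mem_union_left F' hw)))
  exact fun w hw => hB w (Finset.mem_coe.mpr (Finset.mem_union_right F hw))

section Matrices

variable {S : Finset α → Matrix (Fin d) (Fin d) ℝ}

theorem matrix_eq_of_forall_mulVec_eq (hp : p.IsGeneric) (hc : c ∈ cycles α d)
    (hS : ∀ F ∈ c.support, ∀ w ∈ F, m w = (S F).mulVec (p w)) {F : Finset α} (hF : F ∈ c.support)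
    {A : Matrix (Fin d) (Fin d) ℝ} (hA : ∀ w ∈ F, m w = A.mulVec (p w)) : S F = A :=
  hp.matrix_ext (hc.1 hF).ge fun w hw => (hS F hF w hw).symm.trans (hA w hw)

open Classical in
theorem map_filter_matrix_mem_cycles (hp : p.IsGeneric) (hc : c ∈ cycles α d)
    (h : c.graph.Adj u v) (hm : p.IsMotion c.graph m)
    (hS : ∀ F ∈ c.support, ∀ w ∈ F, m w = (S F).mulVec (p w))
    (hlift : ∀ T, IsMinimalCycle d T → T.support ⊆ (map (contract u v) c).support →
      p.IsRigidOn c.graph (lift u v c T).vertices) (A : Matrix (Fin d) (Fin d) ℝ) :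
    map (contract u v) (c.filter (S · = A)) ∈ cycles α d := by
  let Q (G : Finset α) : Prop := ∃ F : Finset α, F ∈ c.support ∧ Set.InjOn (contract u v) F ∧
    F.image (contract u v) = G ∧ S F = A
  rw [map_filter (Q := Q)]
  · refine filter_mem_cycles (map_mem_cycles hc) Q fun T hT hTc => ?_
    obtain ⟨B, -, hB⟩ := hlift T hT hTc hm
    have matrix_eq : ∀ F : Finset α, F ∈ c.support → Set.InjOn (contract u v) F →
        F.image (contract u v) ∈ T.support → S F = B := fun F hF hinj hFT =>
      matrix_eq_of_forall_mulVec_eq hp hc hS hF fun w hw => hB w <| subset_vertices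
        ((mem_support_lift_iff h.1 ((injOn_contract_iff h.1).mp hinj)).mpr ⟨hF, hFT⟩) hw
    obtain rfl | hBA := eq_or_ne B A
    · refine Or.inl fun G hG => ?_
      obtain ⟨F, hF, hinj, rfl⟩ := exists_of_mem_support_map (hTc hG)
      exact ⟨F, hF, hinj, rfl, matrix_eq F hF hinj hG⟩
    · refine Or.inr ?_
      rintro G hG ⟨F, hF, hinj, rfl, rfl⟩
      exact hBA (matrix_eq F hF hinj hG).symm
  · refine fun F hF hinj => ⟨fun hSF => ⟨F, hF, hinj, rfl, hSF⟩, ?_⟩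
    rintro ⟨F', hF', -, himage, rfl⟩
    exact matrix_eq_of_forall_mulVec_eq hp hc hS hF
      (mulVec_eq_of_image_contract_eq hp hm h hF' hF (hc.1 hF').ge himage (hS F' hF'))

open Classical in
theorem mulVec_eq_of_boundary_filter_ne_zero (huv : u ≠ v)
    (hS : ∀ F ∈ c.support, ∀ w ∈ F, m w = (S F).mulVec (p w)) {A : Matrix (Fin d) (Fin d) ℝ}
    (hA : map (contract u v) (boundary (c.filter (S · = A))) = 0) {R : Finset α}
    (hv : v ∉ R) (hR : boundary (c.filter (S · = A)) R ≠ 0) :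
    ∀ w ∈ insert v R, m w = A.mulVec (p w) := by
  have on_support : ∀ R' ∈ (boundary (c.filter (S · = A))).support,
      ∀ w ∈ R', m w = A.mulVec (p w) := by
    intro R' hR' w hw
    obtain ⟨x, -, hx⟩ := exists_insert_mem_support_of_boundary hR'
    rw [Finsupp.support_filter, Finset.mem_filter] at hx
    rw [← hx.2]
    exact hS _ hx.1 w (Finset.mem_insert_of_mem hw)
  have hRA := Finsupp.mem_support_iff.mpr hR
  obtain ⟨R', hR'A, hne, hinj, himage⟩ := exists_ne_of_map_eq_zero hA hRA
    ((injOn_contract_iff huv).mpr fun h => hv h.2)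
  have eq_of_mem : ∀ x ∈ R, ∀ y ∈ R', contract u v x = contract u v y → v ∉ R' → x = y := by
    intro x hx y hy hxy
    have := eq_or_of_contract_eq hxy
    grind
  have hv' : v ∈ R' := by
    by_contra hv'
    refine hne (Finset.ext fun x => ⟨fun hx => ?_, fun hx => ?_⟩)
    · obtain ⟨y, hy, hyx⟩ := Finset.mem_image.mp (himage ▸ Finset.mem_image_of_mem _ hx)
      exact eq_of_mem y hy x hx hyx hv' ▸ hy
    · obtain ⟨y, hy, hyx⟩ := Finset.mem_image.mp (himage.symm ▸ Finset.mem_image_of_mem _ hx)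
      exact eq_of_mem x hx y hy hyx.symm hv' ▸ hy
  intro w hw
  obtain rfl | hw := Finset.mem_insert.mp hw
  · exact on_support R' hR'A w hv'
  · exact on_support R hRA w hw

open Classical in
theorem filter_matrix_mem_cycles (hp : p.IsGeneric) (hc : c ∈ cycles α d) (huv : u ≠ v)
    (hS : ∀ F ∈ c.support, ∀ w ∈ F, m w = (S F).mulVec (p w))
    (hmap : ∀ A, map (contract u v) (c.filter (S · = A)) ∈ cycles α d)
    (A : Matrix (Fin d) (Fin d) ℝ) : c.filter (S · = A) ∈ cycles α d := by
  have map_boundary : ∀ A, map (contract u v) (boundary (c.filter (S · = A))) = 0 := by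
    intro A
    rw [← boundary_map]
    exact (hmap A).2
  refine mem_cycles.mpr ⟨fun F hF => hc.1 ?_, boundary_eq_zero_of_map_contract huv
    (map_boundary A) fun R _ hv => ?_⟩
  · rw [Finsupp.support_filter] at hF
    exact Finset.mem_of_mem_filter F hF
  by_contra hR
  obtain ⟨x, hx, hxR⟩ := exists_insert_mem_support_of_boundary (Finsupp.mem_support_iff.mpr hR)
  rw [Finsupp.support_filter, Finset.mem_filter] at hxR
  have hcard : d ≤ (insert v R).card := by
    rw [← hc.1 hxR.1, Finset.card_insert_of_notMem hx, Finset.card_insert_of_notMem hv]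
  have hA := mulVec_eq_of_boundary_filter_ne_zero huv hS (map_boundary A) hv hR
  have others : ∀ B ∈ c.support.image S, B ≠ A → boundary (c.filter (S · = B)) R = 0 := by
    intro B _ hBA
    by_contra hB
    refine hBA (hp.matrix_ext hcard fun w hw => ?_)
    exact (mulVec_eq_of_boundary_filter_ne_zero huv hS (map_boundary B) hv hB w hw).symm.trans
      (hA w hw)
  have boundary_eq : boundary c R = boundary (c.filter (S · = A)) R := by
    conv_lhs => rw [eq_sum_filter c S, map_sum, Finsupp.finsetSum_apply]
    exact Finset.sum_eq_single_of_mem A (hxR.2 ▸ Finset.mem_image_of_mem S hxR.1) others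
  exact hR (boundary_eq.symm.trans (DFunLike.congr_fun hc.2 R))

end Matrices

theorem vertices_ssubset_of_support_subset_map (h : c.graph.Adj u v)
    (hTc : T.support ⊆ (map (contract u v) c).support) : T.vertices ⊂ c.vertices := by
  have subset_image : ∀ G ∈ T.support, ∃ F ∈ c.support, F.image (contract u v) = G := by
    intro G hG
    obtain ⟨F, hF, -, hFG⟩ := exists_of_mem_support_map (hTc hG)
    exact ⟨F, hF, hFG⟩
  obtain ⟨huv, F0, hF0, hu, hv⟩ := h
  refine (Finset.ssubset_iff_of_subset fun w hw => ?_).mpr ⟨u, subset_vertices hF0 hu, fun hu => ?_⟩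
  · obtain ⟨G, hG, hwG⟩ := mem_vertices.mp hw
    obtain ⟨F, hF, rfl⟩ := subset_image G hG
    obtain ⟨x, hx, rfl⟩ := Finset.mem_image.mp hwG
    obtain rfl | hxu := eq_or_ne x u
    · rw [contract_self]
      exact subset_vertices hF0 hv
    · rw [contract_of_ne hxu]
      exact subset_vertices hF hx
  · obtain ⟨G, hG, huG⟩ := mem_vertices.mp hu
    obtain ⟨F, -, rfl⟩ := subset_image G hG
    exact notMem_image_contract huv huG

open Classical in
/-- Fogelsanger's theorem. Contracting an edge `uv` decomposes a minimal cycle into minimal cycles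
which are rigid by induction, and so are their lifts. Sorting the simplices by the matrix which a
given motion induces on them hence gives cycles in the contraction, and the mod 2 cancellation
across `uv` forces them to be cycles already before it; by minimality there is only one. -/
theorem IsMinimalCycle.isRigidOn_graph (hp : p.IsGeneric) (hd : 3 ≤ d) (hc : IsMinimalCycle d c) :
    p.IsRigidOn c.graph c.vertices := by
  induction hn : c.vertices.card using Nat.strong_induction_on generalizing c with
  | _ n ih =>
  subst hn
  obtain ⟨F0, hF0⟩ := Finsupp.support_nonempty_iff.mpr hc.ne_zero
  have hcard : ∀ F ∈ c.support, F.card = d := fun F hF => hc.mem_cycles.1 hF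
  obtain ⟨u, hu, v, hv, huv⟩ : ∃ u ∈ F0, ∃ v ∈ F0, u ≠ v :=
    Finset.one_lt_card.mp (by have := hcard F0 hF0; omega)
  have hadj : c.graph.Adj u v := ⟨huv, F0, hF0, hu, hv⟩
  intro m hm
  have exists_matrix : ∀ F, ∃ A : Matrix (Fin d) (Fin d) ℝ, F ∈ c.support →
      A.IsSymm ∧ ∀ w ∈ F, m w = A.mulVec (p w) := by
    intro F
    by_cases hF : F ∈ c.support
    · have clique : c.graph.IsClique F := fun x hx y hy hxy => ⟨hxy, F, hF, hx, hy⟩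
      obtain ⟨A, hA, hAm⟩ := hp.isRigidOn_of_isClique (hcard F hF).ge clique hm
      exact ⟨A, fun _ => ⟨hA, hAm⟩⟩
    · exact ⟨0, fun h => absurd h hF⟩
  choose S hS using exists_matrix
  have hlift : ∀ T, IsMinimalCycle d T → T.support ⊆ (map (contract u v) c).support →
      p.IsRigidOn c.graph (lift u v c T).vertices := fun T hT hTc =>
    isRigidOn_lift_of_isRigidOn_map hp hd hc hadj hT.mem_cycles.2 hT.ne_zero hTc
      (ih _ (Finset.card_lt_card (vertices_ssubset_of_support_subset_map hadj hTc)) hT rfl)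
  have filter_mem : c.filter (S · = S F0) ∈ cycles α d :=
    filter_matrix_mem_cycles hp hc.mem_cycles huv (fun F hF => (hS F hF).2)
      (map_filter_matrix_mem_cycles hp hc.mem_cycles hadj hm (fun F hF => (hS F hF).2) hlift) _
  have filter_eq : c.filter (S · = S F0) = c := by
    refine (hc.eq_zero_or_eq _ filter_mem ?_).resolve_left fun h => ?_
    · rw [Finsupp.support_filter]
      exact Finset.filter_subset _ _
    · exact (Finsupp.filter_eq_zero_iff _ c |>.mp h F0 rfl) |> Finsupp.mem_support_iff.mp hF0
  refine ⟨S F0, (hS F0 hF0).1, fun w hw => ?_⟩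
  obtain ⟨F, hF, hwF⟩ := mem_vertices.mp hw
  rw [← (Finsupp.filter_eq_self_iff _ c).mp filter_eq F (Finsupp.mem_support_iff.mp hF)]
  exact (hS F hF).2 w hwF

end Rigidity

end SimplicialChain

namespace SComplex

/-! ### Faces and facets -/

section Faces

variable {K : SComplex} {s t : Finset ℕ} {a b v w : ℕ}

theorem nonempty_of_mem_faces (hs : s ∈ K.faces) : s.Nonempty :=
  Finset.nonempty_iff_ne_empty.mpr fun h => K.not_empty_mem (h ▸ hs)

theorem mem_faces_of_subset (hs : s ∈ K.faces) (hts : t ⊆ s) (ht : t.Nonempty) : t ∈ K.faces :=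
  K.down_closed s hs t hts ht.ne_empty

theorem pair_mem_faces (hs : s ∈ K.faces) (ha : a ∈ s) (hb : b ∈ s) : {a, b} ∈ K.faces :=
  mem_faces_of_subset hs (by simp [Finset.insert_subset_iff, ha, hb]) (by simp)

theorem mem_vertexSet : v ∈ K.vertexSet ↔ {v} ∈ K.faces := by
  rw [vertexSet, Finset.mem_sup]
  constructor
  · rintro ⟨s, hs, hv⟩
    exact mem_faces_of_subset hs (Finset.singleton_subset_iff.mpr hv) (by simp)
  · exact fun h => ⟨_, h, by simp⟩

theorem subset_vertexSet (hs : s ∈ K.faces) : s ⊆ K.vertexSet := Finset.le_sup (f := id) hs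

theorem fnum_zero (K : SComplex) : K.fnum 0 = K.vertexSet.card := by
  refine (Finset.card_bij (fun v _ => {v}) (fun v hv => ?_) (fun _ _ _ _ h => by simpa using h)
    fun s hs => ?_).symm
  · simp [mem_vertexSet.mp hv]
  · obtain ⟨hsK, hs⟩ := Finset.mem_filter.mp hs
    obtain ⟨v, rfl⟩ := Finset.card_eq_one.mp hs
    exact ⟨v, mem_vertexSet.mpr hsK, rfl⟩

theorem mem_faces_lk : s ∈ (K.lk t).faces ↔ s ∈ K.faces ∧ s ∩ t = ∅ ∧ s ∪ t ∈ K.faces := by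
  simp [lk]

theorem singleton_mem_faces_lk : {v} ∈ (K.lk s).faces ↔ v ∉ s ∧ insert v s ∈ K.faces := by
  rw [mem_faces_lk, ← Finset.disjoint_iff_inter_eq_empty, Finset.disjoint_singleton_left,
    ← Finset.insert_eq]
  exact ⟨And.right, fun h => ⟨mem_faces_of_subset h.2 (by simp) (by simp), h⟩⟩

theorem mem_faces_st : s ∈ (K.st t).faces ↔ s ∈ K.faces ∧ s ∪ t ∈ K.faces := by
  simp [st]

theorem mem_faces_st_of_mem (ht : t ∈ K.faces) (hv : v ∈ t) (hst : s ⊆ t) (hs : s.Nonempty) :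
    s ∈ (K.st {v}).faces :=
  mem_faces_st.mpr ⟨mem_faces_of_subset ht hst hs, mem_faces_of_subset ht
    (Finset.union_subset hst (Finset.singleton_subset_iff.mpr hv)) (by simp)⟩

theorem mem_faces_lk_singleton :
    s ∈ (K.lk {v}).faces ↔ s ∈ (K.st {v}).faces ∧ v ∉ s := by
  rw [mem_faces_lk, mem_faces_st, ← Finset.disjoint_iff_inter_eq_empty,
    Finset.disjoint_singleton_right]
  tauto

theorem mem_vertexSet_st : w ∈ (K.st {v}).vertexSet ↔ {v, w} ∈ K.faces := by
  rw [mem_vertexSet, mem_faces_st, Finset.union_comm, ← Finset.insert_eq]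
  exact ⟨And.right, fun h => ⟨mem_faces_of_subset h (by simp) (by simp), h⟩⟩

theorem fnum_st (K : SComplex) (v i : ℕ) :
    (K.st {v}).fnum i =
      (K.lk {v}).fnum i + ((K.st {v}).faces.filter fun s => s.card = i + 1 ∧ v ∈ s).card := by
  rw [fnum, fnum, add_comm (Finset.card _),
    ← Finset.card_filter_add_card_filter_not (fun s => v ∈ s), Finset.filter_filter,
    Finset.filter_filter]
  congr 2
  ext s
  simp only [Finset.mem_filter, mem_faces_lk_singleton]
  grind

theorem fnum_st_zero (hv : {v} ∈ K.faces) : (K.st {v}).fnum 0 = (K.lk {v}).fnum 0 + 1 := by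
  rw [fnum_st]
  congr 1
  refine Finset.card_eq_one.mpr ⟨{v}, ?_⟩
  ext s
  simp only [Finset.mem_filter, Finset.mem_singleton, zero_add]
  constructor
  · rintro ⟨-, hs, hvs⟩
    exact (Finset.eq_of_subset_of_card_le (by simpa using hvs) (by simp [hs])).symm
  · rintro rfl
    simp [mem_faces_st, hv]

theorem fnum_st_succ (K : SComplex) (v i : ℕ) :
    (K.st {v}).fnum (i + 1) = (K.lk {v}).fnum (i + 1) + (K.lk {v}).fnum i := by
  rw [fnum_st, add_right_inj]
  refine Finset.card_bij' (fun s _ => s.erase v) (fun s _ => insert v s) ?_ ?_ ?_ ?_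
  · intro s hs
    obtain ⟨hsK, hcard, hvs⟩ := Finset.mem_filter.mp hs
    have hcard' : (s.erase v).card = i + 1 := by rw [Finset.card_erase_of_mem hvs]; omega
    refine Finset.mem_filter.mpr ⟨mem_faces_lk_singleton.mpr ⟨?_, by simp⟩, hcard'⟩
    exact mem_faces_of_subset hsK (Finset.erase_subset v s) (Finset.card_pos.mp (by omega))
  · intro s hs
    obtain ⟨hsK, hcard⟩ := Finset.mem_filter.mp hs
    obtain ⟨hst, hvs⟩ := mem_faces_lk_singleton.mp hsK
    have hins : insert v s ∈ K.faces := by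
      simpa [Finset.union_comm, ← Finset.insert_eq] using (mem_faces_st.mp hst).2
    refine Finset.mem_filter.mpr ⟨mem_faces_st.mpr ⟨hins, ?_⟩, ?_, by simp⟩
    · rwa [Finset.union_eq_left.mpr (by simp)]
    · rw [Finset.card_insert_of_notMem hvs, hcard]
  · exact fun s hs => Finset.insert_erase (Finset.mem_filter.mp hs).2.2
  · exact fun s hs =>
      Finset.erase_insert (mem_faces_lk_singleton.mp (Finset.mem_filter.mp hs).1).2

/-- The star of a vertex is a cone over its link, and coning preserves `g₂`. -/
theorem g2_st (hv : {v} ∈ K.faces) : (K.st {v}).g2 = (K.lk {v}).g2surf := by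
  rw [g2, g2surf, fnum_st_zero hv, fnum_st_succ]
  push_cast
  ring

end Faces

section Facets

variable {K : SComplex} {d : ℕ} {s F G R : Finset ℕ}

theorem exists_isFacet_superset (hs : s ∈ K.faces) : ∃ F, K.IsFacet F ∧ s ⊆ F := by
  obtain ⟨F, hsF, hF⟩ := K.faces.exists_le_maximal hs
  exact ⟨F, ⟨hF.prop, fun t ht hFt => le_antisymm hFt (hF.le_of_ge ht hFt)⟩, hsF⟩

theorem IsPure.isFacet_iff (hK : K.IsPure d) : K.IsFacet F ↔ F ∈ K.faces ∧ F.card = d + 1 := by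
  refine ⟨fun h => ⟨h.1, hK.2 F h⟩, fun ⟨hF, hcard⟩ => ?_⟩
  obtain ⟨G, hG, hFG⟩ := exists_isFacet_superset hF
  rwa [Finset.eq_of_subset_of_card_le hFG (by rw [hcard, hK.2 G hG])]

theorem IsPure.facetAdj_of_ridge (hK : K.IsPure d) (hF : K.IsFacet F) (hG : K.IsFacet G)
    (hFG : F ≠ G) (hR : R.card = d) (hRF : R ⊆ F) (hRG : R ⊆ G) : K.FacetAdj F G := by
  have hle := Finset.card_le_card (Finset.subset_inter hRF hRG)
  have hlt : (F ∩ G).card < F.card := Finset.card_lt_card <|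
    Finset.inter_subset_left.ssubset_of_ne fun h =>
      hFG (hF.2 G hG.1 (Finset.inter_eq_left.mp h))
  have := hK.2 F hF
  exact ⟨hF, hG, by omega⟩

theorem IsPure.card_facets_eq_two_iff (hK : K.IsPure d) :
    (K.faces.filter fun F => F.card = d + 1 ∧ R ⊆ F).card = 2 ↔
      ∃ F G, F ≠ G ∧ ∀ H, K.IsFacet H ∧ R ⊆ H ↔ H = F ∨ H = G := by
  simp only [Finset.card_eq_two, Finset.ext_iff, Finset.mem_filter, Finset.mem_insert,
    Finset.mem_singleton, hK.isFacet_iff, and_assoc]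

/-- A pure strongly connected `d`-dimensional complex each of whose ridges lies in exactly two
facets; a normal pseudomanifold without the condition on links. -/
structure IsPseudomanifold (K : SComplex) (d : ℕ) : Prop where
  isPure : K.IsPure d
  stronglyConnected : K.StronglyConnected
  card_facets : ∀ s ∈ K.faces, s.card = d →
    (K.faces.filter fun F => F.card = d + 1 ∧ s ⊆ F).card = 2

theorem IsNormalPseudomanifold.isPseudomanifold (hK : K.IsNormalPseudomanifold d) :
    K.IsPseudomanifold d :=
  ⟨hK.1, hK.2.1, hK.2.2.1⟩

theorem IsPseudomanifold.exists_facets (hK : K.IsPseudomanifold d) (hR : R ∈ K.faces)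
    (hcard : R.card = d) : ∃ F G, F ≠ G ∧ ∀ H, K.IsFacet H ∧ R ⊆ H ↔ H = F ∨ H = G :=
  hK.isPure.card_facets_eq_two_iff.mp (hK.card_facets R hR hcard)

end Facets

section Jump

variable {K : SComplex} {d : ℕ} {f g : Finset ℕ → ZMod 2} {s F G R : Finset ℕ}

open Classical in
/-- The jump of a `ZMod 2`-valued function on facets across a ridge `R`: the sum of its values on
the facets containing `R`. -/
noncomputable def jump (K : SComplex) (f : Finset ℕ → ZMod 2) (R : Finset ℕ) : ZMod 2 :=
  ∑ F ∈ K.faces with K.IsFacet F ∧ R ⊆ F, f F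

theorem jump_add (f g : Finset ℕ → ZMod 2) (R : Finset ℕ) :
    K.jump (fun F => f F + g F) R = K.jump f R + K.jump g R :=
  Finset.sum_add_distrib

theorem jump_congr (h : ∀ F, K.IsFacet F → R ⊆ F → f F = g F) : K.jump f R = K.jump g R := by
  classical
  refine Finset.sum_congr rfl fun F hF => ?_
  obtain ⟨-, hF, hRF⟩ := Finset.mem_filter.mp hF
  exact h F hF hRF

theorem jump_eq_zero_of_notMem_faces (hR : R.Nonempty) (hRK : R ∉ K.faces) : K.jump f R = 0 := by
  classical
  refine Finset.sum_eq_zero fun F hF => ?_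
  obtain ⟨hFK, -, hRF⟩ := Finset.mem_filter.mp hF
  exact absurd (mem_faces_of_subset hFK hRF hR) hRK

theorem jump_eq_add (hFG : F ≠ G) (h : ∀ H, K.IsFacet H ∧ R ⊆ H ↔ H = F ∨ H = G) :
    K.jump f R = f F + f G := by
  classical
  rw [← Finset.sum_pair hFG]
  refine Finset.sum_congr ?_ fun _ _ => rfl
  ext H
  rw [Finset.mem_filter, h, Finset.mem_insert, Finset.mem_singleton, and_iff_right_iff_imp]
  exact fun hH => ((h H).mpr hH).1.1

theorem IsPseudomanifold.jump_eq_zero_iff (hK : K.IsPseudomanifold d) (hR : R ∈ K.faces)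
    (hcard : R.card = d) :
    K.jump f R = 0 ↔ ∀ F G, K.IsFacet F → K.IsFacet G → R ⊆ F → R ⊆ G → f F = f G := by
  obtain ⟨F, G, hFG, h⟩ := hK.exists_facets hR hcard
  rw [jump_eq_add hFG h, CharTwo.add_eq_zero]
  constructor
  · intro hf A B hA hB hRA hRB
    obtain rfl | rfl := (h A).mp ⟨hA, hRA⟩ <;> obtain rfl | rfl := (h B).mp ⟨hB, hRB⟩ <;>
      simp [hf]
  · intro hf
    obtain ⟨hF, hRF⟩ := (h F).mpr (Or.inl rfl)
    obtain ⟨hG, hRG⟩ := (h G).mpr (Or.inr rfl)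
    exact hf F G hF hG hRF hRG

theorem IsPseudomanifold.jump_const (hK : K.IsPseudomanifold d) (hR : R ∈ K.faces)
    (hcard : R.card = d) (c : ZMod 2) : K.jump (fun _ => c) R = 0 :=
  (hK.jump_eq_zero_iff hR hcard).mpr fun _ _ _ _ _ _ => rfl

theorem IsPseudomanifold.exists_isFacet_eq_of_jump_ne_zero (hK : K.IsPseudomanifold d)
    (hR : R ∈ K.faces) (hcard : R.card = d) (hf : K.jump f R ≠ 0) (c : ZMod 2) :
    ∃ F, ∀ H, (K.IsFacet H ∧ f H = c) ∧ R ⊆ H ↔ H = F := by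
  obtain ⟨F, G, hFG, h⟩ := hK.exists_facets hR hcard
  rw [jump_eq_add hFG h] at hf
  have hcases : ∀ a b c : ZMod 2, a + b ≠ 0 → a = c ∧ b ≠ c ∨ b = c ∧ a ≠ c := by decide
  simp only [and_right_comm (b := f _ = c), h]
  obtain ⟨hF, hG⟩ | ⟨hG, hF⟩ := hcases _ _ c hf
  · exact ⟨F, by grind⟩
  · exact ⟨G, by grind⟩

theorem IsPseudomanifold.eq_of_forall_jump_eq_zero (hK : K.IsPseudomanifold d) (hd : 0 < d)
    (hf : ∀ R ∈ K.faces, R.card = d → K.jump f R = 0) (hF : K.IsFacet F) (hG : K.IsFacet G) :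
    f F = f G := by
  induction hK.stronglyConnected F G hF hG with
  | refl => rfl
  | @tail A B _ hAB ih =>
    obtain ⟨hA, hB, hAB⟩ := hAB
    have hcard : (A ∩ B).card = d := by have := hK.isPure.2 A hA; omega
    have hR : A ∩ B ∈ K.faces :=
      mem_faces_of_subset hA.1 Finset.inter_subset_left (Finset.card_pos.mp (hcard ▸ hd))
    exact (ih hA).trans ((hK.jump_eq_zero_iff hR hcard).mp (hf _ hR hcard) A B hA hB
      Finset.inter_subset_left Finset.inter_subset_right)

theorem eq_of_conn_lk (hconn : (K.lk s).Conn) (hF : K.IsFacet F) (hG : K.IsFacet G)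
    (hsF : s ⊂ F) (hsG : s ⊂ G)
    (hf : ∀ w ∉ s, ∀ F G, K.IsFacet F → K.IsFacet G → insert w s ⊆ F → insert w s ⊆ G →
      f F = f G) : f F = f G := by
  have hlink : ∀ {H : Finset ℕ}, K.IsFacet H → s ⊂ H →
      ∃ w, {w} ∈ (K.lk s).faces ∧ insert w s ⊆ H := fun hH hsH => by
    obtain ⟨w, hws, hwH⟩ := Finset.ssubset_iff.mp hsH
    exact ⟨w, singleton_mem_faces_lk.mpr ⟨hws, mem_faces_of_subset hH.1 hwH (by simp)⟩, hwH⟩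
  obtain ⟨u, hu, huF⟩ := hlink hF hsF
  obtain ⟨v, hv, hvG⟩ := hlink hG hsG
  have path := hconn.2 u v hu hv
  clear hv
  induction path generalizing G with
  | refl => exact hf u (singleton_mem_faces_lk.mp hu).1 F G hF hG huF hvG
  | @tail b c _ hbc ih =>
    have hc : {c} ∈ (K.lk s).faces := mem_faces_of_subset hbc (by simp) (by simp)
    obtain ⟨J, hJ, hJs⟩ := exists_isFacet_superset (mem_faces_lk.mp hbc).2.2
    simp only [Finset.insert_union, Finset.singleton_union, Finset.insert_subset_iff] at hJs
    obtain ⟨hbJ, hcJ, hsJ⟩ := hJs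
    have hsJ' : s ⊂ J := hsJ.ssubset_of_ne fun h =>
      (singleton_mem_faces_lk.mp hc).1 (h ▸ hcJ)
    exact (ih hJ hsJ' (Finset.insert_subset hbJ hsJ)).trans <|
      hf c (singleton_mem_faces_lk.mp hc).1 J G hJ hG (Finset.insert_subset hcJ hsJ) hvG

theorem IsNormalPseudomanifold.eq_of_jump_eq_zero (hK : K.IsNormalPseudomanifold d) (hd : 0 < d)
    (hf : ∀ R ∈ K.faces, R.card = d → s ⊆ R → K.jump f R = 0) (hF : K.IsFacet F)
    (hG : K.IsFacet G) (hsF : s ⊆ F) (hsG : s ⊆ G) : f F = f G := by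
  obtain rfl | hs := s.eq_empty_or_nonempty
  · exact hK.isPseudomanifold.eq_of_forall_jump_eq_zero hd
      (fun R hR hcard => hf R hR hcard (Finset.empty_subset R)) hF hG
  have hsK := mem_faces_of_subset hF.1 hsF hs
  have hcardF := hK.1.2 F hF
  have hcardG := hK.1.2 G hG
  have hle := Finset.card_le_card hsF
  induction hn : d + 1 - s.card using Nat.strong_induction_on generalizing s F G with
  | _ n ih =>
    obtain h | h | h : s.card = d + 1 ∨ s.card = d ∨ s.card < d := by omega
    · rw [← Finset.eq_of_subset_of_card_le hsF (by omega),
        ← Finset.eq_of_subset_of_card_le hsG (by omega)]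
    · exact (hK.isPseudomanifold.jump_eq_zero_iff hsK h).mp (hf s hsK h subset_rfl)
        F G hF hG hsF hsG
    · have hssub : ∀ {H : Finset ℕ}, s ⊆ H → H.card = d + 1 → s ⊂ H := fun hsH hH =>
        hsH.ssubset_of_ne fun e => by rw [e] at h; omega
      refine eq_of_conn_lk (hK.2.2.2 s hsK (by omega)) hF hG (hssub hsF hcardF)
        (hssub hsG hcardG) fun w hws A B hA hB hwA hwB => ?_
      have hle := Finset.card_le_card hwA
      have hcardA := hK.1.2 A hA
      rw [Finset.card_insert_of_notMem hws] at hle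
      refine ih (d + 1 - (insert w s).card) ?_ (fun R hR hcard hwR => ?_) hA hB hwA hwB
        (by simp) (mem_faces_of_subset hA.1 hwA (by simp)) hcardA (hK.1.2 B hB)
        (Finset.card_le_card hwA) rfl
      · rw [Finset.card_insert_of_notMem hws]; omega
      · exact hf R hR hcard ((Finset.subset_insert w s).trans hwR)

end Jump

section LowerBound

variable {K : SComplex} {d : ℕ} {F : Finset ℕ}

open Classical in
/-- The fundamental chain of a complex modulo `2`: the sum of its facets. -/
noncomputable def facetChain (K : SComplex) : SimplicialChain ℕ :=
  Finsupp.indicator (K.faces.filter K.IsFacet) fun _ _ => 1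

theorem facetChain_apply (hF : K.IsFacet F) : K.facetChain F = 1 := by
  classical
  exact Finsupp.indicator_of_mem (Finset.mem_filter.mpr ⟨hF.1, hF⟩) _

theorem mem_support_facetChain : F ∈ K.facetChain.support ↔ K.IsFacet F := by
  classical
  rw [Finsupp.mem_support_iff]
  refine ⟨fun h => ?_, fun hF => by simp [facetChain_apply hF]⟩
  by_contra hF
  exact h (Finsupp.indicator_of_notMem (fun hmem => hF (Finset.mem_filter.mp hmem).2) _)

theorem vertices_facetChain (K : SComplex) : K.facetChain.vertices = K.vertexSet := by
  ext v
  simp only [SimplicialChain.mem_vertices, mem_support_facetChain, mem_vertexSet]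
  constructor
  · rintro ⟨F, hF, hv⟩
    exact mem_faces_of_subset hF.1 (Finset.singleton_subset_iff.mpr hv) (by simp)
  · intro hv
    obtain ⟨F, hF, hvF⟩ := exists_isFacet_superset hv
    exact ⟨F, hF, Finset.singleton_subset_iff.mp hvF⟩

theorem IsPure.boundary_apply (hK : K.IsPure d) {c : SimplicialChain ℕ}
    (hc : ∀ F ∈ c.support, K.IsFacet F) (R : Finset ℕ) :
    SimplicialChain.boundary c R = if R.card = d then K.jump c R else 0 := by
  classical
  rw [SimplicialChain.boundary_apply]
  split_ifs with hR
  · refine Finset.sum_subset (fun F hF => ?_) fun F hF hFc => ?_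
    · obtain ⟨hFc, x, -, rfl⟩ := Finset.mem_filter.mp hF
      exact Finset.mem_filter.mpr ⟨(hc F hFc).1, hc F hFc, F.erase_subset x⟩
    · obtain ⟨-, hF, hRF⟩ := Finset.mem_filter.mp hF
      by_contra hne
      have hcover : R ⋖ F := Finset.covBy_iff_card_sdiff_eq_one.mpr
        ⟨hRF, by rw [Finset.card_sdiff_of_subset hRF, hK.2 F hF]; omega⟩
      obtain ⟨x, hx, hxF⟩ := Finset.covBy_iff_exists_erase.mp hcover
      exact hFc (Finset.mem_filter.mpr ⟨Finsupp.mem_support_iff.mpr hne, x, hx, hxF⟩)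
  · refine Finset.sum_eq_zero fun F hF => absurd ?_ hR
    obtain ⟨hFc, x, hx, rfl⟩ := Finset.mem_filter.mp hF
    rw [Finset.card_erase_of_mem hx, hK.2 F (hc F hFc), Nat.add_sub_cancel]

theorem IsPseudomanifold.isMinimalCycle_facetChain (hK : K.IsPseudomanifold d) (hd : 0 < d) :
    SimplicialChain.IsMinimalCycle (d + 1) K.facetChain where
  mem_cycles := by
    have hsupp : ∀ F ∈ K.facetChain.support, K.IsFacet F := fun _ => mem_support_facetChain.mp
    refine SimplicialChain.mem_cycles.mpr ⟨fun F hF => hK.isPure.2 F (hsupp F hF), ?_⟩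
    ext R
    rw [hK.isPure.boundary_apply hsupp, Finsupp.zero_apply]
    split_ifs with hR
    · by_cases hRK : R ∈ K.faces
      · rw [← hK.jump_const hRK hR 1]
        exact jump_congr fun F hF _ => facetChain_apply hF
      · exact jump_eq_zero_of_notMem_faces (Finset.card_pos.mp (hR ▸ hd)) hRK
    · rfl
  ne_zero := by
    obtain ⟨s, hs⟩ := hK.isPure.1
    obtain ⟨F, hF, -⟩ := exists_isFacet_superset hs
    exact Finsupp.support_nonempty_iff.mp ⟨F, mem_support_facetChain.mpr hF⟩
  eq_zero_or_eq b hb hbK := by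
    have hsupp : ∀ F ∈ b.support, K.IsFacet F := fun F hF => mem_support_facetChain.mp (hbK hF)
    have hjump : ∀ R ∈ K.faces, R.card = d → K.jump b R = 0 := fun R _ hR => by
      have := hK.isPure.boundary_apply hsupp R
      rwa [if_pos hR, (SimplicialChain.mem_cycles.mp hb).2, eq_comm] at this
    refine b.support.eq_empty_or_nonempty.imp Finsupp.support_eq_empty.mp fun ⟨F, hF⟩ => ?_
    have hbF : b F = 1 :=
      (by decide : ∀ a : ZMod 2, a ≠ 0 → a = 1) _ (Finsupp.mem_support_iff.mp hF)
    ext G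
    by_cases hG : K.IsFacet G
    · rw [facetChain_apply hG, ← hbF]
      exact hK.eq_of_forall_jump_eq_zero hd hjump hG (hsupp F hF)
    · rw [Finsupp.notMem_support_iff.mp (mt (hsupp G) hG),
        Finsupp.notMem_support_iff.mp (mt mem_support_facetChain.mp hG)]

theorem disjoint_filter_card_faces {L M : SComplex} (h : Disjoint L.vertexSet M.vertexSet) (i : ℕ) :
    Disjoint (L.faces.filter fun s => s.card = i) (M.faces.filter fun s => s.card = i) := by
  rw [Finset.disjoint_left]
  intro s hL hM
  obtain ⟨v, hv⟩ := nonempty_of_mem_faces (Finset.mem_filter.mp hL).1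
  exact Finset.disjoint_left.mp h (subset_vertexSet (Finset.mem_filter.mp hL).1 hv)
    (subset_vertexSet (Finset.mem_filter.mp hM).1 hv)

theorem exists_orientation (E : Finset (Finset ℕ)) : ∃ X : Finset (ℕ × ℕ), X.card ≤ E.card ∧
    ∀ u v, u ≠ v → {u, v} ∈ E → (u, v) ∈ X ∨ (v, u) ∈ X := by
  refine ⟨(E.sup id ×ˢ E.sup id).filter fun e => e.1 < e.2 ∧ {e.1, e.2} ∈ E, ?_, ?_⟩
  · refine Finset.card_le_card_of_injOn (fun e => {e.1, e.2})
      (fun e he => (Finset.mem_filter.mp he).2.2) ?_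
    rintro ⟨a, b⟩ hab ⟨a', b'⟩ hab' h
    have hlt := (Finset.mem_filter.mp hab).2.1
    have hlt' := (Finset.mem_filter.mp hab').2.1
    have hset := congrArg (fun s : Finset ℕ => (s : Set ℕ)) h
    simp only [Finset.coe_pair, Set.pair_eq_pair_iff] at hset
    grind
  · intro u v huv hE
    have hsub : {u, v} ⊆ E.sup id := Finset.le_sup (f := id) hE
    rw [Finset.insert_subset_iff, Finset.singleton_subset_iff] at hsub
    obtain h | h := huv.lt_or_gt
    · exact Or.inl (by simp only [Finset.mem_filter, Finset.mem_product]; tauto)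
    · rw [Finset.pair_comm] at hE
      exact Or.inr (by simp only [Finset.mem_filter, Finset.mem_product]; tauto)

theorem IsPure.lt_card_vertexSet_st (hK : K.IsPure d) {v : ℕ} (hv : {v} ∈ K.faces) :
    d < (K.st {v}).vertexSet.card := by
  obtain ⟨F, hF, hvF⟩ := exists_isFacet_superset hv
  rw [← Nat.add_one_le_iff, ← hK.2 F hF]
  exact Finset.card_le_card fun w hw =>
    mem_vertexSet_st.mpr (pair_mem_faces hF.1 (hvF (by simp)) hw)

/-- The `1`-skeleton is generically rigid in dimension `4`; apply the resulting edge count to the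
motions that are trivial on each of the stars. -/
theorem IsPseudomanifold.sum_g2_st_le (hK : K.IsPseudomanifold 3) {T : Finset ℕ}
    (hT : ∀ v ∈ T, {v} ∈ K.faces)
    (hdisj : (T : Set ℕ).PairwiseDisjoint fun v => (K.st {v}).vertexSet) :
    ∑ v ∈ T, (K.st {v}).g2 ≤ K.g2 := by
  obtain ⟨p, hp⟩ := Placement.exists_isGeneric ℕ 4
  have hrigid := (hK.isMinimalCycle_facetChain (by norm_num)).isRigidOn_graph hp (by norm_num)
  rw [vertices_facetChain] at hrigid
  let edges (L : SComplex) : Finset (Finset ℕ) := L.faces.filter fun s => s.card = 2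
  let starEdges := T.biUnion fun v => edges (K.st {v})
  have hstarEdges : starEdges ⊆ edges K := Finset.biUnion_subset.mpr fun v _ =>
    Finset.filter_subset_filter _ (Finset.filter_subset _ _)
  have hcard_starEdges : starEdges.card = ∑ v ∈ T, (K.st {v}).fnum 1 :=
    Finset.card_biUnion fun u hu v hv huv => disjoint_filter_card_faces (hdisj hu hv huv) 2
  obtain ⟨X, hXcard, hX⟩ := exists_orientation (edges K \ starEdges)
  have hcover : ∀ u v, K.facetChain.graph.Adj u v → (u, v) ∈ X ∨ (v, u) ∈ X ∨
      ∃ i : T, u ∈ (K.st {i.1}).vertexSet ∧ v ∈ (K.st {i.1}).vertexSet := by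
    rintro u v ⟨huv, F, hF, hu, hv⟩
    have hedge : {u, v} ∈ edges K := Finset.mem_filter.mpr
      ⟨pair_mem_faces (mem_support_facetChain.mp hF).1 hu hv, Finset.card_pair huv⟩
    by_cases hstar : {u, v} ∈ starEdges
    · obtain ⟨w, hw, huvw⟩ := Finset.mem_biUnion.mp hstar
      have hsub := subset_vertexSet (Finset.mem_filter.mp huvw).1
      exact Or.inr (Or.inr ⟨⟨w, hw⟩, hsub (by simp), hsub (by simp)⟩)
    · exact (hX u v huv (Finset.mem_sdiff.mpr ⟨hedge, hstar⟩)).imp_right Or.inl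
  have hcount := hp.card_le_of_isRigidOn hrigid (B := fun i : T => (K.st {i.1}).vertexSet)
    (fun i => Finset.sup_mono (Finset.filter_subset _ _))
    (fun i => hK.isPure.lt_card_vertexSet_st (hT i i.2)) hcover
  have hblocks : ∑ i : T, (K.st {i.1}).vertexSet.card = ∑ v ∈ T, (K.st {v}).fnum 0 := by
    simp only [fnum_zero, ← Finset.sum_coe_sort T]
  have hsdiff := Finset.card_sdiff_add_card_eq_card hstarEdges
  have hedges : (edges K).card = K.fnum 1 := rfl
  rw [hblocks, ← fnum_zero, Fintype.card_coe, show Nat.choose (4 + 1) 2 = 10 from rfl] at hcount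
  simp only [g2, Finset.sum_add_distrib, Finset.sum_sub_distrib, ← Finset.mul_sum,
    Finset.sum_const, nsmul_eq_mul]
  push_cast [← Nat.cast_sum]
  omega

end LowerBound

/-- `D` arises from `K` by identifying the simplex `τ₁` with `τ₂` along `ψ` and removing the
identified simplex; `h` is the resulting map on vertices, which keeps the names of the vertices of
`τ₁`. Admissibility of `ψ` is stated as the absence of paths of length at most two. -/
structure IsHandleAddition (K D : SComplex) (τ₁ τ₂ : Finset ℕ) (ψ h : ℕ → ℕ) : Prop where
  mem₁ : τ₁ ∈ K.faces
  mem₂ : τ₂ ∈ K.faces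
  image_eq : τ₁.image ψ = τ₂
  admissible : ∀ x ∈ τ₁, ∀ z, {x, z} ∈ K.faces → {z, ψ x} ∉ K.faces
  fix : ∀ y ∉ τ₂, h y = y
  left_inv : ∀ x ∈ τ₁, h (ψ x) = x
  faces_eq : D.faces = K.faces.image (Finset.image h) \ {τ₁}

namespace IsHandleAddition

variable {K D : SComplex} {τ₁ τ₂ s s' : Finset ℕ} {ψ h : ℕ → ℕ} {t x y : ℕ}

theorem map_mem (H : IsHandleAddition K D τ₁ τ₂ ψ h) (hx : x ∈ τ₁) : ψ x ∈ τ₂ :=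
  H.image_eq ▸ Finset.mem_image_of_mem ψ hx

theorem exists_of_mem (H : IsHandleAddition K D τ₁ τ₂ ψ h) (hy : y ∈ τ₂) :
    ∃ x ∈ τ₁, ψ x = y :=
  Finset.mem_image.mp (H.image_eq ▸ hy)

theorem disjoint (H : IsHandleAddition K D τ₁ τ₂ ψ h) : Disjoint τ₁ τ₂ := by
  refine Finset.disjoint_left.mpr fun y hy₁ hy₂ => ?_
  obtain ⟨x, hx, rfl⟩ := H.exists_of_mem hy₂
  exact H.admissible x hx (ψ x) (pair_mem_faces H.mem₁ hx hy₁) (pair_mem_faces H.mem₁ hy₁ hy₁)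

theorem fix_of_mem (H : IsHandleAddition K D τ₁ τ₂ ψ h) (hx : x ∈ τ₁) : h x = x :=
  H.fix x (Finset.disjoint_left.mp H.disjoint hx)

theorem map_mem_of_mem (H : IsHandleAddition K D τ₁ τ₂ ψ h) (hy : y ∈ τ₂) : h y ∈ τ₁ := by
  obtain ⟨x, hx, rfl⟩ := H.exists_of_mem hy
  rwa [H.left_inv x hx]

theorem image_subset (H : IsHandleAddition K D τ₁ τ₂ ψ h) (hs : s ⊆ τ₂) : s.image h ⊆ τ₁ :=
  Finset.image_subset_iff.mpr fun _ hy => H.map_mem_of_mem (hs hy)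

theorem image_eq_self (H : IsHandleAddition K D τ₁ τ₂ ψ h) (hs : s ⊆ τ₁) : s.image h = s :=
  (Finset.image_congr fun _ hx => H.fix_of_mem (hs hx)).trans Finset.image_id

theorem map_eq_iff_of_mem (H : IsHandleAddition K D τ₁ τ₂ ψ h) (hx : x ∈ τ₁) :
    h y = x ↔ y = x ∨ y = ψ x := by
  constructor
  · rintro rfl
    by_cases hy : y ∈ τ₂
    · obtain ⟨z, hz, rfl⟩ := H.exists_of_mem hy
      rw [H.left_inv z hz]
      exact Or.inr rfl
    · exact Or.inl (H.fix y hy).symm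
  · rintro (rfl | rfl)
    · exact H.fix_of_mem hx
    · exact H.left_inv x hx

theorem eq_or_of_map_eq (H : IsHandleAddition K D τ₁ τ₂ ψ h) (hxy : h x = h y) :
    x = y ∨ x ∈ τ₁ ∧ y = ψ x ∨ y ∈ τ₁ ∧ x = ψ y := by
  by_cases hx : x ∈ τ₂
  · obtain ⟨a, ha, rfl⟩ := H.exists_of_mem hx
    rw [H.left_inv a ha, eq_comm, H.map_eq_iff_of_mem ha] at hxy
    exact hxy.elim (fun hy => Or.inr (Or.inr (by simp [hy, ha]))) fun hy => Or.inl hy.symm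
  by_cases hy : y ∈ τ₂
  · obtain ⟨a, ha, rfl⟩ := H.exists_of_mem hy
    rw [H.left_inv a ha, H.map_eq_iff_of_mem ha] at hxy
    exact hxy.elim (fun hx => Or.inr (Or.inl (by simp [hx, ha]))) Or.inl
  · exact Or.inl (by rwa [H.fix x hx, H.fix y hy] at hxy)

theorem injOn_neighbors (H : IsHandleAddition K D τ₁ τ₂ ψ h) (z : ℕ) :
    Set.InjOn h {x | {z, x} ∈ K.faces} := by
  intro x hx y hy hxy
  obtain h | ⟨hx₁, rfl⟩ | ⟨hy₁, rfl⟩ := H.eq_or_of_map_eq hxy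
  · exact h
  · exact absurd hy (H.admissible x hx₁ z (Finset.pair_comm z x ▸ hx))
  · exact absurd hx (H.admissible y hy₁ z (Finset.pair_comm z y ▸ hy))

theorem injOn_of_mem_faces (H : IsHandleAddition K D τ₁ τ₂ ψ h) (hs : s ∈ K.faces) :
    Set.InjOn h s := by
  obtain ⟨z, hz⟩ := nonempty_of_mem_faces hs
  exact (H.injOn_neighbors z).mono fun x hx => pair_mem_faces hs hz hx

theorem card_image (H : IsHandleAddition K D τ₁ τ₂ ψ h) (hs : s ∈ K.faces) :
    (s.image h).card = s.card :=
  Finset.card_image_of_injOn (H.injOn_of_mem_faces hs)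

theorem subset_of_image_eq_of_mem (H : IsHandleAddition K D τ₁ τ₂ ψ h) (hs : s ∈ K.faces)
    (hs' : s' ∈ K.faces) (heq : s.image h = s'.image h) (hx : x ∈ τ₁) (hxs : x ∈ s)
    (hxs' : ψ x ∈ s') : s' ⊆ τ₂ := by
  intro w' hw'
  obtain ⟨w, hw, hww'⟩ := Finset.mem_image.mp (heq ▸ Finset.mem_image_of_mem h hw')
  obtain rfl | ⟨hw₁, rfl⟩ | ⟨hw₁, rfl⟩ := H.eq_or_of_map_eq hww'
  · exact absurd (pair_mem_faces hs' hw' hxs') (H.admissible x hx w (pair_mem_faces hs hxs hw))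
  · exact H.map_mem hw₁
  · exact absurd (pair_mem_faces hs hxs hw)
      (H.admissible w' hw₁ x (pair_mem_faces H.mem₁ hw₁ hx))

theorem image_injOn (H : IsHandleAddition K D τ₁ τ₂ ψ h) :
    Set.InjOn (Finset.image h) {s | s ∈ K.faces ∧ ¬s ⊆ τ₂} := by
  rintro s ⟨hs, hsτ⟩ s' ⟨hs', hsτ'⟩ heq
  refine Finset.eq_of_subset_of_card_le (fun x hx => ?_) ?_
  · obtain ⟨y, hy, hxy⟩ := Finset.mem_image.mp (heq ▸ Finset.mem_image_of_mem h hx)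
    obtain rfl | ⟨hy₁, rfl⟩ | ⟨hx₁, rfl⟩ := H.eq_or_of_map_eq hxy
    · exact hy
    · exact absurd (H.subset_of_image_eq_of_mem hs' hs heq.symm hy₁ hy hx) hsτ
    · exact absurd (H.subset_of_image_eq_of_mem hs hs' heq hx₁ hx hy) hsτ'
  · rw [← H.card_image hs, ← H.card_image hs', heq]

/-- Two faces have the same image only if one lies in `τ₁` and the other in `τ₂`. -/
theorem card_image_add (H : IsHandleAddition K D τ₁ τ₂ ψ h) {X : Finset (Finset ℕ)}
    (hXK : X ⊆ K.faces) (hX : ∀ s ∈ X, s ⊆ τ₂ → s.image h ∈ X) :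
    (X.image (Finset.image h)).card + (X.filter (· ⊆ τ₂)).card = X.card := by
  have himage : X.image (Finset.image h) = (X.filter (¬· ⊆ τ₂)).image (Finset.image h) := by
    refine (Finset.image_subset_iff.mpr fun s hs => ?_).antisymm
      (Finset.image_subset_image (Finset.filter_subset _ _))
    by_cases hsτ : s ⊆ τ₂
    · have hsub := H.image_subset hsτ
      obtain ⟨x, hx⟩ := (nonempty_of_mem_faces (hXK hs)).image h
      refine Finset.mem_image.mpr ⟨s.image h, Finset.mem_filter.mpr ⟨hX s hs hsτ, fun h₂ => ?_⟩,
        H.image_eq_self hsub⟩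
      exact Finset.disjoint_left.mp H.disjoint (hsub hx) (h₂ hx)
    · exact Finset.mem_image_of_mem _ (Finset.mem_filter.mpr ⟨hs, hsτ⟩)
  have hinj : Set.InjOn (Finset.image h) (X.filter (¬· ⊆ τ₂)) := H.image_injOn.mono <| by
    simpa [Set.subset_def] using fun s hs hsτ => And.intro (hXK hs) hsτ
  rw [himage, Finset.card_image_of_injOn hinj, add_comm, Finset.card_filter_add_card_filter_not]

theorem image_mem_faces (H : IsHandleAddition K D τ₁ τ₂ ψ h) (hs : s ∈ K.faces)
    (hcard : s.card < τ₁.card) : s.image h ∈ D.faces := by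
  rw [H.faces_eq, Finset.mem_sdiff, Finset.mem_singleton]
  refine ⟨Finset.mem_image_of_mem _ hs, fun he => hcard.ne ?_⟩
  rw [← he, H.card_image hs]

theorem exists_of_mem_faces (H : IsHandleAddition K D τ₁ τ₂ ψ h) (hs : s ∈ D.faces) :
    ∃ r ∈ K.faces, r.image h = s :=
  Finset.mem_image.mp (Finset.mem_sdiff.mp (H.faces_eq ▸ hs)).1

theorem fnum_add (H : IsHandleAddition K D τ₁ τ₂ ψ h) {i : ℕ} (hi : i + 1 < τ₁.card) :
    D.fnum i + τ₂.card.choose (i + 1) = K.fnum i := by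
  have himage : (D.faces.filter fun s => s.card = i + 1) =
      (K.faces.filter fun s => s.card = i + 1).image (Finset.image h) := by
    ext s
    simp only [Finset.mem_filter, Finset.mem_image]
    constructor
    · rintro ⟨hs, hcard⟩
      obtain ⟨r, hr, rfl⟩ := H.exists_of_mem_faces hs
      exact ⟨r, ⟨hr, H.card_image hr ▸ hcard⟩, rfl⟩
    · rintro ⟨r, ⟨hr, hcard⟩, rfl⟩
      exact ⟨H.image_mem_faces hr (hcard ▸ hi), (H.card_image hr).trans hcard⟩
  have hτ₂ : (K.faces.filter fun s => s.card = i + 1).filter (· ⊆ τ₂) =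
      τ₂.powersetCard (i + 1) := by
    ext s
    simp only [Finset.mem_filter, Finset.mem_powersetCard]
    exact ⟨fun hs => ⟨hs.2, hs.1.2⟩, fun hs => ⟨⟨mem_faces_of_subset H.mem₂ hs.1
      (Finset.card_pos.mp (by omega)), hs.2⟩, hs.1⟩⟩
  rw [fnum, fnum, himage, ← Finset.card_powersetCard, ← hτ₂]
  refine H.card_image_add (Finset.filter_subset _ _) fun s hs hsτ => ?_
  obtain ⟨hsK, hcard⟩ := Finset.mem_filter.mp hs
  exact Finset.mem_filter.mpr ⟨mem_faces_of_subset H.mem₁ (H.image_subset hsτ)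
    ((nonempty_of_mem_faces hsK).image h), (H.card_image hsK).trans hcard⟩

theorem filter_card_st (H : IsHandleAddition K D τ₁ τ₂ ψ h) {Y : Finset ℕ}
    (hY : ∀ y, h y = t ↔ y ∈ Y) {i : ℕ} (hi : i + 1 < τ₁.card) :
    ((D.st {t}).faces.filter fun s => s.card = i) =
      (Y.biUnion fun y => (K.st {y}).faces.filter fun s => s.card = i).image (Finset.image h) := by
  ext s
  simp only [Finset.mem_filter, Finset.mem_image, Finset.mem_biUnion, mem_faces_st]
  constructor
  · rintro ⟨⟨hs, hst⟩, hcard⟩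
    obtain ⟨r, hr, hrst⟩ := H.exists_of_mem_faces hst
    obtain ⟨y, hyr, hyt⟩ := Finset.mem_image.mp
      (hrst ▸ Finset.mem_union_right s (Finset.mem_singleton_self t))
    obtain ⟨q, hqr, rfl⟩ := Finset.subset_image_iff.mp (hrst ▸ Finset.subset_union_left (s₂ := {t}))
    have hq : q ∈ K.faces :=
      mem_faces_of_subset hr hqr (Finset.image_nonempty.mp (nonempty_of_mem_faces hs))
    refine ⟨q, ⟨y, (hY y).mp hyt, ⟨hq, mem_faces_of_subset hr ?_ (by simp)⟩, ?_⟩, rfl⟩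
    · exact Finset.union_subset hqr (Finset.singleton_subset_iff.mpr hyr)
    · rw [← hcard, H.card_image hq]
  · rintro ⟨q, ⟨y, hy, ⟨hq, hqy⟩, hcard⟩, rfl⟩
    have hunion : (q ∪ {y}).image h = q.image h ∪ {t} := by
      rw [Finset.image_union, Finset.image_singleton, (hY y).mpr hy]
    have hle : (q ∪ {y}).card ≤ i + 1 := hcard ▸ Finset.card_union_le q {y}
    exact ⟨⟨H.image_mem_faces hq (by omega), hunion ▸ H.image_mem_faces hqy (by omega)⟩,
      (H.card_image hq).trans hcard⟩

theorem map_eq_iff_of_notMem (H : IsHandleAddition K D τ₁ τ₂ ψ h) (ht : {t} ∈ D.faces)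
    (htτ : t ∉ τ₁) : h y = t ↔ y = t := by
  have hfix : ∀ z, h z = t → z = t := fun z hz => by
    rw [← hz, H.fix z fun hzτ => htτ (hz ▸ H.map_mem_of_mem hzτ)]
  obtain ⟨r, -, hrt⟩ := H.exists_of_mem_faces ht
  obtain ⟨z, -, hzt⟩ := Finset.mem_image.mp (hrt ▸ Finset.mem_singleton_self t)
  obtain rfl := hfix z hzt
  exact ⟨hfix y, fun hy => hy ▸ hzt⟩

theorem singleton_mem_faces (H : IsHandleAddition K D τ₁ τ₂ ψ h) (ht : {t} ∈ D.faces)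
    (htτ : t ∉ τ₁) : {t} ∈ K.faces := by
  obtain ⟨r, hr, hrt⟩ := H.exists_of_mem_faces ht
  obtain ⟨z, hzr, hzt⟩ := Finset.mem_image.mp (hrt ▸ Finset.mem_singleton_self t)
  rw [H.map_eq_iff_of_notMem ht htτ] at hzt
  exact mem_faces_of_subset hr (Finset.singleton_subset_iff.mpr (hzt ▸ hzr)) (by simp)

theorem fnum_st_of_notMem (H : IsHandleAddition K D τ₁ τ₂ ψ h) (ht : {t} ∈ D.faces)
    (htτ : t ∉ τ₁) {i : ℕ} (hi : i + 2 < τ₁.card) : (D.st {t}).fnum i = (K.st {t}).fnum i := by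
  have hY : ∀ y, h y = t ↔ y ∈ ({t} : Finset ℕ) := by
    simpa using fun y => H.map_eq_iff_of_notMem ht htτ
  rw [fnum, fnum, H.filter_card_st hY hi, Finset.singleton_biUnion]
  refine Finset.card_image_of_injOn fun s hs s' hs' heq => ?_
  have hstar : ∀ {s : Finset ℕ}, s ∈ (K.st {t}).faces → (s : Set ℕ) ⊆ {x | {t, x} ∈ K.faces} :=
    fun hs x hx => mem_vertexSet_st.mp (subset_vertexSet hs hx)
  have heq' : h '' s = h '' s' := by exact_mod_cast congrArg (fun s : Finset ℕ => (s : Set ℕ)) heq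
  exact_mod_cast (H.injOn_neighbors t).image_eq_image_iff
    (hstar (Finset.mem_filter.mp hs).1) (hstar (Finset.mem_filter.mp hs').1) |>.mp heq'

theorem disjoint_vertexSet_st (H : IsHandleAddition K D τ₁ τ₂ ψ h) (hx : x ∈ τ₁) :
    Disjoint (K.st {x}).vertexSet (K.st {ψ x}).vertexSet := by
  refine Finset.disjoint_left.mpr fun z hz hz' => ?_
  rw [mem_vertexSet_st] at hz hz'
  exact H.admissible x hx z hz (Finset.pair_comm z _ ▸ hz')

theorem fnum_st_of_mem (H : IsHandleAddition K D τ₁ τ₂ ψ h) (htτ : t ∈ τ₁) {i : ℕ}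
    (hi : i + 2 < τ₁.card) :
    (D.st {t}).fnum i + τ₂.card.choose (i + 1) = (K.st {t}).fnum i + (K.st {ψ t}).fnum i := by
  have hY : ∀ y, h y = t ↔ y ∈ ({t, ψ t} : Finset ℕ) := by
    simpa using fun y => H.map_eq_iff_of_mem htτ
  set X := ({t, ψ t} : Finset ℕ).biUnion fun y => (K.st {y}).faces.filter fun s => s.card = i + 1
    with hXdef
  have hX : ∀ s, s ∈ X ↔ (s ∈ (K.st {t}).faces ∨ s ∈ (K.st {ψ t}).faces) ∧ s.card = i + 1 := by
    intro s
    simp only [hXdef, Finset.biUnion_insert, Finset.singleton_biUnion, Finset.mem_union,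
      Finset.mem_filter, or_and_right]
  have hXK : X ⊆ K.faces := fun s hs =>
    ((hX s).mp hs).1.elim (fun h => (mem_faces_st.mp h).1) fun h => (mem_faces_st.mp h).1
  have hτ₂ : X.filter (· ⊆ τ₂) = τ₂.powersetCard (i + 1) := by
    ext s
    simp only [Finset.mem_filter, Finset.mem_powersetCard, hX]
    exact ⟨fun hs => ⟨hs.2, hs.1.2⟩, fun hs => ⟨⟨Or.inr (mem_faces_st_of_mem H.mem₂
      (H.map_mem htτ) hs.1 (Finset.card_pos.mp (by omega))), hs.2⟩, hs.1⟩⟩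
  have hcard : X.card = (K.st {t}).fnum i + (K.st {ψ t}).fnum i := by
    rw [hXdef, Finset.biUnion_insert, Finset.singleton_biUnion, Finset.card_union_of_disjoint
      (disjoint_filter_card_faces (H.disjoint_vertexSet_st htτ) _), fnum, fnum]
  rw [fnum, H.filter_card_st hY hi, ← hcard, ← Finset.card_powersetCard, ← hτ₂]
  refine H.card_image_add hXK fun s hs hsτ => (hX _).mpr ⟨Or.inl ?_, ?_⟩
  · exact mem_faces_st_of_mem H.mem₁ htτ (H.image_subset hsτ)
      ((nonempty_of_mem_faces (hXK hs)).image h)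
  · rw [H.card_image (hXK hs), ((hX s).mp hs).2]

theorem card_eq (H : IsHandleAddition K D τ₁ τ₂ ψ h) : τ₂.card = τ₁.card := by
  rw [← H.image_eq]
  refine Finset.card_image_of_injOn fun x hx y hy hxy => ?_
  rw [← H.left_inv x hx, hxy, H.left_inv y hy]

theorem g2_add (H : IsHandleAddition K D τ₁ τ₂ ψ h) (hcard : τ₁.card = 4) :
    K.g2 + 10 = D.g2 := by
  have hf₀ := H.fnum_add (i := 0) (by omega)
  have hf₁ := H.fnum_add (i := 1) (by omega)
  simp only [H.card_eq, hcard, Nat.choose] at hf₀ hf₁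
  simp only [g2]
  omega

theorem g2_st_of_notMem (H : IsHandleAddition K D τ₁ τ₂ ψ h) (hcard : τ₁.card = 4)
    (ht : {t} ∈ D.faces) (htτ : t ∉ τ₁) : (D.st {t}).g2 = (K.st {t}).g2 := by
  rw [g2, g2, H.fnum_st_of_notMem ht htτ (by omega), H.fnum_st_of_notMem ht htτ (by omega)]

theorem g2_st_of_mem (H : IsHandleAddition K D τ₁ τ₂ ψ h) (hcard : τ₁.card = 4) (htτ : t ∈ τ₁) :
    (D.st {t}).g2 = (K.st {t}).g2 + (K.st {ψ t}).g2 := by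
  have hf₀ := H.fnum_st_of_mem htτ (i := 0) (by omega)
  have hf₁ := H.fnum_st_of_mem htτ (i := 1) (by omega)
  simp only [H.card_eq, hcard, Nat.choose] at hf₀ hf₁
  simp only [g2]
  omega

/-- The vertices identified to `t`, one or two, have disjoint stars in `K`, while the handle itself
raises `g₂` by `10`. -/
theorem g2_st_add_le (H : IsHandleAddition K D τ₁ τ₂ ψ h) (hK : K.IsPseudomanifold 3)
    (hcard : τ₁.card = 4) (ht : {t} ∈ D.faces) : (D.st {t}).g2 + 10 ≤ D.g2 := by
  rw [← H.g2_add hcard, add_le_add_iff_right]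
  by_cases htτ : t ∈ τ₁
  · have hne : t ≠ ψ t := fun h => Finset.disjoint_left.mp H.disjoint htτ (h ▸ H.map_mem htτ)
    have hmem : ∀ v ∈ ({t, ψ t} : Finset ℕ), {v} ∈ K.faces := by
      simpa [← mem_vertexSet] using And.intro (subset_vertexSet H.mem₁ htτ)
        (subset_vertexSet H.mem₂ (H.map_mem htτ))
    rw [H.g2_st_of_mem hcard htτ, ← Finset.sum_pair (f := fun v => (K.st {v}).g2) hne]
    refine hK.sum_g2_st_le hmem ?_
    rw [Finset.coe_pair, Set.pairwiseDisjoint_insert_of_notMem (by simpa using hne)]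
    simpa using H.disjoint_vertexSet_st htτ
  · rw [H.g2_st_of_notMem hcard ht htτ, ← Finset.sum_singleton (fun v => (K.st {v}).g2) t]
    exact hK.sum_g2_st_le (by simpa using H.singleton_mem_faces ht htτ) (by simp)

end IsHandleAddition

/-! ### Side functions -/

section SideFunction

variable {K : SComplex} {d : ℕ} {f g : Finset ℕ → ZMod 2} {e s F G R σ : Finset ℕ}

/-- A facet containing `e` contains exactly two of the ridges `insert w e`. -/
theorem IsPure.sum_jump_insert_eq_zero (hK : K.IsPure d) (f : Finset ℕ → ZMod 2)
    (he : e.card + 1 = d) : ∑ w ∈ K.vertexSet \ e, K.jump f (insert w e) = 0 := by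
  classical
  simp only [jump, Finset.sum_filter]
  rw [Finset.sum_comm]
  refine Finset.sum_eq_zero fun F hF => ?_
  rw [← Finset.sum_filter, Finset.sum_const]
  by_cases h : K.IsFacet F ∧ e ⊆ F
  · obtain ⟨hFacet, heF⟩ := h
    have hfilter : (K.vertexSet \ e).filter (fun w => K.IsFacet F ∧ insert w e ⊆ F) = F \ e := by
      ext w
      simp only [Finset.mem_filter, Finset.mem_sdiff, Finset.insert_subset_iff, hFacet, heF]
      have := @subset_vertexSet K F hF w
      tauto
    have hcard : (F \ e).card = 2 := by
      rw [Finset.card_sdiff_of_subset heF, hK.2 F hFacet]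
      omega
    rw [hfilter, hcard, CharTwo.two_nsmul]
  · rw [Finset.filter_false_of_mem fun w _ hw => h ⟨hw.1, (Finset.subset_insert w e).trans hw.2⟩,
      Finset.card_empty, zero_nsmul]

/-- Near a face `s`, the function `f` on facets changes exactly across the ridges that lie in the
missing simplex `σ`; that is, `f` distinguishes the two sides of `∂σ` around `s`. For `s = ∅` this
says that `∂σ` separates the whole complex. -/
def IsSideFunction (K : SComplex) (d : ℕ) (σ s : Finset ℕ) (f : Finset ℕ → ZMod 2) : Prop :=
  ∀ R ∈ K.faces, R.card = d → s ⊆ R → K.jump f R = if R ⊆ σ then 1 else 0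

theorem mem_faces_of_ssubset (hbdry : ∀ τ ∈ properFaces σ, τ ∈ K.faces) (hs : s.Nonempty)
    (hsσ : s ⊂ σ) : s ∈ K.faces :=
  hbdry s <| Finset.mem_filter.mpr
    ⟨Finset.mem_powerset.mpr hsσ.subset, hs.ne_empty, hsσ.ne⟩

theorem exists_eq_erase (hσ : σ.card = d + 1) (hRσ : R ⊆ σ) (hR : R.card = d) :
    ∃ a ∈ σ, R = σ.erase a := by
  have hcover : R ⋖ σ := Finset.covBy_iff_card_sdiff_eq_one.mpr
    ⟨hRσ, by rw [Finset.card_sdiff_of_subset hRσ]; omega⟩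
  obtain ⟨a, ha, h⟩ := Finset.covBy_iff_exists_erase.mp hcover
  exact ⟨a, ha, h.symm⟩

section Bdry

variable (hσ : σ.card = d + 1) (hbdry : ∀ τ ∈ properFaces σ, τ ∈ K.faces)
include hσ hbdry

/-- Apply the parity relation around `(σ.erase a).erase b`: only `σ.erase a` and `σ.erase b` can
contribute. -/
theorem IsPure.jump_erase_eq_jump_erase (hK : K.IsPure d) (hsσ : s ⊆ σ)
    (hf : ∀ R ∈ K.faces, R.card = d → s ⊆ R → ¬R ⊆ σ → K.jump f R = 0)
    {a b : ℕ} (ha : a ∈ σ) (hb : b ∈ σ) (has : a ∉ s) (hbs : b ∉ s) :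
    K.jump f (σ.erase a) = K.jump f (σ.erase b) := by
  obtain rfl | hab := eq_or_ne a b
  · rfl
  set e := (σ.erase a).erase b
  have hbe : insert b e = σ.erase a := Finset.insert_erase (by grind)
  have hae : insert a e = σ.erase b := by grind
  have hcard : e.card + 1 = d := by
    rw [Finset.card_erase_add_one (by grind), Finset.card_erase_of_mem ha]
    omega
  have hvertex : ∀ x ∈ σ, x ∈ K.vertexSet := fun x hx =>
    mem_vertexSet.mpr <| mem_faces_of_ssubset hbdry (by simp) <|
      (Finset.singleton_subset_iff.mpr hx).ssubset_of_ne (by grind)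
  have hsum := hK.sum_jump_insert_eq_zero f hcard
  rw [← Finset.sum_subset (s₁ := {b, a}) (by grind), Finset.sum_pair hab.symm, hbe, hae,
    CharTwo.add_eq_zero] at hsum
  · exact hsum
  · intro w hw hwab
    have hwe : w ∉ e := (Finset.mem_sdiff.mp hw).2
    have hwσ : ¬insert w e ⊆ σ := by grind
    by_cases hmem : insert w e ∈ K.faces
    · exact hf _ hmem (by rw [Finset.card_insert_of_notMem hwe, hcard]) (by grind) hwσ
    · exact jump_eq_zero_of_notMem_faces (by simp) hmem

theorem IsNormalPseudomanifold.isSideFunction_of_ne (hK : K.IsNormalPseudomanifold d) (hd : 0 < d)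
    (hsσ : s ⊆ σ) (hf : ∀ R ∈ K.faces, R.card = d → s ⊆ R → ¬R ⊆ σ → K.jump f R = 0)
    (hF : K.IsFacet F) (hG : K.IsFacet G) (hsF : s ⊆ F) (hsG : s ⊆ G) (hFG : f F ≠ f G) :
    K.IsSideFunction d σ s f := by
  obtain ⟨R, hRK, hRd, hsR, hR⟩ : ∃ R ∈ K.faces, R.card = d ∧ s ⊆ R ∧ K.jump f R ≠ 0 := by
    by_contra! h
    exact hFG (hK.eq_of_jump_eq_zero hd h hF hG hsF hsG)
  intro R' hRK' hRd' hsR'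
  split_ifs with hR'σ
  · have hRσ : R ⊆ σ := by_contra fun h => hR (hf R hRK hRd hsR h)
    obtain ⟨a, ha, rfl⟩ := exists_eq_erase hσ hRσ hRd
    obtain ⟨b, hb, rfl⟩ := exists_eq_erase hσ hR'σ hRd'
    rw [← hK.1.jump_erase_eq_jump_erase hσ hbdry hsσ hf ha hb (by grind) (by grind)]
    exact (by decide : ∀ x : ZMod 2, x ≠ 0 → x = 1) _ hR
  · exact hf R' hRK' hRd' hsR' hR'σ

end Bdry

theorem IsPure.isFacet_insert_of_mem_lk (hK : K.IsPure d) {x : ℕ} (hs : s ∈ (K.lk {x}).faces)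
    (hcard : s.card = d) : x ∉ s ∧ K.IsFacet (insert x s) := by
  rw [mem_faces_lk, Finset.union_comm, ← Finset.insert_eq,
    ← Finset.disjoint_iff_inter_eq_empty, Finset.disjoint_singleton_right] at hs
  exact ⟨hs.2.1, hK.isFacet_iff.mpr ⟨hs.2.2, by rw [Finset.card_insert_of_notMem hs.2.1, hcard]⟩⟩

theorem IsPure.erase_mem_lk (hK : K.IsPure d) (hd : 0 < d) (hF : K.IsFacet F) {x : ℕ}
    (hx : x ∈ F) : F.erase x ∈ (K.lk {x}).faces ∧ (F.erase x).card = d := by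
  have hcard : (F.erase x).card = d := by
    rw [Finset.card_erase_of_mem hx, hK.2 F hF, Nat.add_sub_cancel]
  exact ⟨mem_faces_lk_singleton.mpr ⟨mem_faces_st_of_mem hF.1 hx (F.erase_subset x)
    (Finset.card_pos.mp (hcard ▸ hd)), Finset.notMem_erase x F⟩, hcard⟩

theorem IsPure.eq_inter_of_ridge (hK : K.IsPure d) (hF : K.IsFacet F) (hG : K.IsFacet G)
    (hFG : F ≠ G) (hR : R.card = d) (hRF : R ⊆ F) (hRG : R ⊆ G) : R = F ∩ G := by
  have hcard := (hK.facetAdj_of_ridge hF hG hFG hR hRF hRG).2.2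
  have := hK.2 F hF
  exact Finset.eq_of_subset_of_card_le (Finset.subset_inter hRF hRG) (by omega)

/-- The side function records which facets at `x` have a triangle opposite `x` that is reachable
from one of the two separated triangles. -/
theorem SeparatesLink.exists_isSideFunction {x : ℕ}
    (hsep : SeparatesLink (K.lk {x}) (σ.erase x)) (hK : K.IsNormalPseudomanifold 3)
    (hσ : σ.card = 4) (hbdry : ∀ τ ∈ properFaces σ, τ ∈ K.faces) (hx : x ∈ σ) :
    ∃ f, K.IsSideFunction 3 σ {x} f := by
  classical
  obtain ⟨p, q, hp, hq, hp3, hq3, hpq⟩ := hsep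
  set crosses : Finset ℕ → Finset ℕ → Prop := fun p q =>
    p ∈ (K.lk {x}).faces ∧ q ∈ (K.lk {x}).faces ∧ p.card = 3 ∧ q.card = 3 ∧ (p ∩ q).card = 2 ∧
      ¬p ∩ q ⊆ σ.erase x
  obtain ⟨hxp, hpK⟩ := hK.1.isFacet_insert_of_mem_lk hp hp3
  obtain ⟨hxq, hqK⟩ := hK.1.isFacet_insert_of_mem_lk hq hq3
  have hcrosses : ∀ F G R, K.IsFacet F → K.IsFacet G → R ⊆ F → R ⊆ G → R.card = 3 → x ∈ R →
      ¬R ⊆ σ → F ≠ G → crosses (F.erase x) (G.erase x) := by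
    intro F G R hF hG hRF hRG hR hxR hRσ hFG
    obtain ⟨hFl, hF3⟩ := hK.1.erase_mem_lk (by norm_num) hF (hRF hxR)
    obtain ⟨hGl, hG3⟩ := hK.1.erase_mem_lk (by norm_num) hG (hRG hxR)
    have herase : F.erase x ∩ G.erase x = R.erase x := by
      rw [hK.1.eq_inter_of_ridge hF hG hFG hR hRF hRG, Finset.inter_erase, Finset.erase_inter,
        Finset.erase_eq_of_notMem (Finset.notMem_erase x _)]
    refine ⟨hFl, hGl, hF3, hG3, ?_, fun h => hRσ ?_⟩
    · rw [herase, Finset.card_erase_of_mem hxR, hR]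
    · rw [← Finset.insert_erase hx, ← Finset.insert_erase hxR, ← herase]
      exact Finset.insert_subset_insert x h
  refine ⟨fun F => if Relation.ReflTransGen crosses p (F.erase x) then 1 else 0,
    hK.isSideFunction_of_ne hσ hbdry (by norm_num) (by simpa using hx)
      (fun R hRK hR hxR hRσ => ?_) hpK hqK (by simp) (by simp) ?_⟩
  · rw [Finset.singleton_subset_iff] at hxR
    refine (hK.isPseudomanifold.jump_eq_zero_iff hRK hR).mpr fun F G hF hG hRF hRG => ?_
    obtain rfl | hFG := eq_or_ne F G
    · rfl
    · exact if_congr ⟨fun h => h.tail (hcrosses F G R hF hG hRF hRG hR hxR hRσ hFG),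
        fun h => h.tail (hcrosses G F R hG hF hRG hRF hR hxR hRσ hFG.symm)⟩ rfl rfl
  · simp [Finset.erase_insert hxp, Finset.erase_insert hxq, hpq, Relation.ReflTransGen.refl]

theorem IsSideFunction.add_const (hf : K.IsSideFunction d σ s f) (hK : K.IsPseudomanifold d)
    (c : ZMod 2) : K.IsSideFunction d σ s fun F => f F + c := fun R hRK hR hsR => by
  rw [jump_add, hK.jump_const hRK hR, add_zero, hf R hRK hR hsR]

/-- The sum of two side functions has no jumps. -/
theorem IsSideFunction.eq_of_eq (hf : K.IsSideFunction d σ s f) {s' : Finset ℕ}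
    (hg : K.IsSideFunction d σ s' g) (hK : K.IsNormalPseudomanifold d) (hd : 0 < d)
    (hF : K.IsFacet F) (hsF : s ∪ s' ⊆ F) (hfg : f F = g F)
    (hG : K.IsFacet G) (hsG : s ∪ s' ⊆ G) : f G = g G := by
  have hsum : f F + g F = f G + g G := by
    refine hK.eq_of_jump_eq_zero (f := fun H => f H + g H) hd (fun R hRK hR hsR => ?_)
      hF hG hsF hsG
    rw [jump_add, hf R hRK hR (Finset.union_subset_left hsR),
      hg R hRK hR (Finset.union_subset_right hsR), CharTwo.add_self_eq_zero]
  rwa [hfg, CharTwo.add_self_eq_zero, eq_comm, CharTwo.add_eq_zero] at hsum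

section Gluing

variable (hσ : σ.card = d + 1) (hbdry : ∀ τ ∈ properFaces σ, τ ∈ K.faces)
include hσ hbdry

theorem exists_isFacet_superset_of_card_le (hsσ : s ⊆ σ) (hs : s.Nonempty) (hsd : s.card ≤ d) :
    ∃ F, K.IsFacet F ∧ s ⊆ F :=
  exists_isFacet_superset <| mem_faces_of_ssubset hbdry hs <|
    hsσ.ssubset_of_ne fun h => by rw [h] at hsd; omega

/-- Normalise the side functions at the vertices of `σ` to agree with the one at a base vertex
`x₀`; a facet containing `x`, `y` and `x₀` shows that those at `x` and `y` then agree as well. -/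
theorem IsNormalPseudomanifold.exists_compatible (hK : K.IsNormalPseudomanifold d) (hd : 3 ≤ d)
    {f : ℕ → Finset ℕ → ZMod 2} (hf : ∀ x ∈ σ, K.IsSideFunction d σ {x} (f x)) :
    ∃ g : ℕ → Finset ℕ → ZMod 2, (∀ x ∈ σ, K.IsSideFunction d σ {x} (g x)) ∧
      ∀ x ∈ σ, ∀ y ∈ σ, ∀ F, K.IsFacet F → x ∈ F → y ∈ F → g x F = g y F := by
  obtain ⟨x₀, hx₀⟩ : σ.Nonempty := Finset.card_pos.mp (by omega)
  have hbase : ∀ x ∈ σ, ∃ g, K.IsSideFunction d σ {x} g ∧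
      ∀ F, K.IsFacet F → {x} ∪ {x₀} ⊆ F → g F = f x₀ F := by
    intro x hx
    obtain ⟨F, hF, hxF⟩ := exists_isFacet_superset_of_card_le hσ hbdry (s := {x} ∪ {x₀})
      (by grind) (by simp) ((Finset.card_union_le _ _).trans (by simp; omega))
    have hg := (hf x hx).add_const hK.isPseudomanifold (f x F + f x₀ F)
    refine ⟨_, hg, fun G hG hxG =>
      hg.eq_of_eq (hf x₀ hx₀) hK (by omega) hF hxF ?_ hG hxG⟩
    rw [← add_assoc, CharTwo.add_self_eq_zero, zero_add]
  choose! g hg hgx₀ using hbase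
  refine ⟨g, hg, fun x hx y hy F hF hxF hyF => ?_⟩
  obtain ⟨G, hG, hxyG⟩ := exists_isFacet_superset_of_card_le hσ hbdry (s := {x, y, x₀})
    (by grind) (by simp) (Finset.card_le_three.trans hd)
  refine (hg x hx).eq_of_eq (hg y hy) hK (by omega) hG (by grind) ?_ hF (by grind)
  rw [hgx₀ x hx G hG (by grind), hgx₀ y hy G hG (by grind)]

theorem IsNormalPseudomanifold.exists_isSideFunction (hK : K.IsNormalPseudomanifold d)
    (hd : 3 ≤ d) (h : ∀ x ∈ σ, ∃ f, K.IsSideFunction d σ {x} f) :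
    ∃ f, ∀ x ∈ σ, K.IsSideFunction d σ {x} f := by
  classical
  choose! f hf using h
  obtain ⟨g, hg, hgg⟩ := hK.exists_compatible hσ hbdry hd hf
  refine ⟨fun F => if h : (σ ∩ F).Nonempty then g h.choose F else 0, fun x hx R hRK hR hxR => ?_⟩
  rw [← hg x hx R hRK hR hxR]
  refine jump_congr fun F hF hRF => ?_
  have hxF : x ∈ F := hRF (hxR (Finset.mem_singleton_self x))
  have hne : (σ ∩ F).Nonempty := ⟨x, Finset.mem_inter.mpr ⟨hx, hxF⟩⟩
  obtain ⟨hcσ, hcF⟩ := Finset.mem_inter.mp hne.choose_spec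
  rw [dif_pos hne]
  exact hgg _ hcσ x hx F hF hcF hxF

end Gluing

end SideFunction

section SideFacets

variable {K : SComplex} {d : ℕ} {f : Finset ℕ → ZMod 2} {ε : ZMod 2} {s F H R σ : Finset ℕ}

section OfFacets

variable {Z : Finset (Finset ℕ)}

/-- The simplicial complex generated by the sets in `Z`. -/
def ofFacets (Z : Finset (Finset ℕ)) : SComplex where
  faces := (Z.biUnion Finset.powerset).erase ∅
  not_empty_mem := Finset.notMem_erase ∅ _
  down_closed s hs t hts ht := by
    simp only [Finset.mem_erase, Finset.mem_biUnion, Finset.mem_powerset] at hs ⊢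
    obtain ⟨-, F, hF, hsF⟩ := hs
    exact ⟨ht, F, hF, hts.trans hsF⟩

theorem mem_faces_ofFacets : s ∈ (ofFacets Z).faces ↔ s.Nonempty ∧ ∃ F ∈ Z, s ⊆ F := by
  simp [ofFacets, Finset.nonempty_iff_ne_empty]

theorem isFacet_ofFacets (hZ : ∀ F ∈ Z, F.card = d + 1) : (ofFacets Z).IsFacet F ↔ F ∈ Z := by
  have hmem : ∀ F ∈ Z, F ∈ (ofFacets Z).faces := fun F hF => mem_faces_ofFacets.mpr
    ⟨Finset.card_pos.mp (by rw [hZ F hF]; exact d.succ_pos), F, hF, subset_rfl⟩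
  constructor
  · rintro ⟨hF, hmax⟩
    obtain ⟨-, G, hG, hFG⟩ := mem_faces_ofFacets.mp hF
    rwa [hmax G (hmem G hG) hFG]
  · refine fun hF => ⟨hmem F hF, fun t ht hFt => ?_⟩
    obtain ⟨-, G, hG, htG⟩ := mem_faces_ofFacets.mp ht
    exact hFt.antisymm (htG.trans (Finset.eq_of_subset_of_card_le (hFt.trans htG)
      (by rw [hZ F hF, hZ G hG])).superset)

theorem isPure_ofFacets (hne : Z.Nonempty) (hZ : ∀ F ∈ Z, F.card = d + 1) :
    (ofFacets Z).IsPure d := by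
  obtain ⟨F, hF⟩ := hne
  exact ⟨⟨F, ((isFacet_ofFacets hZ).mpr hF).1⟩, fun F hF => hZ F ((isFacet_ofFacets hZ).mp hF)⟩

end OfFacets

open Classical in
/-- The facets on which `f` takes the value `ε`, together with the simplex `σ` closing them up. -/
noncomputable def sideFacets (K : SComplex) (σ : Finset ℕ) (f : Finset ℕ → ZMod 2) (ε : ZMod 2) :
    Finset (Finset ℕ) :=
  insert σ {F ∈ K.faces | K.IsFacet F ∧ f F = ε}

theorem mem_sideFacets : F ∈ K.sideFacets σ f ε ↔ F = σ ∨ K.IsFacet F ∧ f F = ε := by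
  simp only [sideFacets, Finset.mem_insert, Finset.mem_filter]
  exact or_congr_right ⟨And.right, fun h => ⟨h.1.1, h⟩⟩

theorem self_mem_sideFacets : σ ∈ K.sideFacets σ f ε := mem_sideFacets.mpr (Or.inl rfl)

theorem IsFacet.mem_sideFacets (hF : K.IsFacet F) (hε : f F = ε) : F ∈ K.sideFacets σ f ε :=
  SComplex.mem_sideFacets.mpr (Or.inr ⟨hF, hε⟩)

theorem card_of_mem_sideFacets (hK : K.IsPure d) (hσ : σ.card = d + 1) :
    ∀ F ∈ K.sideFacets σ f ε, F.card = d + 1 := fun F hF => by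
  obtain rfl | hF := mem_sideFacets.mp hF
  exacts [hσ, hK.2 F hF.1]

section Missing

variable (hσ : σ.card = d + 1) (hσK : σ ∉ K.faces) (hbdry : ∀ τ ∈ properFaces σ, τ ∈ K.faces)

include hbdry in
theorem mem_faces_of_subset_sideFacets (hF : F ∈ K.sideFacets σ f ε) (hsF : s ⊆ F)
    (hs : s.Nonempty) (hsσ : s ≠ σ) : s ∈ K.faces := by
  obtain rfl | hF := mem_sideFacets.mp hF
  · exact mem_faces_of_ssubset hbdry hs (hsF.ssubset_of_ne hsσ)
  · exact mem_faces_of_subset hF.1.1 hsF hs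

include hσ hbdry in
theorem ridge_mem_faces (hd : 0 < d) (hF : F ∈ K.sideFacets σ f ε) (hRF : R ⊆ F)
    (hR : R.card = d) : R ∈ K.faces :=
  mem_faces_of_subset_sideFacets hbdry hF hRF (Finset.card_pos.mp (hR ▸ hd))
    fun h => by rw [h, hσ] at hR; omega

include hσ hσK hbdry in
/-- Across a ridge in `σ` exactly one facet has the value `ε`, and `σ` replaces the other one. -/
theorem IsPseudomanifold.exists_sideFacets (hK : K.IsPseudomanifold d) (hd : 0 < d)
    (hR : R.card = d) (hf : K.jump f R = if R ⊆ σ then 1 else 0)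
    (hH : H ∈ K.sideFacets σ f ε) (hRH : R ⊆ H) :
    ∃ F G, F ≠ G ∧ ∀ J, J ∈ K.sideFacets σ f ε ∧ R ⊆ J ↔ J = F ∨ J = G := by
  have hRK := ridge_mem_faces hσ hbdry hd hH hRH hR
  by_cases hRσ : R ⊆ σ
  · rw [if_pos hRσ] at hf
    obtain ⟨F, hF⟩ := hK.exists_isFacet_eq_of_jump_ne_zero hRK hR (hf ▸ one_ne_zero) ε
    have hFK : F ∈ K.faces := ((hF F).mpr rfl).1.1.1
    refine ⟨σ, F, fun h => hσK (h ▸ hFK), fun J => ?_⟩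
    rw [mem_sideFacets, or_and_right, hF, and_iff_left_of_imp]
    exact fun h => h ▸ hRσ
  · rw [if_neg hRσ, hK.jump_eq_zero_iff hRK hR] at hf
    obtain ⟨hHK, rfl⟩ := (mem_sideFacets.mp hH).resolve_left fun h => hRσ (h ▸ hRH)
    obtain ⟨F, G, hFG, h⟩ := hK.exists_facets hRK hR
    refine ⟨F, G, hFG, fun J => ?_⟩
    rw [← h, mem_sideFacets]
    constructor
    · rintro ⟨rfl | hJ, hRJ⟩
      exacts [absurd hRJ hRσ, ⟨hJ.1, hRJ⟩]
    · exact fun ⟨hJ, hRJ⟩ => ⟨Or.inr ⟨hJ, hf J H hJ hHK hRJ hRH⟩, hRJ⟩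

end Missing

end SideFacets

/-! ### Connected sums -/

section ConnSum

variable {K : SComplex} {d : ℕ} {f : Finset ℕ → ZMod 2} {ε : ZMod 2} {s F G σ : Finset ℕ}

/-- Around each ridge containing `s`, the function `g` is constant on facets. -/
def IsConstAroundRidges (K : SComplex) (d : ℕ) (s : Finset ℕ) (g : Finset ℕ → ZMod 2) : Prop :=
  ∀ R, R.card = d → s ⊆ R → ∀ F G, K.IsFacet F → K.IsFacet G → R ⊆ F → R ⊆ G → g F = g G

/-- Any two facets containing `s` are joined by a chain of facets containing `s` in which
consecutive ones share a ridge containing `s`. This is encoded by two-valued functions on facets,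
which cannot separate the ends of such a chain without changing value across a ridge. -/
def IsRidgeConnected (K : SComplex) (d : ℕ) (s : Finset ℕ) : Prop :=
  ∀ g, K.IsConstAroundRidges d s g →
    ∀ F G, K.IsFacet F → K.IsFacet G → s ⊆ F → s ⊆ G → g F = g G

/-- Reachability from a fixed facet is a two-valued function. -/
theorem IsRidgeConnected.stronglyConnected (h : K.IsRidgeConnected d ∅) (hK : K.IsPure d) :
    K.StronglyConnected := by
  classical
  intro F G hF hG
  have := h (fun H => if Relation.ReflTransGen K.FacetAdj F H then 1 else 0)
    (fun R hR _ A B hA hB hRA hRB => ?_) F G hF hG F.empty_subset G.empty_subset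
  · by_contra hFG
    simp [hFG, Relation.ReflTransGen.refl] at this
  · obtain rfl | hAB := eq_or_ne A B
    · rfl
    · exact if_congr ⟨fun h => h.tail (hK.facetAdj_of_ridge hA hB hAB hR hRA hRB),
        fun h => h.tail (hK.facetAdj_of_ridge hB hA hAB.symm hR hRB hRA)⟩ rfl rfl

theorem pair_mem_faces_lk {a b : ℕ} (hF : F ∈ K.faces) (hsF : s ⊆ F) (ha : a ∈ F \ s)
    (hb : b ∈ F \ s) : {a, b} ∈ (K.lk s).faces := by
  have hab : {a, b} ⊆ F \ s := Finset.insert_subset ha (Finset.singleton_subset_iff.mpr hb)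
  have habF := hab.trans Finset.sdiff_subset
  exact mem_faces_lk.mpr ⟨mem_faces_of_subset hF habF (by simp),
    Finset.disjoint_iff_inter_eq_empty.mp (Finset.sdiff_disjoint.mono_left hab),
    mem_faces_of_subset hF (Finset.union_subset habF hsF) (by simp)⟩

/-- A facet around `s` is assigned `1` when its vertices outside `s` are reachable in the link
from a fixed vertex. -/
theorem IsRidgeConnected.conn_lk (h : K.IsRidgeConnected d s) (hK : K.IsPure d)
    (hs : s ∈ K.faces) (hsd : s.card < d) : (K.lk s).Conn := by
  classical
  have hvertex : ∀ {v}, {v} ∈ (K.lk s).faces → ∃ F, K.IsFacet F ∧ v ∈ F \ s ∧ s ⊆ F := by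
    intro v hv
    rw [singleton_mem_faces_lk] at hv
    obtain ⟨F, hF, hvF⟩ := exists_isFacet_superset hv.2
    rw [Finset.insert_subset_iff] at hvF
    exact ⟨F, hF, Finset.mem_sdiff.mpr ⟨hvF.1, hv.1⟩, hvF.2⟩
  refine ⟨?_, fun u v hu hv => ?_⟩
  · obtain ⟨F, hF, hsF⟩ := exists_isFacet_superset hs
    obtain ⟨w, hw⟩ : (F \ s).Nonempty := Finset.sdiff_nonempty_of_card_lt_card
      (by rw [hK.2 F hF]; omega)
    exact ⟨_, pair_mem_faces_lk hF.1 hsF hw hw⟩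
  obtain ⟨F, hF, huF, hsF⟩ := hvertex hu
  obtain ⟨G, hG, hvG, hsG⟩ := hvertex hv
  set reach := Relation.ReflTransGen (K.lk s).VertAdj u
  have hreach : ∀ {A w}, K.IsFacet A → s ⊆ A → w ∈ A \ s → (∃ a ∈ A \ s, reach a) → reach w :=
    fun hA hsA hw ⟨a, ha, hua⟩ => hua.tail (pair_mem_faces_lk hA.1 hsA ha hw)
  have heq := h (fun A => if ∃ a ∈ A \ s, reach a then 1 else 0)
    (fun R hR hsR A B hA hB hRA hRB => ?_) F G hF hG hsF hsG
  · rw [if_pos ⟨u, huF, Relation.ReflTransGen.refl⟩] at heq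
    exact hreach hG hsG hvG (by_contra fun hne => one_ne_zero (heq.trans (if_neg hne)))
  · obtain ⟨w, hw⟩ : (R \ s).Nonempty := Finset.sdiff_nonempty_of_card_lt_card (by omega)
    have hwA := Finset.sdiff_subset_sdiff hRA subset_rfl hw
    have hwB := Finset.sdiff_subset_sdiff hRB subset_rfl hw
    exact if_congr ⟨fun ha => ⟨w, hwB, hreach hA (hsR.trans hRA) hwA ha⟩,
      fun hb => ⟨w, hwA, hreach hB (hsR.trans hRB) hwB hb⟩⟩ rfl rfl

section Sides

variable (hK : K.IsNormalPseudomanifold d) (hd : 0 < d) (hσ : σ.card = d + 1) (hσK : σ ∉ K.faces)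
  (hbdry : ∀ τ ∈ properFaces σ, τ ∈ K.faces)

theorem IsSideFunction.mono (hf : K.IsSideFunction d σ s f) {s' : Finset ℕ} (hs : s ⊆ s') :
    K.IsSideFunction d σ s' f :=
  fun R hRK hR hsR => hf R hRK hR (hs.trans hsR)

include hK hd in
theorem IsSideFunction.eq_of_not_subset (hf : K.IsSideFunction d σ s f) (hsσ : ¬s ⊆ σ)
    (hF : K.IsFacet F) (hG : K.IsFacet G) (hsF : s ⊆ F) (hsG : s ⊆ G) : f F = f G :=
  hK.eq_of_jump_eq_zero hd (fun R hRK hR hsR => by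
    rw [hf R hRK hR hsR, if_neg fun h => hsσ (hsR.trans h)]) hF hG hsF hsG

include hK hd hσ hbdry in
theorem IsSideFunction.exists_isFacet_erase (hf : K.IsSideFunction d σ s f) {a : ℕ} (ha : a ∈ σ)
    (hsa : s ⊆ σ.erase a) (ε : ZMod 2) : ∃ F, K.IsFacet F ∧ f F = ε ∧ σ.erase a ⊆ F := by
  have hR : (σ.erase a).card = d := by rw [Finset.card_erase_of_mem ha, hσ, Nat.add_sub_cancel]
  have hRK := mem_faces_of_ssubset hbdry (Finset.card_pos.mp (by omega)) (Finset.erase_ssubset ha)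
  have hjump := hf _ hRK hR hsa
  rw [if_pos (σ.erase_subset a)] at hjump
  obtain ⟨F, hF⟩ := hK.isPseudomanifold.exists_isFacet_eq_of_jump_ne_zero hRK hR
    (hjump ▸ one_ne_zero) ε
  obtain ⟨⟨hFK, hFε⟩, hRF⟩ := (hF F).mpr rfl
  exact ⟨F, hFK, hFε, hRF⟩

include hK hd in
/-- A function on the facets of one side extends to `K` by its value at `σ` on the other side. -/
theorem IsSideFunction.extend_eq (hf : K.IsSideFunction d σ ∅ f) {g : Finset ℕ → ZMod 2}
    (hg : ∀ R, R.card = d → s ⊆ R → ∀ F G, F ∈ K.sideFacets σ f ε → G ∈ K.sideFacets σ f ε →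
      R ⊆ F → R ⊆ G → g F = g G)
    (hF : K.IsFacet F) (hG : K.IsFacet G) (hsF : s ⊆ F) (hsG : s ⊆ G) :
    (if f F = ε then g F else g σ) = if f G = ε then g G else g σ := by
  refine hK.eq_of_jump_eq_zero (f := fun F => if f F = ε then g F else g σ) hd
    (fun R hRK hR hsR => ?_) hF hG hsF hsG
  refine (hK.isPseudomanifold.jump_eq_zero_iff hRK hR).mpr fun A B hA hB hRA hRB => ?_
  by_cases hRσ : R ⊆ σ
  · have hσval : ∀ {A}, K.IsFacet A → R ⊆ A → (if f A = ε then g A else g σ) = g σ :=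
      fun {A} hA hRA => ite_eq_right_iff.mpr fun hAε =>
        hg R hR hsR A σ (hA.mem_sideFacets hAε) self_mem_sideFacets hRA hRσ
    exact (hσval hA hRA).trans (hσval hB hRB).symm
  · have hAB := (hf.mono R.empty_subset).eq_of_not_subset hK hd hRσ hA hB hRA hRB
    rw [hAB]
    split_ifs with hBε
    · exact hg R hR hsR A B (hA.mem_sideFacets (hAB.trans hBε)) (hB.mem_sideFacets hBε) hRA hRB
    · rfl

include hK hd hσ hbdry in
theorem IsSideFunction.isRidgeConnected (hf : K.IsSideFunction d σ ∅ f) (hsd : s.card ≤ d) :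
    (ofFacets (K.sideFacets σ f ε)).IsRidgeConnected d s := by
  simp only [IsRidgeConnected, IsConstAroundRidges,
    isFacet_ofFacets (card_of_mem_sideFacets hK.1 hσ)]
  intro g hg
  have hval : ∀ {F}, F ∈ K.sideFacets σ f ε → s ⊆ F →
      ∃ F', K.IsFacet F' ∧ f F' = ε ∧ s ⊆ F' ∧ g F = g F' := by
    intro F hF hsF
    obtain rfl | ⟨hFK, hFε⟩ := mem_sideFacets.mp hF
    · obtain ⟨a, haF, has⟩ := Finset.exists_mem_notMem_of_card_lt_card (s := s) (t := F) (by omega)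
      obtain ⟨A, hA, hAε, haA⟩ :=
        hf.exists_isFacet_erase hK hd hσ hbdry haF (Finset.empty_subset _) ε
      have hsR := Finset.subset_erase.mpr ⟨hsF, has⟩
      exact ⟨A, hA, hAε, hsR.trans haA, hg _ (by rw [Finset.card_erase_of_mem haF]; omega) hsR F A
        hF (hA.mem_sideFacets hAε) (F.erase_subset a) haA⟩
    · exact ⟨F, hFK, hFε, hsF, rfl⟩
  intro F G hF hG hsF hsG
  obtain ⟨F', hF', hFε, hsF', hgF⟩ := hval hF hsF
  obtain ⟨G', hG', hGε, hsG', hgG⟩ := hval hG hsG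
  have hext := hf.extend_eq hK hd hg hF' hG' hsF' hsG'
  rwa [if_pos hFε, if_pos hGε, ← hgF, ← hgG] at hext

include hK hd hσ hσK hbdry in
theorem IsSideFunction.isNormalPseudomanifold_ofFacets (hf : K.IsSideFunction d σ ∅ f) :
    (ofFacets (K.sideFacets σ f ε)).IsNormalPseudomanifold d := by
  have hcard := card_of_mem_sideFacets (f := f) (ε := ε) hK.1 hσ
  have hpure := isPure_ofFacets ⟨σ, self_mem_sideFacets⟩ hcard
  have hconn := fun {s} => hf.isRidgeConnected (s := s) (ε := ε) hK hd hσ hbdry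
  refine ⟨hpure, (hconn (by simp)).stronglyConnected hpure, fun R hRZ hR => ?_,
    fun s hs hsd => (hconn (by omega)).conn_lk hpure hs ?_⟩
  · obtain ⟨-, F, hF, hRF⟩ := mem_faces_ofFacets.mp hRZ
    rw [hpure.card_facets_eq_two_iff]
    simp only [isFacet_ofFacets hcard]
    exact hK.isPseudomanifold.exists_sideFacets hσ hσK hbdry hd hR
      (hf R (ridge_mem_faces hσ hbdry hd hF hRF hR) hR R.empty_subset) hF hRF
  · have := Finset.card_pos.mpr (nonempty_of_mem_faces hs)
    omega

end Sides

theorem mem_faces_iff_exists_sideFacets (hσK : σ ∉ K.faces)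
    (hbdry : ∀ τ ∈ properFaces σ, τ ∈ K.faces) :
    s ∈ K.faces ↔ (∃ ε, s ∈ (ofFacets (K.sideFacets σ f ε)).faces) ∧ s ≠ σ := by
  simp only [mem_faces_ofFacets]
  constructor
  · intro hs
    obtain ⟨F, hF, hsF⟩ := exists_isFacet_superset hs
    exact ⟨⟨f F, nonempty_of_mem_faces hs, F, hF.mem_sideFacets rfl, hsF⟩, fun h => hσK (h ▸ hs)⟩
  · rintro ⟨⟨ε, hs, F, hF, hsF⟩, hsσ⟩
    exact mem_faces_of_subset_sideFacets hbdry hF hsF hs hsσ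

theorem IsSideFunction.formedByConnSum (hf : K.IsSideFunction 3 σ ∅ f)
    (hK : K.IsNormalPseudomanifold 3) (hσ : σ.card = 4) (hσK : σ ∉ K.faces)
    (hbdry : ∀ τ ∈ properFaces σ, τ ∈ K.faces) : FormedByConnSum K := by
  have hcard := fun ε => card_of_mem_sideFacets (f := f) (ε := ε) hK.1 hσ
  have hσside := fun ε => (isFacet_ofFacets (hcard ε)).mpr self_mem_sideFacets
  refine ⟨ofFacets (K.sideFacets σ f 0), ofFacets (K.sideFacets σ f 1),
    hf.isNormalPseudomanifold_ofFacets hK (by norm_num) hσ hσK hbdry,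
    hf.isNormalPseudomanifold_ofFacets hK (by norm_num) hσ hσK hbdry,
    σ, σ, id, hσside 0, hσ, hσside 1, hσ, Set.injOn_id _, Finset.image_id, ?_, ?_⟩
  · intro v hv hvσ hv'
    obtain ⟨-, F, hF, hvF⟩ := mem_faces_ofFacets.mp (mem_vertexSet.mp hv)
    obtain ⟨-, G, hG, hvG⟩ := mem_faces_ofFacets.mp (mem_vertexSet.mp hv')
    have hvσ' : ¬{v} ⊆ σ := by simpa using hvσ
    obtain ⟨hFK, hF1⟩ := (mem_sideFacets.mp hF).resolve_left fun h => hvσ' (h ▸ hvF)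
    obtain ⟨hGK, hG0⟩ := (mem_sideFacets.mp hG).resolve_left fun h => hvσ' (h ▸ hvG)
    have := (hf.mono (Finset.empty_subset _)).eq_of_not_subset hK (by norm_num) hvσ' hFK hGK hvF hvG
    simp [hF1, hG0] at this
  · have himage : (Finset.image id : Finset ℕ → Finset ℕ) = id := funext fun _ => Finset.image_id
    have hexists : ∀ {P : ZMod 2 → Prop}, (∃ ε, P ε) ↔ P 0 ∨ P 1 := Fin.exists_fin_two
    ext s
    rw [himage, Finset.image_id, Finset.mem_sdiff, Finset.mem_union, Finset.mem_singleton,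
      mem_faces_iff_exists_sideFacets (f := f) hσK hbdry, hexists]

end ConnSum

/-! ### Cutting open -/

section Cut

variable {K : SComplex} {d N : ℕ} {f : Finset ℕ → ZMod 2} {ε ε' : ZMod 2} {v w : ℕ}
  {s t F G H R σ : Finset ℕ}

/-- The vertex `v` as seen from side `ε`: the vertices of `σ` are doubled, their copies on side `1`
being shifted by `N`. -/
def sideVertex (N : ℕ) (σ : Finset ℕ) (ε : ZMod 2) (v : ℕ) : ℕ :=
  if v ∈ σ ∧ ε = 1 then v + N else v

theorem sideVertex_eq_iff (hv : v < N) (hw : w < N) :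
    sideVertex N σ ε v = sideVertex N σ ε' w ↔ v = w ∧ (v ∈ σ → ε = ε') := by
  have hcases : ∀ x y : ZMod 2, x = y ↔ (x = 1 ↔ y = 1) := by decide
  rw [hcases ε ε']
  unfold sideVertex
  split_ifs with h h' h' <;> grind

theorem image_sideVertex_subset_iff (hs : s ⊆ Finset.range N) (ht : t ⊆ Finset.range N) :
    s.image (sideVertex N σ ε) ⊆ t.image (sideVertex N σ ε') ↔
      s ⊆ t ∧ ((s ∩ σ).Nonempty → ε = ε') := by
  have hmem : ∀ v ∈ s,
      sideVertex N σ ε v ∈ t.image (sideVertex N σ ε') ↔ v ∈ t ∧ (v ∈ σ → ε = ε') := by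
    intro v hv
    rw [Finset.mem_image]
    constructor
    · rintro ⟨w, hw, h⟩
      obtain ⟨rfl, hε⟩ := (sideVertex_eq_iff (Finset.mem_range.mp (ht hw))
        (Finset.mem_range.mp (hs hv))).mp h
      exact ⟨hw, fun hσ => (hε hσ).symm⟩
    · rintro ⟨hvt, hε⟩
      have hvN := Finset.mem_range.mp (hs hv)
      exact ⟨v, hvt, ((sideVertex_eq_iff hvN hvN).mpr ⟨rfl, hε⟩).symm⟩
  rw [Finset.image_subset_iff, forall₂_congr hmem]
  simp only [Finset.Nonempty, Finset.mem_inter]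
  exact ⟨fun h => ⟨fun v hv => (h v hv).1, fun ⟨v, hv, hσ⟩ => (h v hv).2 hσ⟩,
    fun h v hv => ⟨h.1 hv, fun hσ => h.2 ⟨v, hv, hσ⟩⟩⟩

theorem eq_of_image_sideVertex_eq (hs : s ⊆ Finset.range N) (ht : t ⊆ Finset.range N)
    (h : s.image (sideVertex N σ ε) = t.image (sideVertex N σ ε')) : s = t :=
  ((image_sideVertex_subset_iff hs ht).mp h.subset).1.antisymm
    ((image_sideVertex_subset_iff ht hs).mp h.superset).1

theorem card_image_sideVertex (hs : s ⊆ Finset.range N) :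
    (s.image (sideVertex N σ ε)).card = s.card :=
  Finset.card_image_of_injOn fun _ hv _ hw h =>
    ((sideVertex_eq_iff (Finset.mem_range.mp (hs hv)) (Finset.mem_range.mp (hs hw))).mp h).1

/-- The inverse of `sideVertex`, identifying the two copies of each vertex of `σ`. -/
def glueVertex (N : ℕ) (σ : Finset ℕ) (v : ℕ) : ℕ :=
  if v ∈ σ.image (· + N) then v - N else v

theorem glueVertex_sideVertex (hv : v < N) : glueVertex N σ (sideVertex N σ ε v) = v := by
  unfold sideVertex
  split_ifs with h
  · rw [glueVertex, if_pos (Finset.mem_image_of_mem _ h.1), Nat.add_sub_cancel]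
  · refine if_neg fun hmem => ?_
    obtain ⟨w, -, hw⟩ := Finset.mem_image.mp hmem
    omega

theorem image_glueVertex_image_sideVertex (hs : s ⊆ Finset.range N) :
    (s.image (sideVertex N σ ε)).image (glueVertex N σ) = s := by
  rw [Finset.image_image]
  exact (Finset.image_congr fun v hv =>
    glueVertex_sideVertex (Finset.mem_range.mp (hs hv))).trans Finset.image_id

/-- The facets of the two sides, with the vertices of `σ` doubled. -/
noncomputable def cutFacets (K : SComplex) (σ : Finset ℕ) (f : Finset ℕ → ZMod 2) (N : ℕ) :
    Finset (Finset ℕ) :=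
  Finset.univ.biUnion fun ε : ZMod 2 => (K.sideFacets σ f ε).image (Finset.image (sideVertex N σ ε))

theorem mem_cutFacets :
    H ∈ K.cutFacets σ f N ↔ ∃ ε, ∃ F ∈ K.sideFacets σ f ε, F.image (sideVertex N σ ε) = H := by
  simp [cutFacets]

/-- The complex obtained by cutting `K` open along `∂σ` and filling in both copies of `σ`. -/
noncomputable def cut (K : SComplex) (σ : Finset ℕ) (f : Finset ℕ → ZMod 2) (N : ℕ) : SComplex :=
  ofFacets (K.cutFacets σ f N)

theorem mem_faces_cut : s ∈ (K.cut σ f N).faces ↔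
    ∃ ε, ∃ t ∈ (ofFacets (K.sideFacets σ f ε)).faces, t.image (sideVertex N σ ε) = s := by
  simp only [cut, mem_faces_ofFacets, mem_cutFacets]
  constructor
  · rintro ⟨hs, -, ⟨ε, F, hF, rfl⟩, hsF⟩
    obtain ⟨t, htF, rfl⟩ := Finset.subset_image_iff.mp hsF
    exact ⟨ε, t, ⟨Finset.image_nonempty.mp hs, F, hF, htF⟩, rfl⟩
  · rintro ⟨ε, t, ⟨ht, F, hF, htF⟩, rfl⟩
    exact ⟨ht.image _, _, ⟨ε, F, hF, rfl⟩, Finset.image_subset_image htF⟩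

section Glue

variable (hσ : σ.card = d + 1) (hKN : K.vertexSet ⊆ Finset.range N) (hσN : σ ⊆ Finset.range N)

include hKN hσN in
theorem subset_range_of_mem_sideFacets (hF : F ∈ K.sideFacets σ f ε) : F ⊆ Finset.range N := by
  obtain rfl | hF := mem_sideFacets.mp hF
  exacts [hσN, (subset_vertexSet hF.1.1).trans hKN]

include hσ hKN hσN in
theorem IsPure.card_of_mem_cutFacets (hK : K.IsPure d) :
    ∀ H ∈ K.cutFacets σ f N, H.card = d + 1 := fun H hH => by
  obtain ⟨ε, F, hF, rfl⟩ := mem_cutFacets.mp hH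
  rw [card_image_sideVertex (subset_range_of_mem_sideFacets hKN hσN hF),
    card_of_mem_sideFacets hK hσ F hF]

include hσ hKN hσN in
theorem IsPure.isPure_cut (hK : K.IsPure d) : (K.cut σ f N).IsPure d :=
  isPure_ofFacets ⟨_, mem_cutFacets.mpr ⟨0, σ, self_mem_sideFacets, rfl⟩⟩
    (hK.card_of_mem_cutFacets hσ hKN hσN)

include hσ hKN hσN in
theorem IsPure.isFacet_cut (hK : K.IsPure d) : (K.cut σ f N).IsFacet H ↔
    ∃ ε, ∃ F ∈ K.sideFacets σ f ε, F.image (sideVertex N σ ε) = H :=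
  (isFacet_ofFacets (hK.card_of_mem_cutFacets hσ hKN hσN)).trans mem_cutFacets

include hσ hKN hσN in
theorem IsPure.isFacet_cut_and_subset_iff (hK : K.IsPure d) (hR : R ⊆ Finset.range N) :
    (K.cut σ f N).IsFacet H ∧ R.image (sideVertex N σ ε) ⊆ H ↔
      ∃ ε', ∃ F ∈ K.sideFacets σ f ε', F.image (sideVertex N σ ε') = H ∧ R ⊆ F ∧
        ((R ∩ σ).Nonempty → ε = ε') := by
  rw [hK.isFacet_cut hσ hKN hσN]
  constructor
  · rintro ⟨⟨ε', F, hF, rfl⟩, hRF⟩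
    exact ⟨ε', F, hF, rfl, (image_sideVertex_subset_iff hR
      (subset_range_of_mem_sideFacets hKN hσN hF)).mp hRF⟩
  · rintro ⟨ε', F, hF, rfl, hRF⟩
    exact ⟨⟨ε', F, hF, rfl⟩, (image_sideVertex_subset_iff hR
      (subset_range_of_mem_sideFacets hKN hσN hF)).mpr hRF⟩

include hσ hKN hσN in
theorem IsPure.exists_facets_cut_of_exists_sideFacets (hK : K.IsPure d)
    (hRN : R ⊆ Finset.range N) (hRσ : (R ∩ σ).Nonempty)
    (hR : ∃ F G, F ≠ G ∧ ∀ J, J ∈ K.sideFacets σ f ε ∧ R ⊆ J ↔ J = F ∨ J = G) :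
    ∃ F G, F ≠ G ∧ ∀ H, (K.cut σ f N).IsFacet H ∧ R.image (sideVertex N σ ε) ⊆ H ↔
      H = F ∨ H = G := by
  have hrange := fun {ε F} => subset_range_of_mem_sideFacets (f := f) (F := F) (ε := ε) hKN hσN
  obtain ⟨F, G, hFG, h⟩ := hR
  obtain ⟨hF, hRF⟩ := (h F).mpr (Or.inl rfl)
  obtain ⟨hG, hRG⟩ := (h G).mpr (Or.inr rfl)
  refine ⟨F.image (sideVertex N σ ε), G.image (sideVertex N σ ε),
    fun hne => hFG (eq_of_image_sideVertex_eq (hrange hF) (hrange hG) hne), fun H => ?_⟩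
  rw [hK.isFacet_cut_and_subset_iff hσ hKN hσN hRN]
  constructor
  · rintro ⟨ε', J, hJ, rfl, hRJ, hε⟩
    obtain rfl := hε hRσ
    exact ((h J).mp ⟨hJ, hRJ⟩).imp (fun e => by rw [e]) fun e => by rw [e]
  · rintro (rfl | rfl)
    exacts [⟨ε, F, hF, rfl, hRF, fun _ => rfl⟩, ⟨ε, G, hG, rfl, hRG, fun _ => rfl⟩]

include hσ hKN hσN in
theorem IsPseudomanifold.exists_facets_cut (hK : K.IsPseudomanifold d)
    (hRN : R ⊆ Finset.range N) (hRσ : R ∩ σ = ∅) (hRK : R ∈ K.faces) (hR : R.card = d) :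
    ∃ F G, F ≠ G ∧ ∀ H, (K.cut σ f N).IsFacet H ∧ R.image (sideVertex N σ ε) ⊆ H ↔
      H = F ∨ H = G := by
  have hrange := fun {F} (hF : K.IsFacet F) => (subset_vertexSet hF.1).trans hKN
  have hnot : ¬R ⊆ σ := fun h => (nonempty_of_mem_faces hRK).ne_empty
    ((Finset.inter_eq_left.mpr h).symm.trans hRσ)
  obtain ⟨F, G, hFG, h⟩ := hK.exists_facets hRK hR
  obtain ⟨hF, hRF⟩ := (h F).mpr (Or.inl rfl)
  obtain ⟨hG, hRG⟩ := (h G).mpr (Or.inr rfl)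
  refine ⟨F.image (sideVertex N σ (f F)), G.image (sideVertex N σ (f G)),
    fun hne => hFG (eq_of_image_sideVertex_eq (hrange hF) (hrange hG) hne), fun H => ?_⟩
  simp only [hK.isPure.isFacet_cut_and_subset_iff hσ hKN hσN hRN, hRσ, Finset.not_nonempty_empty,
    false_imp_iff, and_true]
  constructor
  · rintro ⟨ε', J, hJ, rfl, hRJ⟩
    obtain ⟨hJK, rfl⟩ := (mem_sideFacets.mp hJ).resolve_left fun e => hnot (e ▸ hRJ)
    exact ((h J).mp ⟨hJK, hRJ⟩).imp (fun e => by rw [e]) fun e => by rw [e]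
  · rintro (rfl | rfl)
    exacts [⟨f F, F, hF.mem_sideFacets rfl, rfl, hRF⟩, ⟨f G, G, hG.mem_sideFacets rfl, rfl, hRG⟩]

variable (hd : 0 < d) (hbdry : ∀ τ ∈ properFaces σ, τ ∈ K.faces)
  (hf : ∀ x ∈ σ, K.IsSideFunction d σ {x} f)

include hd hσ hbdry hKN hσN hf in
theorem IsPseudomanifold.card_facets_cut (hK : K.IsPseudomanifold d) (hσK : σ ∉ K.faces)
    (hR : R ∈ (K.cut σ f N).faces) (hRd : R.card = d) :
    ((K.cut σ f N).faces.filter fun F => F.card = d + 1 ∧ R ⊆ F).card = 2 := by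
  rw [(hK.isPure.isPure_cut hσ hKN hσN).card_facets_eq_two_iff]
  obtain ⟨ε, R, hRZ, rfl⟩ := mem_faces_cut.mp hR
  obtain ⟨-, F, hF, hRF⟩ := mem_faces_ofFacets.mp hRZ
  have hRN := hRF.trans (subset_range_of_mem_sideFacets hKN hσN hF)
  rw [card_image_sideVertex hRN] at hRd
  have hRK := ridge_mem_faces hσ hbdry hd hF hRF hRd
  obtain hRσ | ⟨x, hx⟩ := (R ∩ σ).eq_empty_or_nonempty
  · exact hK.exists_facets_cut hσ hKN hσN hRN hRσ hRK hRd
  · obtain ⟨hxR, hxσ⟩ := Finset.mem_inter.mp hx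
    exact hK.isPure.exists_facets_cut_of_exists_sideFacets hσ hKN hσN hRN ⟨x, hx⟩ <|
      hK.exists_sideFacets hσ hσK hbdry hd hRd
        (hf x hxσ R hRK hRd (Finset.singleton_subset_iff.mpr hxR)) hF hRF

include hσ hKN hσN in
theorem IsConstAroundRidges.eq_of_cut {g : Finset ℕ → ZMod 2}
    (hg : (K.cut σ f N).IsConstAroundRidges d ∅ g) (hK : K.IsPure d)
    (hF : F ∈ K.sideFacets σ f ε) (hG : G ∈ K.sideFacets σ f ε') (hR : R.card = d) (hRF : R ⊆ F)
    (hRG : R ⊆ G) (hε : (R ∩ σ).Nonempty → ε = ε') :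
    g (F.image (sideVertex N σ ε)) = g (G.image (sideVertex N σ ε')) := by
  have hRN := hRF.trans (subset_range_of_mem_sideFacets hKN hσN hF)
  have hFR := (hK.isFacet_cut_and_subset_iff hσ hKN hσN (ε := ε) hRN).mpr
    ⟨ε, F, hF, rfl, hRF, fun _ => rfl⟩
  have hGR := (hK.isFacet_cut_and_subset_iff hσ hKN hσN (ε := ε) hRN).mpr
    ⟨ε', G, hG, rfl, hRG, hε⟩
  exact hg _ (by rw [card_image_sideVertex hRN, hR]) (Finset.empty_subset _) _ _ hFR.1 hGR.1
    hFR.2 hGR.2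

include hd hσ hbdry hKN hσN hf in
/-- A function on the facets of the cut complex that is constant around its ridges pulls back to
the facets of `K` as a function without jumps outside `σ`, so it is constant unless it is a global
side function. -/
theorem IsNormalPseudomanifold.isRidgeConnected_cut (hK : K.IsNormalPseudomanifold d)
    (hglobal : ¬∃ f, K.IsSideFunction d σ ∅ f) :
    (K.cut σ f N).IsRidgeConnected d ∅ := by
  intro g hg
  set c : ZMod 2 → Finset ℕ → ZMod 2 := fun ε F => g (F.image (sideVertex N σ ε))
  have hconst : ∀ F G, K.IsFacet F → K.IsFacet G → c (f F) F = c (f G) G := by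
    by_contra! ⟨F, G, hF, hG, hFG⟩
    refine hglobal ⟨fun F => c (f F) F, hK.isSideFunction_of_ne hσ hbdry hd σ.empty_subset
      (fun R hRK hR _ hRσ => ?_) hF hG F.empty_subset G.empty_subset hFG⟩
    refine (hK.isPseudomanifold.jump_eq_zero_iff hRK hR).mpr fun A B hA hB hRA hRB => ?_
    refine hg.eq_of_cut hσ hKN hσN hK.1 (hA.mem_sideFacets rfl) (hB.mem_sideFacets rfl)
      hR hRA hRB ?_
    rintro ⟨x, hx⟩
    obtain ⟨hxR, hxσ⟩ := Finset.mem_inter.mp hx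
    exact ((hf x hxσ).mono (Finset.singleton_subset_iff.mpr hxR)).eq_of_not_subset hK hd hRσ
      hA hB hRA hRB
  have hval : ∀ {ε F}, F ∈ K.sideFacets σ f ε → ∃ F', K.IsFacet F' ∧ c ε F = c (f F') F' := by
    intro ε F hF
    obtain rfl | ⟨hFK, rfl⟩ := mem_sideFacets.mp hF
    · obtain ⟨x, hx, a, ha, hxa⟩ := Finset.one_lt_card.mp (by omega : 1 < F.card)
      obtain ⟨A, hA, rfl, haA⟩ := (hf x hx).exists_isFacet_erase hK hd hσ hbdry ha
        (by grind) ε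
      exact ⟨A, hA, hg.eq_of_cut hσ hKN hσN hK.1 hF (hA.mem_sideFacets rfl)
        (by rw [Finset.card_erase_of_mem ha]; omega) (F.erase_subset a) haA fun _ => rfl⟩
    · exact ⟨F, hFK, rfl⟩
  intro H J hH hJ _ _
  obtain ⟨ε, F, hF, rfl⟩ := (hK.1.isFacet_cut hσ hKN hσN).mp hH
  obtain ⟨ε', G, hG, rfl⟩ := (hK.1.isFacet_cut hσ hKN hσN).mp hJ
  obtain ⟨F', hF', hcF⟩ := hval hF
  obtain ⟨G', hG', hcG⟩ := hval hG
  exact hcF.trans ((hconst F' G' hF' hG').trans hcG.symm)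

include hd hσ hbdry hKN hσN hf in
theorem IsNormalPseudomanifold.isPseudomanifold_cut (hK : K.IsNormalPseudomanifold d)
    (hσK : σ ∉ K.faces) (hglobal : ¬∃ f, K.IsSideFunction d σ ∅ f) :
    (K.cut σ f N).IsPseudomanifold d where
  isPure := hK.1.isPure_cut hσ hKN hσN
  stronglyConnected := (hK.isRidgeConnected_cut hσ hKN hσN hd hbdry hf hglobal).stronglyConnected
    (hK.1.isPure_cut hσ hKN hσN)
  card_facets _ hR hRd := hK.isPseudomanifold.card_facets_cut hσ hKN hσN hd hbdry hf hσK hR hRd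

end Glue

end Cut

section HandleAddition

variable {K : SComplex} {d N : ℕ} {f : Finset ℕ → ZMod 2} {x y z v : ℕ} {s t σ : Finset ℕ}

theorem image_sideVertex_zero (s : Finset ℕ) : s.image (sideVertex N σ 0) = s :=
  (Finset.image_congr fun v _ => by simp [sideVertex]).trans Finset.image_id

theorem image_sideVertex_one : σ.image (sideVertex N σ 1) = σ.image (· + N) :=
  Finset.image_congr fun v hv => by simp [sideVertex, Finset.mem_coe.mp hv]

theorem exists_of_pair_mem_faces_cut (h : {x, y} ∈ (K.cut σ f N).faces) :
    ∃ ε, ∃ F ∈ K.sideFacets σ f ε, ∃ v ∈ F, ∃ w ∈ F,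
      sideVertex N σ ε v = x ∧ sideVertex N σ ε w = y := by
  obtain ⟨-, H, hH, hxy⟩ := mem_faces_ofFacets.mp h
  obtain ⟨ε, F, hF, rfl⟩ := mem_cutFacets.mp hH
  obtain ⟨hx, hy⟩ := Finset.insert_subset_iff.mp hxy
  obtain ⟨v, hv, rfl⟩ := Finset.mem_image.mp hx
  obtain ⟨w, hw, rfl⟩ := Finset.mem_image.mp (Finset.singleton_subset_iff.mp hy)
  exact ⟨ε, F, hF, v, hv, w, hw, rfl, rfl⟩

section Handle

variable (hKN : K.vertexSet ⊆ Finset.range N) (hσN : σ ⊆ Finset.range N)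
include hKN hσN

theorem mem_faces_iff_exists_cut (hσK : σ ∉ K.faces) (hbdry : ∀ τ ∈ properFaces σ, τ ∈ K.faces) :
    s ∈ K.faces ↔ (∃ t ∈ (K.cut σ f N).faces, t.image (glueVertex N σ) = s) ∧ s ≠ σ := by
  have hrange : ∀ {ε t}, t ∈ (ofFacets (K.sideFacets σ f ε)).faces → t ⊆ Finset.range N :=
    fun ht => by
      obtain ⟨-, F, hF, htF⟩ := mem_faces_ofFacets.mp ht
      exact htF.trans (subset_range_of_mem_sideFacets hKN hσN hF)
  rw [mem_faces_iff_exists_sideFacets (f := f) hσK hbdry]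
  refine and_congr_left fun _ => ⟨?_, ?_⟩
  · rintro ⟨ε, hs⟩
    exact ⟨_, mem_faces_cut.mpr ⟨ε, s, hs, rfl⟩, image_glueVertex_image_sideVertex (hrange hs)⟩
  · rintro ⟨t, ht, rfl⟩
    obtain ⟨ε, s, hs, rfl⟩ := mem_faces_cut.mp ht
    exact ⟨ε, by rwa [image_glueVertex_image_sideVertex (hrange hs)]⟩

/-- An edge from one copy of `x` and an edge from the other copy to a common vertex `z` would lie in
facets around `{x, z}` on different sides, though `z ∉ σ`. -/
theorem IsNormalPseudomanifold.admissible_cut (hK : K.IsNormalPseudomanifold d) (hd : 0 < d)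
    (hf : ∀ x ∈ σ, K.IsSideFunction d σ {x} f) (hx : x ∈ σ)
    (hxz : {x, z} ∈ (K.cut σ f N).faces) : {z, x + N} ∉ (K.cut σ f N).faces := by
  intro hzx
  have hxN := Finset.mem_range.mp (hσN hx)
  obtain ⟨ε, F, hF, v, hvF, w, hwF, hv, rfl⟩ := exists_of_pair_mem_faces_cut hxz
  obtain ⟨ε', G, hG, w', hwG, v', hvG, hw, hv'⟩ := exists_of_pair_mem_faces_cut hzx
  have hlt := fun {ε F u} (hF : F ∈ K.sideFacets σ f ε) (hu : u ∈ F) =>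
    Finset.mem_range.mp (subset_range_of_mem_sideFacets hKN hσN hF hu)
  have hx0 : sideVertex N σ 0 x = x := by simp [sideVertex]
  have hx1 : sideVertex N σ 1 x = x + N := by simp [sideVertex, hx]
  obtain ⟨rfl, hε⟩ := (sideVertex_eq_iff (hlt hF hvF) hxN).mp (hv.trans hx0.symm)
  obtain ⟨rfl, hε'⟩ := (sideVertex_eq_iff (hlt hG hvG) hxN).mp (hv'.trans hx1.symm)
  obtain rfl := hε hx
  obtain rfl := hε' hx
  obtain ⟨rfl, hne⟩ := (sideVertex_eq_iff (hlt hG hwG) (hlt hF hwF)).mp hw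
  have hwσ : w' ∉ σ := fun h => one_ne_zero (hne h)
  obtain ⟨hFK, hF0⟩ := (mem_sideFacets.mp hF).resolve_left fun h => hwσ (h ▸ hwF)
  obtain ⟨hGK, hG1⟩ := (mem_sideFacets.mp hG).resolve_left fun h => hwσ (h ▸ hwG)
  have heq := ((hf _ hx).mono (s' := {v', w'}) (by simp)).eq_of_not_subset hK hd (by grind) hFK hGK
    (by grind) (by grind)
  exact zero_ne_one (hF0.symm.trans (heq.trans hG1))

theorem IsNormalPseudomanifold.isHandleAddition_cut (hK : K.IsNormalPseudomanifold d) (hd : 0 < d)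
    (hσ : σ.Nonempty) (hσK : σ ∉ K.faces) (hbdry : ∀ τ ∈ properFaces σ, τ ∈ K.faces)
    (hf : ∀ x ∈ σ, K.IsSideFunction d σ {x} f) :
    IsHandleAddition (K.cut σ f N) K σ (σ.image (· + N)) (· + N) (glueVertex N σ) where
  mem₁ := mem_faces_cut.mpr
    ⟨0, σ, mem_faces_ofFacets.mpr ⟨hσ, σ, self_mem_sideFacets, subset_rfl⟩, image_sideVertex_zero σ⟩
  mem₂ := mem_faces_cut.mpr
    ⟨1, σ, mem_faces_ofFacets.mpr ⟨hσ, σ, self_mem_sideFacets, subset_rfl⟩, image_sideVertex_one⟩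
  image_eq := rfl
  admissible x hx z hxz := hK.admissible_cut hKN hσN hd hf hx hxz
  fix y hy := if_neg hy
  left_inv x hx := by
    rw [glueVertex, if_pos (Finset.mem_image_of_mem _ hx), Nat.add_sub_cancel]
  faces_eq := by
    ext s
    rw [Finset.mem_sdiff, Finset.mem_singleton, Finset.mem_image]
    exact mem_faces_iff_exists_cut hKN hσN hσK hbdry

end Handle

theorem IsNormalPseudomanifold.g2_st_add_le_of_not_isSideFunction
    (hK : K.IsNormalPseudomanifold 3) (hσ : σ.card = 4) (hσK : σ ∉ K.faces)
    (hbdry : ∀ τ ∈ properFaces σ, τ ∈ K.faces) (hf : ∀ x ∈ σ, K.IsSideFunction 3 σ {x} f)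
    (hglobal : ¬∃ f, K.IsSideFunction 3 σ ∅ f) (hv : {v} ∈ K.faces) :
    (K.st {v}).g2 + 10 ≤ K.g2 := by
  obtain ⟨N, hN⟩ := (K.vertexSet ∪ σ).exists_nat_subset_range
  obtain ⟨hKN, hσN⟩ := Finset.union_subset_iff.mp hN
  exact (hK.isHandleAddition_cut hKN hσN (by norm_num) (Finset.card_pos.mp (by omega)) hσK hbdry
    hf).g2_st_add_le (hK.isPseudomanifold_cut hσ hKN hσN (by norm_num) hbdry hf hσK hglobal) hσ hv

theorem FormedByHandleAddition.g2_st_add_le (h : FormedByHandleAddition K) (hv : {v} ∈ K.faces) :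
    (K.st {v}).g2 + 10 ≤ K.g2 := by
  obtain ⟨K', τ₁, τ₂, ψ, h, hK', hτ₁, hcard, hτ₂, -, -, himage, hadm, hfix, hinv, hfaces⟩ := h
  exact (⟨hτ₁.1, hτ₂.1, himage, fun x hx z hxz hzx => (hadm x hx).2.2 z hxz hzx, hfix, hinv,
    hfaces⟩ : IsHandleAddition K' K τ₁ τ₂ ψ h).g2_st_add_le hK'.isPseudomanifold hcard hv

theorem statement1_general (Δ : SComplex) (t : ℕ) (σ : Finset ℕ)
    (hΔ : IsNormalPseudomanifold Δ 3) (ht : {t} ∈ Δ.faces)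
    (hg : Δ.g2 ≤ (Δ.lk {t}).g2surf + 9)
    (hσcard : σ.card = 4) (hσmiss : σ ∉ Δ.faces)
    (hσbdry : ∀ τ ∈ properFaces σ, τ ∈ Δ.faces)
    (hsep : ∀ x ∈ σ, SeparatesLink (Δ.lk {x}) (σ.erase x)) :
    FormedByConnSum Δ ∧ ¬ FormedByHandleAddition Δ := by
  have hsmall : ¬(Δ.st {t}).g2 + 10 ≤ Δ.g2 := by
    rw [g2_st ht]
    omega
  obtain ⟨f, hf⟩ := hΔ.exists_isSideFunction hσcard hσbdry le_rfl fun x hx =>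
    (hsep x hx).exists_isSideFunction hΔ hσcard hσbdry hx
  refine ⟨?_, fun hhandle => hsmall (hhandle.g2_st_add_le ht)⟩
  by_cases hglobal : ∃ f, Δ.IsSideFunction 3 σ ∅ f
  · obtain ⟨f, hf⟩ := hglobal
    exact hf.formedByConnSum hΔ hσcard hσmiss hσbdry
  · exact absurd (hΔ.g2_st_add_le_of_not_isSideFunction hσcard hσmiss hσbdry hf hglobal ht) hsmall

end HandleAddition

/-- Lemma 2.6: under the `g₂` bound, a missing tetrahedron all of whose missing
triangles separate the corresponding vertex links forces `Δ` to be formed using a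
connected sum (and not a handle addition). -/
theorem statement1 (Δ : SComplex) (t : ℕ) (σ : Finset ℕ)
    (hΔ : Δ.IsNormalPseudomanifold 3)
    (ht : ({t} : Finset ℕ) ∈ Δ.faces)
    (hmax : ∀ v, ({v} : Finset ℕ) ∈ Δ.faces → v ≠ t →
      (Δ.lk {v}).g2surf ≤ (Δ.lk {t}).g2surf)
    (hg : Δ.g2 ≤ (Δ.lk {t}).g2surf + 9)
    (hσcard : σ.card = 4) (hσmiss : σ ∉ Δ.faces)
    (hσbdry : ∀ τ ∈ properFaces σ, τ ∈ Δ.faces)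
    (hsep : ∀ x ∈ σ, SeparatesLink (Δ.lk {x}) (σ.erase x)) :
    FormedByConnSum Δ ∧ ¬ FormedByHandleAddition Δ :=
  statement1_general Δ t σ hΔ ht hg hσcard hσmiss hσbdry hsep

end SComplex
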